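/- arXiv:1203.0686 — 5 statements merged into one kernel-verified Lean document; each statement's English description precedes it below -/
import Mathlib

section
/- If (X,d) is a nonempty compact metric space whose Hausdorff dimension is strictly larger than a positive integer k, then there exists a Lipschitz map f : X → ℝ^k whose image is exactly the k-dimensional cube [0,1]^k. -/
open MeasureTheory
open scoped ENNReal NNReal

theorem aux_exists_content {X : Type*} [MetricSpace X] [CompactSpace X] (s : ℝ≥0)
    (hs : (s : ℝ≥0∞) < dimH (Set.univ : Set X)) :
    ∃ (m : Set X → ℝ) (R0 : ℝ), 0 < R0 ∧ R0 ≤ 1 ∧ (∀ A, 0 ≤ m A) ∧ m ∅ = 0 ∧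
      (∀ A B, A ⊆ B → m A ≤ m B) ∧ (∀ A B, m (A ∪ B) ≤ m A + m B) ∧
      (∀ x ρ, 0 ≤ ρ → 2 * ρ ≤ R0 → m (Metric.closedBall x ρ) ≤ (2 * ρ) ^ (s : ℝ)) ∧
      0 < m Set.univ := by
  borelize X
  have h1 : μH[(s : ℝ)] (Set.univ : Set X) = ∞ := hausdorffMeasure_of_lt_dimH hs
  set w : Set X → ℝ≥0∞ := fun t => Metric.ediam t ^ (s : ℝ) with hw
  have h2 : OuterMeasure.mkMetric' w Set.univ = ∞ := by
    rw [← h1]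
    have := OuterMeasure.coe_mkMetric (X := X) (fun r : ℝ≥0∞ => r ^ (s : ℝ))
    exact congrFun this Set.univ
  have h3 := OuterMeasure.mkMetric'.tendsto_pre_nat w Set.univ
  rw [h2] at h3
  have h4 : ∀ᶠ n : ℕ in Filter.atTop, 0 < OuterMeasure.mkMetric'.pre w (n : ℝ≥0∞)⁻¹ Set.univ :=
    h3.eventually (lt_mem_nhds (by simp))
  obtain ⟨n, hn, hn1⟩ := (h4.and (Filter.eventually_ge_atTop 1)).exists
  set μ := OuterMeasure.mkMetric'.pre w (n : ℝ≥0∞)⁻¹ with hμ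
  have hnpos : (0 : ℝ) < n := by exact_mod_cast hn1
  have hball : ∀ x ρ, 0 ≤ ρ → 2 * ρ ≤ (n : ℝ)⁻¹ →
      μ (Metric.closedBall x ρ) ≤ ENNReal.ofReal ((2 * ρ) ^ (s : ℝ)) := by
    intro x ρ h0 hρ
    have hd : Metric.ediam (Metric.closedBall x ρ) ≤ ENNReal.ofReal (2 * ρ) := by
      apply Metric.ediam_le
      intro y hy z hz
      rw [edist_dist]
      apply ENNReal.ofReal_le_ofReal
      rw [Metric.mem_closedBall] at hy hz
      linarith [dist_triangle_right y z x]
    have hr : ENNReal.ofReal (2 * ρ) ≤ (n : ℝ≥0∞)⁻¹ := by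
      refine (ENNReal.ofReal_le_ofReal hρ).trans ?_
      rw [ENNReal.ofReal_inv_of_pos hnpos, ENNReal.ofReal_natCast]
    refine (OuterMeasure.mkMetric'.pre_le (hd.trans hr)).trans ?_
    rw [← ENNReal.ofReal_rpow_of_nonneg (x := 2 * ρ) (p := (s : ℝ)) (by linarith) s.2]
    exact ENNReal.rpow_le_rpow hd s.2
  have hfin : μ Set.univ < ∞ := by
    obtain ⟨t, -, htf, ht⟩ := finite_cover_balls_of_compact (isCompact_univ (X := X))
      (e := (n : ℝ)⁻¹ / 2) (by positivity)
    calc μ Set.univ ≤ μ (⋃ x ∈ htf.toFinset, Metric.ball x ((n : ℝ)⁻¹ / 2)) :=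
          measure_mono (by simpa using ht)
      _ ≤ ∑ x ∈ htf.toFinset, μ (Metric.ball x ((n : ℝ)⁻¹ / 2)) :=
          measure_biUnion_finset_le _ _
      _ < ∞ := by
        apply ENNReal.sum_lt_top.2
        intro x _
        refine lt_of_le_of_lt ((measure_mono Metric.ball_subset_closedBall).trans
          (hball x _ (by positivity) (by linarith))) ENNReal.ofReal_lt_top
  have hfin' : ∀ A, μ A ≠ ∞ := fun A => ((measure_mono (Set.subset_univ A)).trans_lt hfin).ne
  refine ⟨fun A => (μ A).toReal, (n : ℝ)⁻¹, by positivity, ?_, fun A => ENNReal.toReal_nonneg,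
    by simp, ?_, ?_, ?_, ?_⟩
  · exact inv_le_one_of_one_le₀ (by exact_mod_cast hn1)
  · intro A B h
    exact ENNReal.toReal_mono (hfin' B) (measure_mono h)
  · intro A B
    rw [← ENNReal.toReal_add (hfin' A) (hfin' B)]
    exact ENNReal.toReal_mono (ENNReal.add_ne_top.2 ⟨hfin' A, hfin' B⟩) (measure_union_le A B)
  · intro x ρ h0 h
    exact ENNReal.toReal_le_of_le_ofReal (by positivity) (hball x ρ h0 h)
  · exact ENNReal.toReal_pos hn.ne' hfin.ne

theorem aux_near_max {X : Type*} [MetricSpace X] [CompactSpace X] (m : Set X → ℝ)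
    (hemp : m ∅ = 0)
    (hmono : ∀ A B, A ⊆ B → m A ≤ m B) (hsub : ∀ A B, m (A ∪ B) ≤ m A + m B)
    (Z : Set X) (hZ : 0 < m Z) (ρ : ℝ) (hρ : 0 < ρ) :
    ∃ x ∈ Z, 0 < m (Metric.closedBall x ρ ∩ Z) ∧
      ∀ y ∈ Z, m (Metric.closedBall y ρ ∩ Z) ≤ 2 * m (Metric.closedBall x ρ ∩ Z) := by
  set S : Set ℝ := (fun y => m (Metric.closedBall y ρ ∩ Z)) '' Z with hS
  have hbdd : BddAbove S := ⟨m Z, by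
    rintro _ ⟨y, -, rfl⟩
    exact hmono _ _ Set.inter_subset_right⟩
  have hpos : ∃ y ∈ Z, 0 < m (Metric.closedBall y ρ ∩ Z) := by
    by_contra! hcon
    obtain ⟨t, -, htf, ht⟩ := finite_cover_balls_of_compact (isCompact_univ (X := X))
      (e := ρ / 2) (by positivity)
    have key : ∀ F : Finset X, m ((⋃ c ∈ F, Metric.ball c (ρ / 2)) ∩ Z) ≤ 0 := by
      intro F
      classical
      induction F using Finset.induction_on with
      | empty => simp [hemp]
      | insert c F hc ih =>
        rw [Finset.set_biUnion_insert, Set.union_inter_distrib_right]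
        refine (hsub _ _).trans ?_
        have : m (Metric.ball c (ρ / 2) ∩ Z) ≤ 0 := by
          rcases (Metric.ball c (ρ / 2) ∩ Z).eq_empty_or_nonempty with h | ⟨y, hy, hyZ⟩
          · rw [h, hemp]
          · refine le_trans (hmono _ _ ?_) (hcon y hyZ)
            apply Set.inter_subset_inter_left
            intro z hz
            rw [Metric.mem_ball] at hy hz
            rw [Metric.mem_closedBall]
            linarith [dist_triangle_right z y c]
        linarith
    have := key htf.toFinset
    have h2 : Z ⊆ (⋃ c ∈ htf.toFinset, Metric.ball c (ρ / 2)) ∩ Z := by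
      intro z hz
      refine ⟨?_, hz⟩
      have := ht (Set.mem_univ z)
      simpa using this
    linarith [hmono _ _ h2]
  obtain ⟨y, hy, hypos⟩ := hpos
  have hsup : 0 < sSup S := hypos.trans_le (le_csSup hbdd ⟨y, hy, rfl⟩)
  obtain ⟨_, ⟨x, hx, rfl⟩, hlt⟩ := exists_lt_of_lt_csSup (s := S) ⟨_, y, hy, rfl⟩
    (half_lt_self hsup)
  simp only at hlt
  refine ⟨x, hx, by linarith, fun z hz => ?_⟩
  have : m (Metric.closedBall z ρ ∩ Z) ≤ sSup S := le_csSup hbdd ⟨z, hz, rfl⟩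
  linarith

theorem aux_layer (b : ℕ → ℝ) (J : ℕ) (hJ : 0 < J) (h0 : 0 < b 0) (hbJ : 0 < b J) :
    ∃ j < J, b (j + 1) * (b 0) ^ (1 / (J : ℝ)) ≤ b j * (b J) ^ (1 / (J : ℝ)) := by
  by_contra! hcon
  have hJr : (J : ℝ) ≠ 0 := by exact_mod_cast hJ.ne'
  set α := (b 0) ^ (1 / (J : ℝ)) with hα
  set β := (b J) ^ (1 / (J : ℝ)) with hβ
  have hα0 : 0 < α := Real.rpow_pos_of_pos h0 _
  have hβ0 : 0 < β := Real.rpow_pos_of_pos hbJ _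
  have hαJ : α ^ J = b 0 := by
    rw [hα, ← Real.rpow_natCast, ← Real.rpow_mul h0.le, one_div_mul_cancel hJr, Real.rpow_one]
  have hβJ : β ^ J = b J := by
    rw [hβ, ← Real.rpow_natCast, ← Real.rpow_mul hbJ.le, one_div_mul_cancel hJr, Real.rpow_one]
  have key : ∀ j ≤ J, b 0 * β ^ j ≤ b j * α ^ j ∧ (0 < j → b 0 * β ^ j < b j * α ^ j) := by
    intro j
    induction j with
    | zero => intro _; simp
    | succ j ih =>
      intro hj
      have h1 := (ih (by omega)).1
      have h2 := hcon j (by omega)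
      have h3 : b 0 * β ^ (j + 1) < b (j + 1) * α ^ (j + 1) := by
        calc b 0 * β ^ (j + 1) = (b 0 * β ^ j) * β := by ring
          _ ≤ (b j * α ^ j) * β := by gcongr
          _ = (b j * β) * α ^ j := by ring
          _ < (b (j + 1) * α) * α ^ j := by gcongr
          _ = _ := by ring
      exact ⟨h3.le, fun _ => h3⟩
  have := (key J le_rfl).2 hJ
  rw [hαJ, hβJ, mul_comm] at this
  exact lt_irrefl _ this

theorem aux_cube (k : ℕ) (p : ℝ) (hp : (k : ℝ) < p) :
    ∃ C : ℝ, 0 < C ∧ ∀ n : ℕ, ∃ e : (Fin k → ℝ) → ℝ,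
      (∀ v ∈ Set.Icc (0 : Fin k → ℝ) 1, e v ∈ Set.Icc (0 : ℝ) 1) ∧
      ∀ v ∈ Set.Icc (0 : Fin k → ℝ) 1, ∀ w ∈ Set.Icc (0 : Fin k → ℝ) 1,
        dist v w ^ p ≤ C * |e v - e w| + ((2 : ℝ) ^ (-p)) ^ n := by
  have hp0 : 0 < p := lt_of_le_of_lt (Nat.cast_nonneg k) hp
  set β : ℝ := (2 : ℝ) ^ (-p) with hβ
  have hβ0 : 0 < β := by positivity
  have hβk : β < ((2 : ℝ) ^ k)⁻¹ := by
    rw [hβ, ← Real.rpow_natCast, ← Real.rpow_neg (by norm_num)]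
    exact Real.rpow_lt_rpow_of_exponent_lt (by norm_num) (by linarith)
  set g : ℝ := ((2 : ℝ) ^ k)⁻¹ - β with hg
  have hg0 : 0 < g := by rw [hg]; linarith
  have hdist1 : ∀ v ∈ Set.Icc (0 : Fin k → ℝ) 1, ∀ w ∈ Set.Icc (0 : Fin k → ℝ) 1,
      dist v w ≤ 1 := by
    intro v hv w hw
    rw [dist_pi_le_iff zero_le_one]
    intro i
    rw [Real.dist_eq, abs_le]
    have h1 := hv.1 i; have h2 := hv.2 i; have h3 := hw.1 i; have h4 := hw.2 i
    simp only [Pi.zero_apply, Pi.one_apply] at h1 h2 h3 h4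
    constructor <;> linarith
  have hdistp : ∀ v ∈ Set.Icc (0 : Fin k → ℝ) 1, ∀ w ∈ Set.Icc (0 : Fin k → ℝ) 1,
      dist v w ^ p ≤ 1 := fun v hv w hw =>
    Real.rpow_le_one dist_nonneg (hdist1 v hv w hw) hp0.le
  refine ⟨1 / g, by positivity, fun n => ?_⟩
  induction n with
  | zero =>
    refine ⟨fun _ => 0, fun v _ => by simp, fun v hv w hw => ?_⟩
    simpa using hdistp v hv w hw
  | succ n ih =>
    obtain ⟨e, he1, he2⟩ := ih
    classical
    let dg : (Fin k → ℝ) → (Fin k → Bool) := fun v i => decide (1 / 2 ≤ v i)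
    let nx : (Fin k → ℝ) → (Fin k → ℝ) := fun v i => 2 * v i - (if dg v i then 1 else 0)
    have hcard : Fintype.card (Fin k → Bool) = 2 ^ k := by simp
    let cd : (Fin k → Bool) ≃ Fin (2 ^ k) := Fintype.equivFinOfCardEq hcard
    have hnx : ∀ v ∈ Set.Icc (0 : Fin k → ℝ) 1, nx v ∈ Set.Icc (0 : Fin k → ℝ) 1 := by
      intro v hv
      constructor <;> intro i
      · have h1 := hv.1 i
        simp only [Pi.zero_apply] at h1
        simp only [nx, dg, Pi.zero_apply, decide_eq_true_eq]
        split_ifs <;> linarith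
      · have h1 := hv.2 i
        simp only [Pi.one_apply] at h1
        simp only [nx, dg, Pi.one_apply, decide_eq_true_eq]
        split_ifs <;> linarith
    have hpk : (0 : ℝ) < (2 : ℝ) ^ k := by positivity
    refine ⟨fun v => ((cd (dg v) : ℕ) : ℝ) * ((2 : ℝ) ^ k)⁻¹ + β * e (nx v), ?_, ?_⟩
    · intro v hv
      obtain ⟨h1, h2⟩ := he1 _ (hnx v hv)
      refine ⟨by positivity, ?_⟩
      have h3 : ((cd (dg v) : ℕ) : ℝ) + 1 ≤ (2 : ℝ) ^ k := by
        have := (cd (dg v)).2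
        exact_mod_cast this
      have h4 : (((cd (dg v) : ℕ) : ℝ) + 1) * ((2 : ℝ) ^ k)⁻¹ ≤ 1 := by
        rw [← div_eq_mul_inv, div_le_one hpk]; exact h3
      have h5 : β * e (nx v) ≤ β * 1 := by gcongr
      simp only
      linarith
    · intro v hv w hw
      by_cases hd : dg v = dg w
      · have h1 : dist v w = 2⁻¹ * dist (nx v) (nx w) := by
          have : nx v - nx w = (2 : ℝ) • (v - w) := by
            ext i
            simp only [nx, hd, Pi.sub_apply, Pi.smul_apply, smul_eq_mul]
            ring
          rw [dist_eq_norm, dist_eq_norm, this, norm_smul, Real.norm_ofNat]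
          ring
        rw [h1, Real.mul_rpow (by norm_num) dist_nonneg]
        have h2 : (2⁻¹ : ℝ) ^ p = β := by
          rw [hβ, Real.rpow_neg (by norm_num), Real.inv_rpow (by norm_num)]
        rw [h2]
        simp only [hd]
        have h3 := he2 _ (hnx v hv) _ (hnx w hw)
        have h4 : |((cd (dg w) : ℕ) : ℝ) * ((2 : ℝ) ^ k)⁻¹ + β * e (nx v) -
            (((cd (dg w) : ℕ) : ℝ) * ((2 : ℝ) ^ k)⁻¹ + β * e (nx w))| =
            β * |e (nx v) - e (nx w)| := by
          rw [← abs_of_pos hβ0, ← abs_mul, abs_of_pos hβ0]; congr 1; ring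
        rw [h4]
        calc _ ≤ β * (1 / g * |e (nx v) - e (nx w)| + β ^ n) := by gcongr
          _ = _ := by ring
      · have h1 : (1 : ℝ) ≤ |((cd (dg v) : ℕ) : ℝ) - ((cd (dg w) : ℕ) : ℝ)| := by
          have : ((cd (dg v) : ℕ) : ℤ) - ((cd (dg w) : ℕ) : ℤ) ≠ 0 := by
            intro h
            apply hd
            apply cd.injective
            apply Fin.ext
            omega
          have := Int.one_le_abs this
          exact_mod_cast this
        obtain ⟨h2, h3⟩ := he1 _ (hnx v hv)
        obtain ⟨h4, h5⟩ := he1 _ (hnx w hw)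
        have h6 : |β * e (nx w) - β * e (nx v)| ≤ β := by
          rw [← mul_sub, abs_mul, abs_of_pos hβ0]
          have : |e (nx w) - e (nx v)| ≤ 1 := by rw [abs_le]; constructor <;> linarith
          nlinarith
        have h7 : ((2 : ℝ) ^ k)⁻¹ ≤ |(((cd (dg v) : ℕ) : ℝ) - ((cd (dg w) : ℕ) : ℝ)) *
            ((2 : ℝ) ^ k)⁻¹| := by
          rw [abs_mul, abs_of_pos (inv_pos.2 hpk)]
          exact le_mul_of_one_le_left (inv_pos.2 hpk).le h1
        have h8 := abs_sub_abs_le_abs_sub ((((cd (dg v) : ℕ) : ℝ) - ((cd (dg w) : ℕ) : ℝ)) *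
            ((2 : ℝ) ^ k)⁻¹) (β * e (nx w) - β * e (nx v))
        have h9 : g ≤ |((cd (dg v) : ℕ) : ℝ) * ((2 : ℝ) ^ k)⁻¹ + β * e (nx v) -
            (((cd (dg w) : ℕ) : ℝ) * ((2 : ℝ) ^ k)⁻¹ + β * e (nx w))| := by
          refine le_trans ?_ (h8.trans (le_of_eq ?_))
          · rw [hg]; linarith
          · congr 1; ring
        refine (hdistp v hv w hw).trans ?_
        have h10 : 1 ≤ 1 / g * |((cd (dg v) : ℕ) : ℝ) * ((2 : ℝ) ^ k)⁻¹ + β * e (nx v) -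
            (((cd (dg w) : ℕ) : ℝ) * ((2 : ℝ) ^ k)⁻¹ + β * e (nx w))| := by
          rw [one_div_mul_eq_div, le_div_iff₀ hg0]; linarith
        have h11 : 0 < β ^ (n + 1) := by positivity
        linarith

theorem aux_inner {X : Type*} [MetricSpace X] [CompactSpace X] (m : Set X → ℝ)
    (hnn : ∀ A, 0 ≤ m A) (hemp : m ∅ = 0)
    (hmono : ∀ A B, A ⊆ B → m A ≤ m B) (hsub : ∀ A B, m (A ∪ B) ≤ m A + m B)
    (s p a R : ℝ) (J : ℕ) (hJ : 0 < J) (hs : 0 < s)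
    (hexp : p ≤ s * (1 - 1 / (J : ℝ)) - 1 / (J : ℝ))
    (ha : 0 < a) (hR : 0 < R) (hR1 : R ≤ 1)
    (hball : ∀ x, m (Metric.closedBall x (R / 4)) ≤ (R / 2) ^ s)
    (Pr : ℝ → ℝ → X → X → Prop)
    (hPr : ∀ u u' c x y, Pr u u' x y → Pr (u + c) (u' + c) x y)
    (ih : ∀ (Y : Set X) (T M : ℝ), 0 ≤ M → 0 < m Y →
      (∀ y ∈ Y, m (Metric.closedBall y (R / 8) ∩ Y) ≤ M) →
      T * M ^ (1 / (J : ℝ)) ≤ a * (R / 2) ^ (-(1 / (J : ℝ))) * m Y → 0 ≤ T →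
      T ≤ a * R ^ p →
      ∃ q : ℝ → X, (∀ u ∈ Set.Ico 0 T, q u ∈ Y) ∧
        ∀ u ∈ Set.Ico 0 T, ∀ u' ∈ Set.Ico 0 T, Pr u u' (q u) (q u'))
    (κ M : ℝ) (hκ : 0 ≤ κ) (hM : 0 ≤ M)
    (hκM : κ * M ^ (1 / (J : ℝ)) ≤ a * R ^ (-(1 / (J : ℝ)))) [Nonempty X] (F : Finset X) :
    ∀ Z : Set X, Z ⊆ (⋃ c ∈ F, Metric.ball c (R / 16)) →
      (∀ y ∈ Z, m (Metric.closedBall y (R / 4) ∩ Z) ≤ M) →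
      ∃ q : ℝ → X, (∀ u ∈ Set.Ico 0 (κ * m Z), q u ∈ Z) ∧
        ∀ u ∈ Set.Ico 0 (κ * m Z), ∀ u' ∈ Set.Ico 0 (κ * m Z),
          R / (8 * J) ≤ dist (q u) (q u') ∨ Pr u u' (q u) (q u') := by
  have hJr : (0 : ℝ) < J := by exact_mod_cast hJ
  have hJ1 : (1 : ℝ) ≤ J := by exact_mod_cast hJ
  set ε : ℝ := 1 / (J : ℝ) with hε
  have hε0 : 0 < ε := by positivity
  have hε1 : ε ≤ 1 := by rw [hε, div_le_one hJr]; exact hJ1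
  induction F using Finset.strongInduction with
  | H F ihF =>
  intro Z hZF hZM
  rcases (hnn Z).eq_or_lt with hZ0 | hZ0
  · refine ⟨fun _ => Classical.arbitrary X, ?_, ?_⟩
    · intro u hu; rw [← hZ0, mul_zero] at hu; simp at hu
    · intro u hu; rw [← hZ0, mul_zero] at hu; simp at hu
  obtain ⟨x, hxZ, hx0, hxmax⟩ := aux_near_max m hemp hmono hsub Z hZ0 (R / 8) (by positivity)
  let r : ℕ → ℝ := fun j => R / 8 + j * (R / (8 * J))
  let b : ℕ → ℝ := fun j => m (Metric.closedBall x (r j) ∩ Z)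
  have hr0 : r 0 = R / 8 := by simp [r]
  have hrJ : r J = R / 4 := by simp only [r]; field_simp; norm_num
  have hrs : ∀ j, r (j + 1) = r j + R / (8 * J) := by intro j; simp only [r]; push_cast; ring
  have hsep0 : 0 < R / (8 * J) := by positivity
  have hrmono : Monotone r := monotone_nat_of_le_succ fun j => by rw [hrs]; linarith
  have hbmono : Monotone b := fun i j hij =>
    hmono _ _ (Set.inter_subset_inter_left _ (Metric.closedBall_subset_closedBall (hrmono hij)))
  have hb0 : 0 < b 0 := by simp only [b, hr0]; exact hx0
  have hbpos : ∀ j, 0 < b j := fun j => hb0.trans_le (hbmono (Nat.zero_le j))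
  have hbJM : b J ≤ M := by simp only [b, hrJ]; exact hZM x hxZ
  obtain ⟨j, hjJ, hj⟩ := aux_layer b J hJ hb0 (hbpos J)
  rw [← hε] at hj
  have hbR : b (j + 1) ≤ R ^ s := by
    calc b (j + 1) ≤ b J := hbmono hjJ
      _ ≤ m (Metric.closedBall x (R / 4)) := by
        simp only [b, hrJ]; exact hmono _ _ Set.inter_subset_left
      _ ≤ (R / 2) ^ s := hball x
      _ ≤ R ^ s := Real.rpow_le_rpow (by positivity) (by linarith) hs.le
  set W : Set X := Metric.closedBall x (r j) ∩ Z with hW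
  set B : Set X := Metric.closedBall x (r (j + 1)) ∩ Z with hB
  have hmW : m W = b j := rfl
  have hmB : m B = b (j + 1) := rfl
  -- the child cluster
  have hT2 : κ * b (j + 1) ≤ a * R ^ p := by
    have hb' := hbpos (j + 1)
    calc κ * b (j + 1) = κ * (b (j + 1) ^ ε * b (j + 1) ^ (1 - ε)) := by
          rw [← Real.rpow_add hb']; simp
      _ ≤ κ * (M ^ ε * (R ^ s) ^ (1 - ε)) := by
          have h1 : b (j + 1) ≤ M := (hbmono hjJ).trans hbJM
          have h2 : 0 ≤ 1 - ε := by linarith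
          gcongr
      _ = (κ * M ^ ε) * R ^ (s * (1 - ε)) := by rw [Real.rpow_mul hR.le]; ring
      _ ≤ (a * R ^ (-ε)) * R ^ (s * (1 - ε)) := by gcongr
      _ = a * R ^ (s * (1 - ε) - ε) := by
          rw [mul_assoc, ← Real.rpow_add hR]; congr 2; ring
      _ ≤ a * R ^ p := by
          have := Real.rpow_le_rpow_of_exponent_ge hR hR1 hexp
          gcongr
  have hT1 : κ * b (j + 1) * (2 * b 0) ^ ε ≤ a * (R / 2) ^ (-ε) * m W := by
    rw [hmW, Real.mul_rpow (by norm_num) hb0.le]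
    have h2 : (R / 2) ^ (-ε) = 2 ^ ε * R ^ (-ε) := by
      rw [Real.div_rpow hR.le (by norm_num), Real.rpow_neg (by norm_num : (0:ℝ) ≤ 2)]
      field_simp
    have h3 : b J ^ ε ≤ M ^ ε := Real.rpow_le_rpow (hbpos J).le hbJM hε0.le
    have h4 : 0 < (2 : ℝ) ^ ε := by positivity
    have h5 := (hbpos j).le
    calc κ * b (j + 1) * (2 ^ ε * b 0 ^ ε) = κ * 2 ^ ε * (b (j + 1) * b 0 ^ ε) := by ring
      _ ≤ κ * 2 ^ ε * (b j * b J ^ ε) := by gcongr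
      _ ≤ κ * 2 ^ ε * (b j * M ^ ε) := by gcongr
      _ = (κ * M ^ ε) * (2 ^ ε * b j) := by ring
      _ ≤ (a * R ^ (-ε)) * (2 ^ ε * b j) := by gcongr
      _ = a * (R / 2) ^ (-ε) * b j := by rw [h2]; ring
  have hWZ : W ⊆ Z := Set.inter_subset_right
  have hWM : ∀ y ∈ W, m (Metric.closedBall y (R / 8) ∩ W) ≤ 2 * b 0 := by
    intro y hy
    refine (hmono _ _ (Set.inter_subset_inter_right _ hWZ)).trans ?_
    have := hxmax y (hWZ hy)
    simpa only [b, hr0] using this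
  obtain ⟨q1, hq1, hq1'⟩ := ih W (κ * b (j + 1)) (2 * b 0) (by positivity) (hbpos j) hWM hT1
    (mul_nonneg hκ (hbpos _).le) hT2
  -- the rest
  set Z' : Set X := Z \ B with hZ'
  have hZ'Z : Z' ⊆ Z := Set.sdiff_subset
  classical
  obtain ⟨c0, hc0F, hc0⟩ : ∃ c ∈ F, x ∈ Metric.ball c (R / 16) := by
    have := hZF hxZ
    simpa using this
  have hF' : F.filter (fun c => x ∉ Metric.ball c (R / 16)) ⊂ F := by
    rw [Finset.ssubset_iff_of_subset (Finset.filter_subset _ _)]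
    exact ⟨c0, hc0F, fun h => (Finset.mem_filter.1 h).2 hc0⟩
  have hZ'F : Z' ⊆ ⋃ c ∈ F.filter (fun c => x ∉ Metric.ball c (R / 16)),
      Metric.ball c (R / 16) := by
    intro z hz
    obtain ⟨c, hcF, hc⟩ : ∃ c ∈ F, z ∈ Metric.ball c (R / 16) := by
      have := hZF (hZ'Z hz)
      simpa using this
    refine Set.mem_iUnion₂.2 ⟨c, Finset.mem_filter.2 ⟨hcF, fun hxc => hz.2 ⟨?_, hZ'Z hz⟩⟩, hc⟩
    rw [Metric.mem_ball] at hc hxc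
    rw [Metric.mem_closedBall]
    have h1 : R / 8 ≤ r (j + 1) := by rw [← hr0]; exact hrmono (Nat.zero_le _)
    linarith [dist_triangle_right z x c]
  obtain ⟨q2, hq2, hq2'⟩ := ihF _ hF' Z' hZ'F (fun y hy =>
    (hmono _ _ (Set.inter_subset_inter_right _ hZ'Z)).trans (hZM y (hZ'Z hy)))
  have hsum : κ * m Z ≤ κ * b (j + 1) + κ * m Z' := by
    rw [← mul_add]
    refine mul_le_mul_of_nonneg_left ?_ hκ
    rw [← hmB]
    refine le_trans (hmono _ _ ?_) (hsub B Z')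
    intro z hz
    by_cases h : z ∈ B
    · exact Or.inl h
    · exact Or.inr ⟨hz, h⟩
  set t := κ * b (j + 1) with ht
  have hsep : ∀ y ∈ W, ∀ z ∈ Z', R / (8 * J) ≤ dist y z := by
    intro y hy z hz
    have h1 := Metric.mem_closedBall.1 hy.1
    have h2 : r (j + 1) < dist z x := by
      by_contra! hcon
      exact hz.2 ⟨Metric.mem_closedBall.2 hcon, hZ'Z hz⟩
    rw [hrs] at h2
    have h3 := dist_triangle z y x
    rw [dist_comm z y] at h3
    linarith
  have hmem2 : ∀ u ∈ Set.Ico 0 (κ * m Z), ¬ u < t → u - t ∈ Set.Ico 0 (κ * m Z') := by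
    intro u hu h
    exact ⟨by linarith, by linarith [hu.2]⟩
  refine ⟨fun u => if u < t then q1 u else q2 (u - t), ?_, ?_⟩
  · intro u hu
    by_cases h : u < t
    · simp only [h, if_true]; exact hWZ (hq1 u ⟨hu.1, h⟩)
    · simp only [h, if_false]; exact hZ'Z (hq2 _ (hmem2 u hu h))
  · intro u hu u' hu'
    by_cases h : u < t <;> by_cases h' : u' < t
    · simp only [h, h', if_true]
      exact Or.inr (hq1' u ⟨hu.1, h⟩ u' ⟨hu'.1, h'⟩)
    · simp only [h, h', if_true, if_false]
      exact Or.inl (hsep _ (hq1 u ⟨hu.1, h⟩) _ (hq2 _ (hmem2 u' hu' h')))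
    · simp only [h, h', if_true, if_false]
      rw [dist_comm]
      exact Or.inl (hsep _ (hq1 u' ⟨hu'.1, h'⟩) _ (hq2 _ (hmem2 u hu h)))
    · simp only [h, h', if_false]
      rcases hq2' _ (hmem2 u hu h) _ (hmem2 u' hu' h') with h1 | h1
      · exact Or.inl h1
      · have := hPr _ _ t _ _ h1
        simp only [sub_add_cancel] at this
        exact Or.inr this

theorem aux_tree {X : Type*} [MetricSpace X] [CompactSpace X] [Nonempty X] (m : Set X → ℝ)
    (hnn : ∀ A, 0 ≤ m A) (hemp : m ∅ = 0)
    (hmono : ∀ A B, A ⊆ B → m A ≤ m B) (hsub : ∀ A B, m (A ∪ B) ≤ m A + m B)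
    (s p a R0 : ℝ) (J : ℕ) (hJ : 0 < J) (hs : 0 < s) (hp : 0 < p)
    (hexp : p ≤ s * (1 - 1 / (J : ℝ)) - 1 / (J : ℝ))
    (ha : 0 < a) (hR1 : R0 ≤ 1)
    (hball : ∀ x ρ, 0 ≤ ρ → 2 * ρ ≤ R0 → m (Metric.closedBall x ρ) ≤ (2 * ρ) ^ s)
    (N : ℕ) : ∀ (R : ℝ) (Y : Set X) (T M : ℝ), 0 < R → R ≤ R0 → 0 ≤ M → 0 < m Y →
      (∀ y ∈ Y, m (Metric.closedBall y (R / 4) ∩ Y) ≤ M) →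
      T * M ^ (1 / (J : ℝ)) ≤ a * R ^ (-(1 / (J : ℝ))) * m Y → 0 ≤ T →
      T ≤ a * (2 * R) ^ p →
      ∃ q : ℝ → X, (∀ u ∈ Set.Ico 0 T, q u ∈ Y) ∧
        ∀ u ∈ Set.Ico 0 T, ∀ u' ∈ Set.Ico 0 T,
          |u - u'| ≤ a * (16 * J) ^ p * dist (q u) (q u') ^ p + a * (2 * (R / 2 ^ N)) ^ p := by
  have hJr : (0 : ℝ) < J := by exact_mod_cast hJ
  induction N with
  | zero =>
    intro R Y T M hR _ _ hY _ _ hT hTR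
    have hne : Y.Nonempty := by
      rw [Set.nonempty_iff_ne_empty]
      rintro rfl
      rw [hemp] at hY; exact lt_irrefl _ hY
    obtain ⟨y, hy⟩ := hne
    refine ⟨fun _ => y, fun _ _ => hy, fun u hu u' hu' => ?_⟩
    have h1 : |u - u'| ≤ T := by
      rw [abs_le]; constructor <;> linarith [hu.1, hu.2, hu'.1, hu'.2]
    simp only [dist_self, Real.zero_rpow hp.ne', mul_zero, zero_add, pow_zero, div_one]
    exact h1.trans hTR
  | succ N ih =>
    intro R Y T M hR hRR hM hY hYM hTM hT hTR
    obtain ⟨t, -, htf, ht⟩ := finite_cover_balls_of_compact (isCompact_univ (X := X))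
      (e := R / 16) (by positivity)
    obtain ⟨q, hq, hq'⟩ := aux_inner m hnn hemp hmono hsub s p a R J hJ hs hexp ha hR
      (hRR.trans hR1)
      (fun x => by
        have := hball x (R / 4) (by positivity) (by linarith)
        convert this using 2; ring)
      (fun u u' x y => |u - u'| ≤ a * (16 * J) ^ p * dist x y ^ p +
        a * (2 * (R / 2 ^ (N + 1))) ^ p)
      (fun u u' c x y h => by simpa using h)
      (fun Y' T' M' hM' hY' hYM' hTM' hT' hTR' => by
        have := ih (R / 2) Y' T' M' (by positivity) (by linarith) hM' hY'
          (by rw [show R / 2 / 4 = R / 8 by ring]; exact hYM') hTM' hT'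
          (by rw [show 2 * (R / 2) = R by ring]; exact hTR')
        have h2 : R / 2 / 2 ^ N = R / 2 ^ (N + 1) := by rw [pow_succ]; field_simp
        rw [h2] at this
        exact this)
      (T / m Y) M (by positivity) hM
      (by rw [div_mul_eq_mul_div, div_le_iff₀ hY]; exact hTM)
      htf.toFinset Y
      (by
        intro z _
        have := ht (Set.mem_univ z)
        simpa using this) hYM
    rw [div_mul_cancel₀ _ hY.ne'] at hq hq'
    refine ⟨q, hq, fun u hu u' hu' => ?_⟩
    rcases hq' u hu u' hu' with h | h
    · have h1 : |u - u'| ≤ T := by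
        rw [abs_le]; constructor <;> linarith [hu.1, hu.2, hu'.1, hu'.2]
      have h2 : a * (2 * R) ^ p = a * (16 * J) ^ p * (R / (8 * J)) ^ p := by
        rw [mul_assoc, ← Real.mul_rpow (by positivity) (by positivity)]
        congr 2; field_simp; norm_num
      have h3 : (R / (8 * J)) ^ p ≤ dist (q u) (q u') ^ p :=
        Real.rpow_le_rpow (by positivity) h hp.le
      have h4 : a * (16 * J) ^ p * (R / (8 * J)) ^ p ≤
          a * (16 * J) ^ p * dist (q u) (q u') ^ p := by gcongr
      have h5 : 0 ≤ a * (2 * (R / 2 ^ (N + 1))) ^ p := by positivity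
      linarith
    · exact h

theorem aux_section {X : Type*} [MetricSpace X] [CompactSpace X] [Nonempty X]
    (k : ℕ) (hdim : (k : ℝ≥0∞) < dimH (Set.univ : Set X)) :
    ∃ (P : (Fin k → ℝ) → X) (K : ℝ), 0 ≤ K ∧
      ∀ v ∈ Set.Icc (0 : Fin k → ℝ) 1, ∀ w ∈ Set.Icc (0 : Fin k → ℝ) 1,
        dist v w ≤ K * dist (P v) (P w) := by
  obtain ⟨s, hks, hsd⟩ := ENNReal.lt_iff_exists_nnreal_btwn.1 hdim
  have hks' : (k : ℝ) < s := by
    have : ((k : ℝ≥0) : ℝ≥0∞) < s := by simpa using hks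
    exact_mod_cast ENNReal.coe_lt_coe.1 this
  have hk0 : (0 : ℝ) ≤ k := Nat.cast_nonneg k
  obtain ⟨m, R0, hR0, hR01, hnn, hemp, hmono, hsub, hball, huniv⟩ := aux_exists_content s hsd
  obtain ⟨p, hkp, hps⟩ := exists_between hks'
  have hp0 : 0 < p := hk0.trans_lt hkp
  have hs0 : (0 : ℝ) < s := hk0.trans_lt hks'
  obtain ⟨J, hJ⟩ := exists_nat_gt (((s : ℝ) + 1) / (s - p))
  have hJr : (0 : ℝ) < J := lt_of_le_of_lt (div_nonneg (by linarith) (by linarith)) hJ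
  have hJ0 : 0 < J := by exact_mod_cast hJr
  have hexp : p ≤ s * (1 - 1 / (J : ℝ)) - 1 / (J : ℝ) := by
    have h1 : ((s : ℝ) + 1) / J ≤ s - p := by
      rw [div_lt_iff₀ (by linarith)] at hJ
      rw [div_le_iff₀ hJr]
      linarith
    have h2 : (s : ℝ) * (1 - 1 / (J : ℝ)) - 1 / (J : ℝ) = s - (s + 1) / J := by field_simp; ring
    linarith
  obtain ⟨C, hC, hcube⟩ := aux_cube k p hkp
  -- choice of the constant `a`
  set c1 : ℝ := R0 ^ (-(1 / (J : ℝ))) * m Set.univ with hc1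
  set c2 : ℝ := (2 * R0) ^ p with hc2
  have hc1p : 0 < c1 := by positivity
  have hc2p : 0 < c2 := by positivity
  set M : ℝ := m Set.univ with hM
  set a : ℝ := M ^ (1 / (J : ℝ)) / c1 + 1 / c2 with ha
  have ha0 : 0 < a := by positivity
  have ha1 : 1 * M ^ (1 / (J : ℝ)) ≤ a * R0 ^ (-(1 / (J : ℝ))) * M := by
    rw [mul_assoc, ← hc1, one_mul, ha, add_mul, div_mul_cancel₀ _ hc1p.ne']
    have : 0 ≤ 1 / c2 * c1 := by positivity
    linarith
  have ha2 : 1 ≤ a * (2 * R0) ^ p := by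
    rw [← hc2, ha, add_mul, div_mul_cancel₀ _ hc2p.ne']
    have : 0 ≤ M ^ (1 / (J : ℝ)) / c1 * c2 := by positivity
    linarith
  have htree := fun N => aux_tree m hnn hemp hmono hsub s p a R0 J hJ0 hs0 hp0 hexp ha0 hR01 hball
    N R0 Set.univ 1 M hR0 le_rfl (hnn _) huniv (fun y _ => hmono _ _ (Set.subset_univ _)) ha1
    zero_le_one ha2
  choose q _ hq using htree
  choose e he1 he2 using hcube
  set L : ℝ := a * (16 * J) ^ p with hL
  have hL0 : 0 < L := by positivity
  let Q : ℕ → (Fin k → ℝ) → X := fun N v => q N (e N v / 2)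
  have hQ : ∀ N, ∀ v ∈ Set.Icc (0 : Fin k → ℝ) 1, ∀ w ∈ Set.Icc (0 : Fin k → ℝ) 1,
      dist v w ^ p ≤ 2 * C * L * dist (Q N v) (Q N w) ^ p +
        (2 * C * (a * (2 * (R0 / 2 ^ N)) ^ p) + ((2 : ℝ) ^ (-p)) ^ N) := by
    intro N v hv w hw
    have h1 := he2 N v hv w hw
    obtain ⟨h2, h3⟩ := he1 N v hv
    obtain ⟨h4, h5⟩ := he1 N w hw
    have h6 := hq N (e N v / 2) ⟨by linarith, by linarith⟩ (e N w / 2)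
      ⟨by linarith, by linarith⟩
    have h7 : |e N v - e N w| = 2 * |e N v / 2 - e N w / 2| := by
      rw [← sub_div, abs_div, abs_two]; ring
    rw [h7] at h1
    calc dist v w ^ p ≤ C * (2 * |e N v / 2 - e N w / 2|) + ((2 : ℝ) ^ (-p)) ^ N := h1
      _ ≤ C * (2 * (L * dist (q N (e N v / 2)) (q N (e N w / 2)) ^ p +
          a * (2 * (R0 / 2 ^ N)) ^ p)) + ((2 : ℝ) ^ (-p)) ^ N := by gcongr
      _ = _ := by simp only [Q]; ring
  have herr : Filter.Tendsto (fun N : ℕ => 2 * C * (a * (2 * (R0 / 2 ^ N)) ^ p) +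
      ((2 : ℝ) ^ (-p)) ^ N) Filter.atTop (nhds 0) := by
    have h1 : Filter.Tendsto (fun N : ℕ => ((2 : ℝ) ^ (-p)) ^ N) Filter.atTop (nhds 0) :=
      tendsto_pow_atTop_nhds_zero_of_lt_one (by positivity)
        (Real.rpow_lt_one_of_one_lt_of_neg (by norm_num) (by linarith))
    have h2 : Filter.Tendsto (fun N : ℕ => 2 * (R0 / 2 ^ N)) Filter.atTop (nhds 0) := by
      have h3 : Filter.Tendsto (fun N : ℕ => 2 * R0 * ((1 / 2 : ℝ)) ^ N) Filter.atTop
          (nhds (2 * R0 * 0)) :=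
        (tendsto_pow_atTop_nhds_zero_of_lt_one (by norm_num) (by norm_num)).const_mul _
      rw [mul_zero] at h3
      refine h3.congr fun N => ?_
      rw [one_div, inv_pow]; ring
    have h3 := h2.rpow_const (p := p) (Or.inr hp0.le)
    rw [Real.zero_rpow hp0.ne'] at h3
    have h4 := ((h3.const_mul a).const_mul (2 * C)).add h1
    simpa using h4
  let U : Ultrafilter ℕ := Filter.hyperfilter ℕ
  have hU : (U : Filter ℕ) ≤ Filter.atTop := by
    rw [← Nat.cofinite_eq_atTop]; exact Filter.hyperfilter_le_cofinite
  have hlim : ∀ v, ∃ x, Filter.Tendsto (fun N => Q N v) U (nhds x) := fun v =>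
    ⟨_, (U.map (fun N => Q N v)).le_nhds_lim⟩
  choose P hP using hlim
  refine ⟨P, (2 * C * L) ^ (1 / p), by positivity, fun v hv w hw => ?_⟩
  have h1 : Filter.Tendsto (fun N => 2 * C * L * dist (Q N v) (Q N w) ^ p +
        (2 * C * (a * (2 * (R0 / 2 ^ N)) ^ p) + ((2 : ℝ) ^ (-p)) ^ N)) U
        (nhds (2 * C * L * dist (P v) (P w) ^ p + 0)) :=
    ((((hP v).dist (hP w)).rpow_const (Or.inr hp0.le)).const_mul _).add (herr.mono_left hU)
  have h2 : dist v w ^ p ≤ 2 * C * L * dist (P v) (P w) ^ p + 0 :=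
    ge_of_tendsto h1 (Filter.Eventually.of_forall fun N => hQ N v hv w hw)
  rw [add_zero] at h2
  have h3 : 2 * C * L * dist (P v) (P w) ^ p =
      ((2 * C * L) ^ (1 / p) * dist (P v) (P w)) ^ p := by
    rw [Real.mul_rpow (by positivity) dist_nonneg, ← Real.rpow_mul (by positivity),
      one_div_mul_cancel hp0.ne', Real.rpow_one]
  rw [h3] at h2
  exact (Real.rpow_le_rpow_iff dist_nonneg (by positivity) hp0).1 h2

/-- If `(X,d)` is a nonempty compact metric space whose Hausdorff dimension is
strictly larger than a positive integer `k`, then there exists a Lipschitz map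
`f : X → ℝ^k` whose image is exactly the `k`-dimensional cube `[0,1]^k`. -/
theorem compact_of_dimH_gt_mapsOnto_cube
    {X : Type*} [MetricSpace X] [CompactSpace X] [Nonempty X]
    (k : ℕ) (hk : 0 < k)
    (hdim : (k : ℝ≥0∞) < dimH (Set.univ : Set X)) :
    ∃ f : X → EuclideanSpace ℝ (Fin k),
      (∃ L : ℝ≥0, LipschitzWith L f) ∧
      Set.range f = {x : EuclideanSpace ℝ (Fin k) | ∀ i, x i ∈ Set.Icc (0 : ℝ) 1} := by
  obtain ⟨P, K, hK, hP⟩ := aux_section k hdim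
  set Q : Set (Fin k → ℝ) := Set.Icc 0 1 with hQ
  have hinv : ∀ x ∈ P '' Q, ∃ v ∈ Q, P v = x := fun x hx => hx
  have hinj : ∀ v ∈ Q, ∀ w ∈ Q, P v = P w → v = w := by
    intro v hv w hw h
    have := hP v hv w hw
    rw [h, dist_self, mul_zero] at this
    exact dist_le_zero.1 this
  have hg : LipschitzOnWith ⟨K, hK⟩ (Function.invFunOn P Q) (P '' Q) := by
    apply LipschitzOnWith.of_dist_le_mul
    intro x hx y hy
    have h1 := hP _ (Function.invFunOn_mem hx) _ (Function.invFunOn_mem hy)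
    rw [Function.invFunOn_eq hx, Function.invFunOn_eq hy] at h1
    exact h1
  obtain ⟨g, hgL, hgE⟩ := hg.extend_pi
  let cl : (Fin k → ℝ) → (Fin k → ℝ) := fun v i => max 0 (min 1 (v i))
  have hcl : LipschitzWith 1 cl := by
    apply LipschitzWith.of_dist_le_mul
    intro v w
    rw [NNReal.coe_one, one_mul, dist_pi_le_iff dist_nonneg]
    intro i
    refine le_trans ?_ (dist_le_pi_dist v w i)
    have h1 : LipschitzWith 1 (fun t : ℝ => max 0 (min 1 t)) :=
      (LipschitzWith.id.const_min 1).const_max 0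
    simpa using h1.dist_le_mul (v i) (w i)
  have hclQ : ∀ v ∈ Q, cl v = v := by
    intro v hv
    ext i
    have h1 := hv.1 i
    have h2 := hv.2 i
    simp only [Pi.zero_apply, Pi.one_apply] at h1 h2
    simp only [cl]
    rw [min_eq_right h2, max_eq_right h1]
  refine ⟨fun x => WithLp.toLp 2 (cl (g x)), ⟨_, (PiLp.lipschitzWith_toLp 2 _).comp
    (hcl.comp hgL)⟩, ?_⟩
  ext y
  constructor
  · rintro ⟨x, rfl⟩ i
    simp only [cl]
    exact ⟨le_max_left _ _, max_le zero_le_one (min_le_left _ _)⟩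
  · intro hy
    have hyQ : WithLp.ofLp y ∈ Q := ⟨fun i => (hy i).1, fun i => (hy i).2⟩
    refine ⟨P (WithLp.ofLp y), ?_⟩
    have hx : P (WithLp.ofLp y) ∈ P '' Q := ⟨_, hyQ, rfl⟩
    have h1 : g (P (WithLp.ofLp y)) = WithLp.ofLp y := by
      rw [← hgE hx]
      exact hinj _ (Function.invFunOn_mem hx) _ hyQ (Function.invFunOn_eq hx)
    simp only [h1, hclQ _ hyQ]
end

section
/- Let A be an analytic subset of a complete separable metric space X and let k be a positive integer. If the Hausdorff dimension of A is strictly larger than k, then there exists a map f : X → ℝ^k that is Lipschitz and satisfies f(A) = [0,1]^k (the k-dimensional cube). -/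
open MeasureTheory
open scoped ENNReal NNReal

namespace LipCube

open Set Filter Topology

section Content

variable {X : Type*} [MetricSpace X] [MeasurableSpace X] [BorelSpace X]

/-- one-ball cost modulo null sets. -/
noncomputable def preM (t : ℝ) (q : ℝ≥0∞) (E : Set X) : ℝ≥0∞ :=
  ⨅ (z : X × ℕ) (_ : μH[t] (E \ Metric.closedBall z.1 ((1 / 2 : ℝ) ^ z.2)) = 0), q ^ (z.2 + 1)

lemma preM_empty [Nonempty X] (t : ℝ) {q : ℝ≥0∞} (hq : q < 1) : preM (X := X) t q ∅ = 0 := by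
  obtain ⟨x⟩ := ‹Nonempty X›
  have h1 : Tendsto (fun n : ℕ => q ^ (n + 1)) atTop (𝓝 0) :=
    (ENNReal.tendsto_pow_atTop_nhds_zero_of_lt_one hq).comp (tendsto_add_atTop_nat 1)
  refine le_antisymm (ge_of_tendsto' h1 fun n => ?_) bot_le
  exact iInf₂_le_of_le (x, n) (by simp) le_rfl

/-- the content. -/
noncomputable def gam [Nonempty X] (t : ℝ) {q : ℝ≥0∞} (hq : q < 1) : OuterMeasure X :=
  OuterMeasure.ofFunction (preM t q) (preM_empty t hq)

lemma gam_le_of_null [Nonempty X] (t : ℝ) {q : ℝ≥0∞} (hq : q < 1) {E : Set X} {x : X} {n : ℕ}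
    (h : μH[t] (E \ Metric.closedBall x ((1 / 2 : ℝ) ^ n)) = 0) :
    gam t hq E ≤ q ^ (n + 1) :=
  (OuterMeasure.ofFunction_le _).trans (iInf₂_le_of_le (x, n) h le_rfl)

lemma gam_null [Nonempty X] (t : ℝ) {q : ℝ≥0∞} (hq : q < 1) {E : Set X}
    (h : μH[t] E = 0) : gam t hq E = 0 := by
  obtain ⟨x⟩ := ‹Nonempty X›
  have h1 : Tendsto (fun n : ℕ => q ^ (n + 1)) atTop (𝓝 0) :=
    (ENNReal.tendsto_pow_atTop_nhds_zero_of_lt_one hq).comp (tendsto_add_atTop_nat 1)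
  refine le_antisymm (ge_of_tendsto' h1 fun n => ?_) bot_le
  exact gam_le_of_null t hq (x := x) (measure_mono_null sdiff_subset h)

lemma gam_cover [Nonempty X] (t : ℝ) {q : ℝ≥0∞} (hq : q < 1) {E : Set X} {η : ℝ≥0∞}
    (h : gam t hq E < η) : ∃ z : ℕ → X × ℕ,
      μH[t] (E \ ⋃ i, Metric.closedBall (z i).1 ((1 / 2 : ℝ) ^ (z i).2)) = 0 ∧
      ∑' i, q ^ ((z i).2 + 1) < η := by
  rw [gam, OuterMeasure.ofFunction_apply] at h
  simp only [iInf_lt_iff] at h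
  obtain ⟨T, hT, hlt⟩ := h
  obtain ⟨ε, hε0, hε⟩ := ENNReal.exists_pos_sum_of_countable (tsub_pos_of_lt hlt).ne' ℕ
  have hfin : ∑' n, preM t q (T n) ≠ ⊤ := hlt.ne_top
  have : ∀ i, ∃ z : X × ℕ, μH[t] (T i \ Metric.closedBall z.1 ((1 / 2 : ℝ) ^ z.2)) = 0 ∧
      q ^ (z.2 + 1) < preM t q (T i) + ε i := by
    intro i
    have h1 : preM t q (T i) < preM t q (T i) + ε i :=
      ENNReal.lt_add_right (ENNReal.ne_top_of_tsum_ne_top hfin i) (by simpa using (hε0 i).ne')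
    conv_lhs at h1 => rw [preM]
    simp only [iInf_lt_iff] at h1
    obtain ⟨z, h2, h3⟩ := h1
    exact ⟨z, h2, h3⟩
  choose z hz1 hz2 using this
  refine ⟨z, ?_, ?_⟩
  · refine measure_mono_null (t := ⋃ i, (T i \ Metric.closedBall (z i).1 ((1 / 2 : ℝ) ^ (z i).2))) ?_
      (measure_iUnion_null hz1)
    rintro x ⟨hx, hx2⟩
    obtain ⟨i, hi⟩ := mem_iUnion.1 (hT hx)
    refine mem_iUnion.2 ⟨i, hi, fun h => hx2 (mem_iUnion.2 ⟨i, h⟩)⟩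
  · calc ∑' i, q ^ ((z i).2 + 1) ≤ ∑' i, (preM t q (T i) + ε i) :=
          ENNReal.tsum_le_tsum fun i => (hz2 i).le
      _ = ∑' i, preM t q (T i) + ∑' i, (ε i : ℝ≥0∞) := ENNReal.tsum_add
      _ < ∑' i, preM t q (T i) + (η - ∑' i, preM t q (T i)) := ENNReal.add_lt_add_left hfin hε
      _ = η := add_tsub_cancel_of_le hlt.le

/-- null criterion. -/
lemma null_of_covers {t : ℝ} (ht : 0 < t) {S : Set X}
    (h : ∀ ε : ℝ≥0∞, 0 < ε → ∃ (I : Type) (_ : Countable I) (z : I → X × ℕ),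
      S ⊆ (⋃ i, Metric.closedBall (z i).1 ((1 / 2 : ℝ) ^ (z i).2)) ∧
      ∑' i, (ENNReal.ofReal ((1 / 2) ^ t)) ^ (z i).2 ≤ ε) : μH[t] S = 0 := by
  have h0 : ∀ j : ℕ, (0 : ℝ≥0∞) < ((j : ℝ≥0∞) + 1)⁻¹ := fun j => by simp
  choose I hI z hz1 hz2 using fun j : ℕ => h _ (h0 j)
  have hte : Tendsto (fun j : ℕ => ((j : ℝ≥0∞) + 1)⁻¹) atTop (𝓝 0) := by
    have := ENNReal.tendsto_inv_nat_nhds_zero.comp (tendsto_add_atTop_nat 1)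
    refine this.congr fun j => by simp
  have hd : ∀ (x : X) (n : ℕ), Metric.ediam (Metric.closedBall x ((1 / 2 : ℝ) ^ n)) ^ t
      ≤ 2 ^ t * ENNReal.ofReal ((1 / 2) ^ t) ^ n := by
    intro x n
    have h1 : Metric.ediam (Metric.closedBall x ((1 / 2 : ℝ) ^ n)) ≤
        ENNReal.ofReal (2 * (1 / 2) ^ n) := by
      refine Metric.ediam_le fun a ha b hb => ?_
      rw [edist_dist]
      refine ENNReal.ofReal_le_ofReal ?_
      have := dist_triangle_right a b x
      rw [Metric.mem_closedBall] at ha hb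
      linarith
    calc _ ≤ ENNReal.ofReal (2 * (1 / 2) ^ n) ^ t := ENNReal.rpow_le_rpow h1 ht.le
      _ = _ := by
        rw [ENNReal.ofReal_mul (by norm_num), ENNReal.mul_rpow_of_nonneg _ _ ht.le]
        congr 1
        · simp
        · rw [ENNReal.ofReal_rpow_of_pos (by positivity), ← ENNReal.ofReal_pow (by positivity),
            ← Real.rpow_natCast, ← Real.rpow_natCast, ← Real.rpow_mul (by norm_num),
            ← Real.rpow_mul (by norm_num), mul_comm]
  have h2t : (2 : ℝ≥0∞) ^ t ≠ ⊤ := by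
    exact ENNReal.rpow_ne_top_of_nonneg ht.le (by simp)
  have hle : ∀ j i, Metric.ediam (Metric.closedBall (z j i).1 ((1 / 2 : ℝ) ^ (z j i).2)) ≤
      (2 ^ t * ((j : ℝ≥0∞) + 1)⁻¹) ^ (1 / t) := by
    intro j i
    have h1 := (hd (z j i).1 (z j i).2).trans (mul_le_mul_right ((ENNReal.le_tsum i).trans (hz2 j)) _)
    rw [one_div t]
    exact (ENNReal.le_rpow_inv_iff ht).2 h1
  have hte2 : Tendsto (fun j : ℕ => 2 ^ t * ((j : ℝ≥0∞) + 1)⁻¹) atTop (𝓝 0) := by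
    have := ENNReal.Tendsto.const_mul (a := 2 ^ t) hte (Or.inr h2t)
    simpa using this
  have hr : Tendsto (fun j : ℕ => (2 ^ t * ((j : ℝ≥0∞) + 1)⁻¹) ^ (1 / t)) atTop (𝓝 0) := by
    have := hte2.ennrpow_const (1 / t)
    rwa [ENNReal.zero_rpow_of_pos (by positivity)] at this
  have := Measure.hausdorffMeasure_le_liminf_tsum t S _ hr
    (fun j i => Metric.closedBall (z j i).1 ((1 / 2 : ℝ) ^ (z j i).2))
    (Eventually.of_forall hle) (Eventually.of_forall hz1)
  refine le_antisymm (this.trans ?_) bot_le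
  have h3 : ∀ j, ∑' i, Metric.ediam (Metric.closedBall (z j i).1 ((1 / 2 : ℝ) ^ (z j i).2)) ^ t ≤
      2 ^ t * ((j : ℝ≥0∞) + 1)⁻¹ := by
    intro j
    calc _ ≤ ∑' i, 2 ^ t * ENNReal.ofReal ((1 / 2) ^ t) ^ (z j i).2 :=
          ENNReal.tsum_le_tsum fun i => hd _ _
      _ = 2 ^ t * ∑' i, ENNReal.ofReal ((1 / 2) ^ t) ^ (z j i).2 := ENNReal.tsum_mul_left
      _ ≤ _ := mul_le_mul_right (hz2 j) _
  calc _ ≤ liminf (fun j : ℕ => 2 ^ t * ((j : ℝ≥0∞) + 1)⁻¹) atTop :=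
        liminf_le_liminf (Eventually.of_forall h3)
    _ = 0 := hte2.liminf_eq

lemma null_of_gam [Nonempty X] {t : ℝ} (ht : 0 < t) {q : ℝ≥0∞} (hq : q < 1)
    (hpq : ENNReal.ofReal ((1 / 2) ^ t) ≤ q) {E : Set X} (h : gam t hq E = 0) : μH[t] E = 0 := by
  have hq0 : q ≠ 0 := by
    intro h0
    rw [h0] at hpq
    simp only [nonpos_iff_eq_zero, ENNReal.ofReal_eq_zero] at hpq
    have : (0 : ℝ) < (1 / 2) ^ t := by positivity
    linarith
  have h0 : ∀ j : ℕ, (0 : ℝ≥0∞) < q * ((j : ℝ≥0∞) + 1)⁻¹ := fun j => by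
    rw [ENNReal.mul_pos_iff]
    exact ⟨pos_iff_ne_zero.2 hq0, by simp⟩
  choose z hz1 hz2 using fun j : ℕ => gam_cover t hq (h.trans_lt (h0 j))
  set N := ⋃ j, (E \ ⋃ i, Metric.closedBall (z j i).1 ((1 / 2 : ℝ) ^ (z j i).2)) with hN
  have hN0 : μH[t] N = 0 := measure_iUnion_null hz1
  have : μH[t] (E \ N) = 0 := by
    refine null_of_covers ht fun ε hε => ?_
    obtain ⟨j, hj⟩ := ENNReal.exists_inv_nat_lt hε.ne'
    refine ⟨ℕ, inferInstance, z j, ?_, ?_⟩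
    · rintro x ⟨hx, hxN⟩
      by_contra hc
      exact hxN (mem_iUnion.2 ⟨j, hx, hc⟩)
    · have h1 : q * ∑' i, ENNReal.ofReal ((1 / 2) ^ t) ^ (z j i).2 ≤ q * ((j : ℝ≥0∞) + 1)⁻¹ := by
        refine le_trans ?_ (hz2 j).le
        rw [← ENNReal.tsum_mul_left]
        refine ENNReal.tsum_le_tsum fun i => ?_
        rw [pow_succ']
        gcongr
      have h2 := (ENNReal.mul_le_mul_iff_right hq0 (hq.trans ENNReal.one_lt_top).ne).1 h1
      refine h2.trans (le_trans ?_ hj.le)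
      rw [ENNReal.inv_le_inv]
      exact le_self_add
  have h2 : E ⊆ (E \ N) ∪ N := by
    intro x hx
    by_cases hh : x ∈ N
    · exact Or.inr hh
    · exact Or.inl ⟨hx, hh⟩
  exact measure_mono_null h2 (measure_union_null this hN0)


lemma exists_net (G : Set X) {d : ℝ} (hd : 0 < d) : ∃ V ⊆ G, (∀ v ∈ V, ∀ w ∈ V, v ≠ w → d < dist v w) ∧
    ∀ g ∈ G, ∃ v ∈ V, dist g v ≤ d := by
  obtain ⟨V, hV⟩ := zorn_subset {V : Set X | V ⊆ G ∧ ∀ v ∈ V, ∀ w ∈ V, v ≠ w → d < dist v w} (by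
    intro c hc hch
    refine ⟨⋃₀ c, ⟨sUnion_subset fun s hs => (hc hs).1, ?_⟩, fun s hs => subset_sUnion_of_mem hs⟩
    rintro v ⟨s, hs, hv⟩ w ⟨s', hs', hw⟩ hvw
    rcases hch.total hs hs' with h | h
    · exact (hc hs').2 v (h hv) w hw hvw
    · exact (hc hs).2 v hv w (h hw) hvw)
  refine ⟨V, hV.prop.1, hV.prop.2, fun g hg => ?_⟩
  by_contra! hcon
  have hgV : g ∉ V := fun h => by
    have := hcon g h
    simp at this; linarith
  have hins : insert g V ∈ {V : Set X | V ⊆ G ∧ ∀ v ∈ V, ∀ w ∈ V, v ≠ w → d < dist v w} := by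
    refine ⟨insert_subset hg hV.prop.1, ?_⟩
    rintro v (rfl | hv) w (rfl | hw) hvw
    · exact absurd rfl hvw
    · exact hcon w hw
    · rw [dist_comm]; exact hcon v hv
    · exact hV.prop.2 v hv w hw hvw
  exact hgV (hV.le_of_ge hins (subset_insert _ _) (mem_insert _ _))

lemma tendsto_lin_pow {ρ : ℝ≥0∞} (hρ : ρ < 1) :
    Tendsto (fun n : ℕ => ((n : ℝ≥0∞) + 2) * ρ ^ n) atTop (𝓝 0) := by
  lift ρ to ℝ≥0 using (hρ.trans ENNReal.one_lt_top).ne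
  have hρ' : (ρ : ℝ) < 1 := by exact_mod_cast hρ
  have h1 := tendsto_self_mul_const_pow_of_lt_one ρ.coe_nonneg hρ'
  have h2 := (tendsto_pow_atTop_nhds_zero_of_lt_one ρ.coe_nonneg hρ').const_mul 2
  have h3 : Tendsto (fun n : ℕ => (((n + 2) * ρ ^ n : ℝ≥0) : ℝ)) atTop (𝓝 ((0 : ℝ≥0) : ℝ)) := by
    have := h1.add h2
    simp only [mul_zero, add_zero] at this
    refine this.congr fun n => ?_
    push_cast
    ring
  have h4 := ENNReal.tendsto_coe.2 (NNReal.tendsto_coe.1 h3)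
  refine h4.congr fun n => ?_
  push_cast
  rfl

lemma gam_increasing [Nonempty X] {t : ℝ} (ht : 0 < t) {q : ℝ≥0∞} (hq : q < 1)
    (hpq : ENNReal.ofReal ((1 / 2) ^ t) < q) (E : ℕ → Set X) (hE : Monotone E) {η : ℝ≥0∞}
    (hη : η ≤ q ^ 4) (h : ∀ m, gam t hq (E m) < η) : q ^ 3 * gam t hq (⋃ m, E m) ≤ η := by
  have hq0 : q ≠ 0 := (bot_le.trans_lt hpq).ne'
  have hqt : q ≠ ⊤ := (hq.trans ENNReal.one_lt_top).ne
  have hηt : η ≠ ⊤ := (hη.trans_lt (ENNReal.pow_lt_top hqt.lt_top)).ne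
  choose z hz1 hz2 using fun m => gam_cover t hq (h m)
  set U := hyperfilter ℕ with hU
  set r : ℕ → ℝ := fun n => (1 / 2 : ℝ) ^ n with hr
  have hr0 : ∀ n, 0 < r n := fun n => by positivity
  set G : ℕ → Set X := fun n => {v | ∀ᶠ m in U, ∃ i, (z m i).2 = n ∧ dist (z m i).1 v ≤ 2 * r n} with hG
  choose V hVG hVsep hVnet using fun n => exists_net (G n) (show 0 < 4 * r n by linarith [hr0 n])
  -- levels
  have hlev : ∀ m i, 3 ≤ (z m i).2 := by
    intro m i
    by_contra! hc
    have h1 : q ^ 4 ≤ q ^ ((z m i).2 + 1) := pow_le_pow_right_of_le_one' hq.le (by omega)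
    have h2 : q ^ ((z m i).2 + 1) ≤ ∑' i, q ^ ((z m i).2 + 1) :=
      ENNReal.le_tsum (f := fun i => q ^ ((z m i).2 + 1)) i
    exact absurd ((hη.trans h1).trans h2) (not_le.2 (hz2 m))
  have hlevW : ∀ w : (Σ n, V n), 3 ≤ w.1 := by
    rintro ⟨n, v, hv⟩
    obtain ⟨m, i, h1, -⟩ := (hVG n hv).exists
    have := hlev m i
    simp only; omega
  have hW : ∑' w : (Σ n, V n), q ^ (w.1 + 1) ≤ η := by
    rw [ENNReal.tsum_eq_iSup_sum]
    refine iSup_le fun S => ?_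
    have h1 : ∀ᶠ m in U, ∀ w ∈ S, ∃ i, (z m i).2 = w.1 ∧ dist (z m i).1 w.2 ≤ 2 * r w.1 :=
      (eventually_all_finset S).2 fun w _ => hVG w.1 w.2.2
    obtain ⟨m, hm⟩ := h1.exists
    choose! i hi1 hi2 using hm
    have hinj : Function.Injective (fun w : S => i w.1) := by
      rintro ⟨⟨n, v⟩, hw⟩ ⟨⟨n', v'⟩, hw'⟩ heq
      simp only at heq
      have e1 := hi1 _ hw
      have e2 := hi1 _ hw'
      have e3 := hi2 _ hw
      have e4 := hi2 _ hw'
      rw [← heq] at e2 e4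
      simp only at e1 e2 e3 e4
      have : n = n' := e1.symm.trans e2
      subst this
      by_cases hv : v = v'
      · subst hv; rfl
      · exfalso
        have h5 := hVsep n v v.2 v' v'.2 (fun h => hv (Subtype.ext h))
        have h6 := dist_triangle_left (v : X) v' (z m (i ⟨n, v⟩)).1
        linarith
    calc ∑ w ∈ S, q ^ (w.1 + 1) = ∑' w : S, q ^ (w.1.1 + 1) := by
          rw [tsum_fintype, ← Finset.sum_coe_sort]
      _ = ∑' w : S, (fun l => q ^ ((z m l).2 + 1)) (i w.1) := by
          refine tsum_congr fun w => ?_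
          simp only [hi1 w.1 w.2]
      _ ≤ ∑' l, q ^ ((z m l).2 + 1) :=
          ENNReal.tsum_comp_le_tsum_of_injective hinj (fun l => q ^ ((z m l).2 + 1))
      _ ≤ η := (hz2 m).le
  have hcW : Countable (Σ n, V n) := by
    have := Summable.countable_support_ennreal (ne_top_of_le_ne_top hηt hW)
    have h2 : Function.support (fun w : (Σ n, V n) => q ^ (w.1 + 1)) = univ := by
      ext w; simp [hq0]
    rw [h2] at this
    exact countable_univ_iff.1 this
  set B : Set X := ⋃ w : (Σ n, V n), Metric.closedBall (w.2 : X) (8 * r w.1) with hB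
  set N : Set X := ⋃ m, (E m \ ⋃ i, Metric.closedBall (z m i).1 ((1 / 2 : ℝ) ^ (z m i).2)) with hN
  have hN0 : μH[t] N = 0 := measure_iUnion_null hz1
  have hGB : ∀ n, ∀ g ∈ G n, ∀ x, dist x g ≤ r n → x ∈ B := by
    intro n g hg x hx
    obtain ⟨v, hv, hgv⟩ := hVnet n g hg
    refine mem_iUnion.2 ⟨⟨n, v, hv⟩, ?_⟩
    rw [Metric.mem_closedBall]
    have := dist_triangle x g v
    have := hr0 n
    simp only
    linarith
  have hgB : q ^ 3 * gam t hq B ≤ η := by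
    calc q ^ 3 * gam t hq B ≤ q ^ 3 * ∑' w : (Σ n, V n), gam t hq (Metric.closedBall (w.2 : X) (8 * r w.1)) := by
          gcongr; exact measure_iUnion_le _
      _ = ∑' w : (Σ n, V n), q ^ 3 * gam t hq (Metric.closedBall (w.2 : X) (8 * r w.1)) :=
          ENNReal.tsum_mul_left.symm
      _ ≤ ∑' w : (Σ n, V n), q ^ (w.1 + 1) := by
          refine ENNReal.tsum_le_tsum fun w => ?_
          obtain ⟨l, hl⟩ := Nat.exists_eq_add_of_le' (hlevW w)
          have h1 : (8 * r w.1) = (1 / 2) ^ l := by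
            rw [hr]; simp only [hl, pow_add]; ring
          have h2 : gam t hq (Metric.closedBall (w.2 : X) (8 * r w.1)) ≤ q ^ (l + 1) :=
            gam_le_of_null t hq (x := (w.2 : X)) (by rw [h1]; simp)
          calc _ ≤ q ^ 3 * q ^ (l + 1) := by gcongr
            _ = _ := by rw [hl, ← pow_add]; congr 1; omega
      _ ≤ η := hW
  have hnull : ∀ j, μH[t] ((E j \ N) \ B) = 0 := by
    intro j
    refine null_of_covers ht fun ε hε => ?_
    set p := ENNReal.ofReal ((1 / 2) ^ t) with hp
    have hρ : p / q < 1 := (ENNReal.div_lt_iff (Or.inl hq0) (Or.inl hqt)).2 (by simpa using hpq)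
    have hT : Tendsto (fun n : ℕ => η * (((n : ℝ≥0∞) + 2) * (p / q) ^ n)) atTop (𝓝 0) := by
      have := ENNReal.Tendsto.const_mul (a := η) (tendsto_lin_pow hρ) (Or.inr hηt)
      simpa using this
    have hqε : 0 < q * ε := ENNReal.mul_pos hq0 hε.ne'
    obtain ⟨n0, hn0⟩ := (hT.eventually (gt_mem_nhds hqε)).exists
    obtain ⟨f, hf1, hf2⟩ := exists_seq_of_forall_finset_exists (fun m => j ≤ m)
      (fun m m' => ∀ i, (z m i).2 ≤ n0 → (z m i).1 ∉ G (z m i).2 → ∀ i', (z m' i').2 = (z m i).2 →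
        2 * r (z m i).2 < dist (z m' i').1 (z m i).1) (by
      intro S _
      have h1 : ∀ᶠ m' in (U : Filter ℕ), j ≤ m' := (Nat.hyperfilter_le_atTop (eventually_ge_atTop j))
      have h2 : ∀ᶠ m' in (U : Filter ℕ), ∀ m ∈ S, ∀ i ∈ {i | (z m i).2 ≤ n0}, (z m i).1 ∉ G (z m i).2 → ∀ i', (z m' i').2 = (z m i).2 →
          2 * r (z m i).2 < dist (z m' i').1 (z m i).1 := by
        refine (eventually_all_finset S).2 fun m _ => ?_
        have hfin : {i | (z m i).2 ≤ n0}.Finite := by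
          refine (ENNReal.finite_const_le_of_tsum_ne_top (a := fun i => q ^ ((z m i).2 + 1))
            (ne_top_of_lt (hz2 m)) (ε := q ^ (n0 + 1)) (pow_ne_zero _ hq0)).subset ?_
          intro i hi
          exact pow_le_pow_right_of_le_one' hq.le (by simpa using hi)
        refine (eventually_all_finite hfin).2 fun i _ => ?_
        by_cases hg : (z m i).1 ∈ G (z m i).2
        · exact Eventually.of_forall fun _ hn => absurd hg hn
        · have := Ultrafilter.eventually_not.2 hg
          filter_upwards [this] with m' hm' _ i' hi'
          by_contra! hc
          exact hm' ⟨i', hi', hc⟩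
      obtain ⟨y, hy1, hy2⟩ := (h1.and h2).exists
      exact ⟨y, hy1, fun x hx i hi => hy2 x hx i hi⟩)
    refine ⟨{a : Fin (n0 + 2) × ℕ // n0 < (z (f a.1) a.2).2}, inferInstance,
      fun a => z (f a.1.1) a.1.2, ?_, ?_⟩
    · rintro x ⟨⟨hxE, hxN⟩, hxB⟩
      by_contra hc
      have hcov : ∀ a : Fin (n0 + 2), ∃ i, dist x (z (f a) i).1 ≤ r (z (f a) i).2 ∧ (z (f a) i).2 ≤ n0 := by
        intro a
        have h1 : x ∈ E (f a) := hE (hf1 a) hxE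
        have h2 : x ∈ ⋃ i, Metric.closedBall (z (f a) i).1 ((1 / 2 : ℝ) ^ (z (f a) i).2) := by
          by_contra h3
          exact hxN (mem_iUnion.2 ⟨f a, h1, h3⟩)
        obtain ⟨i, hi⟩ := mem_iUnion.1 h2
        refine ⟨i, hi, ?_⟩
        by_contra! h3
        exact hc (mem_iUnion.2 ⟨⟨(a, i), h3⟩, hi⟩)
      choose i hi1 hi2 using hcov
      obtain ⟨a, b, hab, heq⟩ := Fintype.exists_ne_map_eq_of_card_lt
        (fun a : Fin (n0 + 2) => (⟨(z (f a) (i a)).2, Nat.lt_succ_of_le (hi2 a)⟩ : Fin (n0 + 1))) (by simp)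
      have heq' : (z (f a) (i a)).2 = (z (f b) (i b)).2 := by simpa using heq
      have key : ∀ a b : Fin (n0 + 2), a < b → (z (f a) (i a)).2 = (z (f b) (i b)).2 → False := by
        intro a b hab heq
        have hnG : (z (f a) (i a)).1 ∉ G (z (f a) (i a)).2 := fun hg => hxB (hGB _ _ hg x (hi1 a))
        have h1 := hf2 a b hab (i a) (hi2 a) hnG (i b) heq.symm
        have h2 := hi1 a
        have h3 := hi1 b
        rw [← heq] at h3
        have h4 := dist_triangle_left (z (f b) (i b)).1 (z (f a) (i a)).1 x
        linarith
      rcases lt_or_gt_of_ne hab with h1 | h1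
      · exact key a b h1 heq'
      · exact key b a h1 heq'.symm
    · have h1 : q * ∑' a : {a : Fin (n0 + 2) × ℕ // n0 < (z (f a.1) a.2).2}, p ^ (z (f a.1.1) a.1.2).2
          ≤ η * (((n0 : ℝ≥0∞) + 2) * (p / q) ^ n0) := by
        calc _ = ∑' a : {a : Fin (n0 + 2) × ℕ // n0 < (z (f a.1) a.2).2}, q * p ^ (z (f a.1.1) a.1.2).2 :=
              ENNReal.tsum_mul_left.symm
          _ ≤ ∑' a : {a : Fin (n0 + 2) × ℕ // n0 < (z (f a.1) a.2).2},
              (fun b : Fin (n0 + 2) × ℕ => (p / q) ^ n0 * q ^ ((z (f b.1) b.2).2 + 1)) a.1 := by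
              refine ENNReal.tsum_le_tsum fun a => ?_
              obtain ⟨l, hl⟩ := Nat.exists_eq_add_of_le a.2.le
              simp only [hl]
              calc q * p ^ (n0 + l) = q * (((p / q) * q) ^ n0 * p ^ l) := by
                    rw [ENNReal.div_mul_cancel hq0 hqt, pow_add]
                _ ≤ q * (((p / q) * q) ^ n0 * q ^ l) := by gcongr
                _ = _ := by ring
          _ ≤ ∑' b : Fin (n0 + 2) × ℕ, (p / q) ^ n0 * q ^ ((z (f b.1) b.2).2 + 1) :=
              ENNReal.tsum_comp_le_tsum_of_injective Subtype.val_injective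
                (fun b : Fin (n0 + 2) × ℕ => (p / q) ^ n0 * q ^ ((z (f b.1) b.2).2 + 1))
          _ = (p / q) ^ n0 * ∑ a : Fin (n0 + 2), ∑' i, q ^ ((z (f a) i).2 + 1) := by
              rw [ENNReal.tsum_mul_left, ENNReal.tsum_prod', tsum_fintype]
          _ ≤ (p / q) ^ n0 * ∑ a : Fin (n0 + 2), η := by
              gcongr with a
              exact (hz2 _).le
          _ = _ := by
              simp; ring
      have h2 := h1.trans hn0.le
      exact (ENNReal.mul_le_mul_iff_right hq0 hqt).1 h2
  have hsub : (⋃ m, E m) ⊆ B ∪ (N ∪ ⋃ j, ((E j \ N) \ B)) := by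
    intro x hx
    obtain ⟨j, hj⟩ := mem_iUnion.1 hx
    by_cases h1 : x ∈ B
    · exact Or.inl h1
    by_cases h2 : x ∈ N
    · exact Or.inr (Or.inl h2)
    · exact Or.inr (Or.inr (mem_iUnion.2 ⟨j, ⟨hj, h2⟩, h1⟩))
  have h0 : gam t hq (N ∪ ⋃ j, ((E j \ N) \ B)) = 0 :=
    gam_null t hq (measure_union_null hN0 (measure_iUnion_null hnull))
  calc q ^ 3 * gam t hq (⋃ m, E m) ≤ q ^ 3 * (gam t hq B + gam t hq (N ∪ ⋃ j, ((E j \ N) \ B))) := by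
        gcongr
        exact (measure_mono hsub).trans (measure_union_le _ _)
    _ = q ^ 3 * gam t hq B := by rw [h0, add_zero]
    _ ≤ η := hgB

end Content

/-- real valued content with all the properties we need. -/
structure Good {X : Type*} [MetricSpace X] (s C : ℝ) (μ : Set X → ℝ) : Prop where
  empty : μ ∅ = 0
  nonneg : ∀ E, 0 ≤ μ E
  mono : ∀ E F, E ⊆ F → μ E ≤ μ F
  union : ∀ E F, μ (E ∪ F) ≤ μ E + μ F
  null : ∀ f : ℕ → Set X, (∀ i, μ (f i) = 0) → μ (⋃ i, f i) = 0
  sub : ∀ f : ℕ → Set X, Summable (fun i => μ (f i)) → μ (⋃ i, f i) ≤ ∑' i, μ (f i)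
  ball : ∀ E x r, 0 < r → r ≤ 1 → E ⊆ Metric.closedBall x r → μ E ≤ r ^ s
  incr : ∀ P : ℕ → Set X, Monotone P → 0 < μ (⋃ i, P i) → ∃ N, μ (⋃ i, P i) / C ≤ μ (P N)

theorem exists_good {X : Type*} [MetricSpace X] [TopologicalSpace.SeparableSpace X]
    (A : Set X) (k : ℕ) (hdim : (k : ℝ≥0∞) < dimH A) :
    ∃ s : ℝ, (k : ℝ) < s ∧ ∃ C : ℝ, 1 ≤ C ∧ ∃ μ : Set X → ℝ, Good s C μ ∧ 0 < μ A := by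
  letI : MeasurableSpace X := borel X
  haveI : BorelSpace X := ⟨rfl⟩
  obtain ⟨t, ht1, ht2⟩ := ENNReal.lt_iff_exists_nnreal_btwn.1 hdim
  have hkt : (k : ℝ) < (t : ℝ) := by exact_mod_cast ht1
  have hHt : μH[(t : ℝ)] A = ⊤ := hausdorffMeasure_of_lt_dimH ht2
  have hne : Nonempty X := by
    by_contra h
    rw [not_nonempty_iff] at h
    rw [Set.eq_empty_of_isEmpty A] at hHt
    simp at hHt
  obtain ⟨s, hks, hst⟩ := exists_between hkt
  have hk0 : (0 : ℝ) ≤ k := Nat.cast_nonneg k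
  have hs0 : 0 < s := hk0.trans_lt hks
  have ht0 : 0 < (t : ℝ) := hs0.trans hst
  set q : ℝ≥0∞ := ENNReal.ofReal ((1 / 2) ^ s) with hqdef
  have hqr : ((1 : ℝ) / 2) ^ s < 1 := Real.rpow_lt_one (by norm_num) (by norm_num) hs0
  have hqr0 : (0 : ℝ) < (1 / 2) ^ s := by positivity
  have hq : q < 1 := by
    rw [hqdef]; simpa using hqr
  have hpq : ENNReal.ofReal ((1 / 2) ^ (t : ℝ)) < q := by
    rw [hqdef, ENNReal.ofReal_lt_ofReal_iff hqr0]
    exact Real.rpow_lt_rpow_of_exponent_gt (by norm_num) (by norm_num) hst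
  set γ := gam (X := X) t hq with hγ
  have hγA : γ A ≠ 0 := by
    intro h
    rw [null_of_gam ht0 hq hpq.le h] at hHt
    simp at hHt
  obtain ⟨x0, hx0⟩ : ∃ x0, γ (A ∩ Metric.closedBall x0 1) ≠ 0 := by
    by_contra! hcon
    refine hγA (measure_mono_null ?_ (measure_iUnion_null fun i : ℕ => hcon (TopologicalSpace.denseSeq X i)))
    intro x hx
    obtain ⟨i, hi⟩ := (TopologicalSpace.denseRange_denseSeq X).exists_dist_lt x one_pos
    exact mem_iUnion.2 ⟨i, hx, hi.le⟩
  set A0 := A ∩ Metric.closedBall x0 1 with hA0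
  have hball : ∀ E x r, 0 < r → r ≤ 1 → E ⊆ Metric.closedBall x r → γ E ≤ ENNReal.ofReal (r ^ s) := by
    intro E x r hr hr1 hE
    obtain ⟨n, hn1, hn2⟩ := exists_nat_pow_near_of_lt_one hr hr1 (y := (1 : ℝ) / 2) (by norm_num) (by norm_num)
    have h1 : γ E ≤ q ^ (n + 1) := by
      refine gam_le_of_null t hq (x := x) ?_
      rw [Set.sdiff_eq_empty.2 (hE.trans (Metric.closedBall_subset_closedBall hn2))]
      simp
    refine h1.trans ?_
    rw [hqdef, ← ENNReal.ofReal_pow hqr0.le]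
    refine ENNReal.ofReal_le_ofReal ?_
    rw [← Real.rpow_natCast, ← Real.rpow_mul (by norm_num), mul_comm, Real.rpow_mul (by norm_num), Real.rpow_natCast]
    exact Real.rpow_le_rpow (by positivity) hn1.le hs0.le
  have hA01 : γ A0 ≤ 1 := by
    have := hball A0 x0 1 one_pos le_rfl inter_subset_right
    simpa using this
  have hfin : ∀ E, γ (E ∩ A0) ≠ ⊤ := fun E =>
    (((measure_mono inter_subset_right).trans hA01).trans_lt ENNReal.one_lt_top).ne
  set c : ℝ := (1 / 2) ^ s with hc
  refine ⟨s, hks, 1 / c ^ 4, ?_, fun E => (γ (E ∩ A0)).toReal, ?_, ?_⟩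
  · rw [le_div_iff₀ (by positivity), one_mul]
    exact pow_le_one₀ hqr0.le hqr.le
  · constructor
    · simp
    · intro E; exact ENNReal.toReal_nonneg
    · intro E F hEF
      exact ENNReal.toReal_mono (hfin F) (measure_mono (inter_subset_inter_left _ hEF))
    · intro E F
      rw [← ENNReal.toReal_add (hfin E) (hfin F), union_inter_distrib_right]
      exact ENNReal.toReal_mono (ENNReal.add_ne_top.2 ⟨hfin E, hfin F⟩) (measure_union_le _ _)
    · intro f hf
      have : γ (⋃ i, f i ∩ A0) = 0 := measure_iUnion_null fun i => by
        simpa [ENNReal.toReal_eq_zero_iff, hfin] using hf i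
      simp only [iUnion_inter, this, ENNReal.toReal_zero]
    · intro f hf
      have h1 : γ (⋃ i, f i ∩ A0) ≤ ∑' i, γ (f i ∩ A0) := measure_iUnion_le _
      have h2 : ∑' i, γ (f i ∩ A0) ≠ ⊤ := by
        have := ENNReal.ofReal_tsum_of_nonneg (fun i => ENNReal.toReal_nonneg) hf
        simp only [ENNReal.ofReal_toReal (hfin _)] at this
        rw [← this]; simp
      rw [← ENNReal.tsum_toReal_eq (fun i => hfin _), iUnion_inter]
      exact ENNReal.toReal_mono h2 h1
    · intro E x r hr hr1 hE
      refine ENNReal.toReal_le_of_le_ofReal (by positivity) (hball _ x r hr hr1 (inter_subset_left.trans hE))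
    · intro P hP hpos
      by_contra! hcon
      set P' : ℕ → Set X := fun i => P i ∩ A0 with hP'
      have e : (⋃ i, P i) ∩ A0 = ⋃ i, P' i := iUnion_inter _ _
      rw [e] at hpos hcon
      have hfinU : γ (⋃ i, P' i) ≠ ⊤ := by rw [← e]; exact hfin _
      set η := q ^ 4 * γ (⋃ i, P' i) with hη
      have hU1 : γ (⋃ i, P' i) ≤ 1 := by
        rw [← e]; exact (measure_mono inter_subset_right).trans hA01
      have hq0 : q ≠ 0 := (bot_le.trans_lt hpq).ne'
      have hqt : q ≠ ⊤ := (hq.trans ENNReal.one_lt_top).ne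
      have hηt : η ≠ ⊤ := ENNReal.mul_ne_top (ENNReal.pow_ne_top hqt) hfinU
      have h1 := gam_increasing ht0 hq hpq P' (fun i j hij => inter_subset_inter_left _ (hP hij))
        (η := η) (by
          rw [hη]
          calc _ ≤ q ^ 4 * 1 := by gcongr
            _ = _ := mul_one _) (by
          intro m
          have := hcon m
          rw [← ENNReal.toReal_lt_toReal (hfin _) hηt]
          refine this.trans_eq ?_
          rw [hη, ENNReal.toReal_mul, ENNReal.toReal_pow, hqdef, ENNReal.toReal_ofReal hqr0.le]
          field_simp)
      rw [hη, ← ENNReal.toReal_le_toReal (ENNReal.mul_ne_top (ENNReal.pow_ne_top hqt) hfinU) hηt,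
        ENNReal.toReal_mul, ENNReal.toReal_pow, ENNReal.toReal_mul, ENNReal.toReal_pow, hqdef, ENNReal.toReal_ofReal hqr0.le] at h1
      have h2 := le_of_mul_le_mul_right h1 hpos
      have h3 : c ^ 4 < c ^ 3 := pow_lt_pow_right_of_lt_one₀ hqr0 hqr (by norm_num)
      linarith
  · have : A ∩ A0 = A0 := inter_eq_right.2 inter_subset_left
    simp only [this]
    exact ENNReal.toReal_pos hx0 (hA01.trans_lt ENNReal.one_lt_top).ne

section Split

variable {X : Type*} [MetricSpace X]

lemma null_of_local [TopologicalSpace.SeparableSpace X] {s C : ℝ} {μ : Set X → ℝ} (hμ : Good s C μ)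
    {Z : Set X} {r : ℝ} (hr : 0 < r) (h : ∀ x ∈ Z, μ (Z ∩ Metric.closedBall x r) = 0) : μ Z = 0 := by
  rcases Z.eq_empty_or_nonempty with rfl | ⟨z0, hz0⟩
  · exact hμ.empty
  haveI : Nonempty X := ⟨z0⟩
  have h1 : ∀ i : ℕ, μ (Z ∩ Metric.closedBall (TopologicalSpace.denseSeq X i) (r / 2)) = 0 := by
    intro i
    by_cases hne : (Z ∩ Metric.closedBall (TopologicalSpace.denseSeq X i) (r / 2)).Nonempty
    · obtain ⟨x, hxZ, hx⟩ := hne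
      refine le_antisymm ?_ (hμ.nonneg _)
      rw [← h x hxZ]
      refine hμ.mono _ _ ?_
      rintro y ⟨hyZ, hy⟩
      refine ⟨hyZ, ?_⟩
      rw [Metric.mem_closedBall] at *
      have := dist_triangle_right y x (TopologicalSpace.denseSeq X i)
      linarith
    · rw [not_nonempty_iff_eq_empty.1 hne]
      refine le_antisymm ?_ (hμ.nonneg _)
      rw [← h z0 hz0]
      exact hμ.mono _ _ (empty_subset _)
  refine le_antisymm ?_ (hμ.nonneg _)
  rw [← hμ.null _ h1]
  refine hμ.mono _ _ fun x hx => ?_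
  obtain ⟨i, hi⟩ := (TopologicalSpace.denseRange_denseSeq X).exists_dist_lt x (half_pos hr)
  exact mem_iUnion.2 ⟨i, hx, hi.le⟩

lemma exhaust [TopologicalSpace.SeparableSpace X] {s C : ℝ} {μ : Set X → ℝ} (hμ : Good s C μ)
    {P : Set X} (hP : 0 < μ P) {r T : ℝ} (hr : 0 < r) (hT : 0 < T) (rm : Set X → Set X)
    (h : ∀ Z ⊆ P, 0 < μ Z → ∀ y ∈ Z, (μ (Z ∩ Metric.closedBall y r) / 2) ^ T ≤ μ (rm Z)) :
    ∃ (n : ℕ) (Z : ℕ → Set X), (∀ i, Z i ⊆ P) ∧ (∀ i, Z (i + 1) = Z i \ rm (Z i)) ∧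
      (∀ i < n, 0 < μ (Z i)) ∧ μ P / 2 ≤ ∑ i ∈ Finset.range n, μ (rm (Z i)) := by
  set Z : ℕ → Set X := fun n => Nat.rec P (fun _ S => S \ rm S) n with hZ
  have hZ0 : Z 0 = P := rfl
  have hZs : ∀ i, Z (i + 1) = Z i \ rm (Z i) := fun i => rfl
  have hanti : Antitone Z := antitone_nat_of_succ_le fun i => by rw [hZs]; exact sdiff_subset
  have hsubP : ∀ i, Z i ⊆ P := fun i => hanti (Nat.zero_le i)
  have hfin : ∀ n, μ P ≤ μ (Z n) + ∑ i ∈ Finset.range n, μ (rm (Z i)) := by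
    intro n
    induction n with
    | zero => simp [hZ0]
    | succ n ih =>
      rw [Finset.sum_range_succ]
      have : μ (Z n) ≤ μ (Z (n + 1)) + μ (rm (Z n)) := by
        refine (hμ.mono _ _ ?_).trans (hμ.union _ _)
        rw [hZs]
        intro x hx
        by_cases hh : x ∈ rm (Z n)
        · exact Or.inr hh
        · exact Or.inl ⟨hx, hh⟩
      linarith
  by_cases hcase : ∃ n, μ (Z n) = 0
  · classical
    refine ⟨Nat.find hcase, Z, hsubP, hZs, fun i hi => ?_, ?_⟩
    · exact lt_of_le_of_ne (hμ.nonneg _) (Ne.symm (Nat.find_min hcase hi))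
    · have := hfin (Nat.find hcase)
      rw [Nat.find_spec hcase] at this
      linarith
  · have hpos : ∀ n, 0 < μ (Z n) := fun n =>
      lt_of_le_of_ne (hμ.nonneg _) (fun h => hcase ⟨n, h.symm⟩)
    by_contra! hcon
    have hlt : ∀ n, ∑ i ∈ Finset.range n, μ (rm (Z i)) < μ P / 2 := fun n =>
      hcon n Z hsubP hZs (fun i _ => hpos i)
    have hsum : Summable fun i => μ (rm (Z i)) :=
      summable_of_sum_range_le (fun i => hμ.nonneg _) (fun n => (hlt n).le)
    have htend := hsum.tendsto_atTop_zero
    have hnull : μ (⋂ i, Z i) = 0 := by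
      refine null_of_local hμ hr fun x hx => ?_
      refine le_antisymm ?_ (hμ.nonneg _)
      by_contra! hgt
      have h1 : ∀ i, (μ ((⋂ i, Z i) ∩ Metric.closedBall x r) / 2) ^ T ≤ μ (rm (Z i)) := fun i => by
        refine le_trans ?_ (h (Z i) (hsubP i) (hpos i) x (mem_iInter.1 hx i))
        refine Real.rpow_le_rpow (by linarith) ?_ hT.le
        have := hμ.mono _ _ (inter_subset_inter_left (Metric.closedBall x r) (iInter_subset Z i))
        linarith
      have h2 := ge_of_tendsto' htend h1
      have h3 : 0 < (μ ((⋂ i, Z i) ∩ Metric.closedBall x r) / 2) ^ T := Real.rpow_pos_of_pos (by linarith) _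
      linarith
    have h4 : μ P ≤ μ (⋂ i, Z i) + μ (⋃ i, rm (Z i)) := by
      refine (hμ.mono _ _ ?_).trans (hμ.union _ _)
      intro x hx
      by_cases hh : ∃ i, x ∈ rm (Z i)
      · exact Or.inr (mem_iUnion.2 hh)
      · left
        push Not at hh
        refine mem_iInter.2 fun i => ?_
        induction i with
        | zero => exact hx
        | succ i ih => rw [hZs]; exact ⟨ih, hh i⟩
    have h5 := hμ.sub _ hsum
    have h6 : ∑' i, μ (rm (Z i)) ≤ μ P / 2 := Real.tsum_le_of_sum_range_le (fun i => hμ.nonneg _) (fun n => (hlt n).le)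
    linarith

/-- chain of radii -/
lemma chain_step {D : ℕ} {T θ' : ℝ} (hT : 2 ≤ T) (hθ0 : 0 < θ') (hD : 2 * T ≤ (1 / θ') ^ D)
    (a : ℕ → ℝ) (ha0 : ∀ i, 0 ≤ a i) (ha1 : a 0 ≤ 1 / 2) (hpos : 0 < a 0)
    (hlast : (a 0 / 2) ^ T ≤ a D) : ∃ i < D, a i ≤ a (i + 1) ^ θ' := by
  by_contra! hcon
  have h1 : ∀ i ≤ D, a i ≤ a 0 ^ ((1 / θ') ^ i) := by
    intro i
    induction i with
    | zero => intro _; simp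
    | succ i ih =>
      intro hi
      have h2 := hcon i (by omega)
      have h3 := ih (by omega)
      have h4 : a (i + 1) ≤ (a i) ^ (1 / θ') := by
        have := Real.rpow_le_rpow (Real.rpow_nonneg (ha0 _) _) h2.le (show 0 ≤ 1 / θ' by positivity)
        rwa [← Real.rpow_mul (ha0 _), mul_one_div_cancel hθ0.ne', Real.rpow_one] at this
      refine h4.trans ?_
      rw [pow_succ, Real.rpow_mul hpos.le]
      exact Real.rpow_le_rpow (ha0 _) h3 (by positivity)
  have h2 : D ≠ 0 := by
    rintro rfl
    simp at hD; linarith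
  obtain ⟨D', rfl⟩ := Nat.exists_eq_succ_of_ne_zero h2
  have h3 : a (D' + 1) < a 0 ^ ((1 / θ') ^ (D' + 1)) := by
    have h5 := hcon D' (by omega)
    have h4 : a (D' + 1) < (a D') ^ (1 / θ') := by
      have := Real.rpow_lt_rpow (Real.rpow_nonneg (ha0 _) _) h5 (show 0 < 1 / θ' by positivity)
      rwa [← Real.rpow_mul (ha0 _), mul_one_div_cancel hθ0.ne', Real.rpow_one] at this
    refine h4.trans_le ?_
    rw [pow_succ, Real.rpow_mul hpos.le]
    exact Real.rpow_le_rpow (ha0 _) (h1 D' (by omega)) (by positivity)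
  have h4 : a 0 ^ ((1 / θ') ^ (D' + 1)) ≤ a 0 ^ (2 * T) :=
    Real.rpow_le_rpow_of_exponent_ge hpos (by linarith) hD
  have h5 : a 0 ^ (2 * T) ≤ (a 0 / 2) ^ T := by
    rw [Real.rpow_mul hpos.le]
    refine Real.rpow_le_rpow (by positivity) ?_ (by linarith)
    rw [Real.rpow_two]
    nlinarith
  exact absurd (hlast.trans_lt (h3.trans_le (h4.trans h5))) (lt_irrefl _)

lemma pick [TopologicalSpace.SeparableSpace X] {s C : ℝ} {μ : Set X → ℝ} (hμ : Good s C μ)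
    {D : ℕ} {T θ' : ℝ} (hT : 2 ≤ T) (hθ0 : 0 < θ') (hD : 2 * T ≤ (1 / θ') ^ D)
    {ℓ : ℝ} (hℓ : 0 < ℓ) {Z : Set X} (hZ : 0 < μ Z)
    (hM : ∀ x ∈ Z, μ (Z ∩ Metric.closedBall x ℓ) ≤ 1 / 2)
    (hns : ∀ x ∈ Z, ∀ S ⊆ Z ∩ Metric.closedBall x (ℓ / 2), 0 < μ S →
      ∃ x' ∈ S, μ S ^ T < μ (S ∩ Metric.closedBall x' (ℓ / 8))) :
    ∃ x ∈ Z, ∃ ρ : ℝ, ρ ≤ ℓ / 2 ∧ 0 < μ (Z ∩ Metric.closedBall x (ρ - 3 * ℓ / (8 * D))) ∧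
      μ (Z ∩ Metric.closedBall x ρ) ≤ μ (Z ∩ Metric.closedBall x (ρ - 3 * ℓ / (8 * D))) ^ θ' ∧
      ∀ y ∈ Z, (μ (Z ∩ Metric.closedBall y (ℓ / 2)) / 2) ^ T ≤ μ (Z ∩ Metric.closedBall x ρ) := by
  have hD0 : D ≠ 0 := by
    rintro rfl
    simp at hD; linarith
  have hDpos : (0 : ℝ) < D := by positivity
  set g : X → ℝ := fun x => μ (Z ∩ Metric.closedBall x (ℓ / 2)) with hg
  have hghalf : ∀ x ∈ Z, g x ≤ 1 / 2 := fun x hx => (hμ.mono _ _ (inter_subset_inter_right _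
    (Metric.closedBall_subset_closedBall (by linarith)))).trans (hM x hx)
  obtain ⟨x1, hx1, hgx1⟩ : ∃ x ∈ Z, 0 < g x := by
    by_contra! hcon
    have := null_of_local hμ (half_pos hℓ) (fun x hx => le_antisymm (hcon x hx) (hμ.nonneg _))
    linarith
  have hbdd : BddAbove (g '' Z) := ⟨1 / 2, by rintro _ ⟨x, hx, rfl⟩; exact hghalf x hx⟩
  have hle : ∀ y ∈ Z, g y ≤ sSup (g '' Z) := fun y hy => le_csSup hbdd (mem_image_of_mem g hy)
  have hsup : 0 < sSup (g '' Z) := hgx1.trans_le (hle x1 hx1)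
  obtain ⟨_, ⟨x, hx, rfl⟩, hxg⟩ := exists_lt_of_lt_csSup (⟨_, mem_image_of_mem g hx1⟩ : (g '' Z).Nonempty) (half_lt_self hsup)
  have hgx : 0 < g x := by linarith
  obtain ⟨x', hx', hst⟩ := hns x hx (Z ∩ Metric.closedBall x (ℓ / 2)) le_rfl hgx
  have hx'Z : x' ∈ Z := hx'.1
  set δ : ℝ := 3 * ℓ / (8 * D) with hδ
  have hδ0 : 0 < δ := by positivity
  set a : ℕ → ℝ := fun i => μ (Z ∩ Metric.closedBall x' (ℓ / 2 - i * δ)) with ha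
  have hamono : ∀ i j, i ≤ j → a j ≤ a i := fun i j hij => by
    refine hμ.mono _ _ (inter_subset_inter_right _ (Metric.closedBall_subset_closedBall ?_))
    have : (i : ℝ) ≤ j := by exact_mod_cast hij
    nlinarith
  have haD : g x ^ T < a D := by
    refine hst.trans_le (hμ.mono _ _ ?_)
    have : ℓ / 2 - D * δ = ℓ / 8 := by
      rw [hδ]; field_simp; ring
    rw [this]
    exact inter_subset_inter_left _ inter_subset_left
  have ha00 : a 0 = g x' := by simp [ha, hg]
  have ha0le : a 0 ≤ 2 * g x := by
    rw [ha00]; linarith [hle x' hx'Z]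
  have haDpos : 0 < a D := (Real.rpow_pos_of_pos hgx T).trans haD
  obtain ⟨i, hiD, hi⟩ := chain_step hT hθ0 hD a (fun i => hμ.nonneg _) (by rw [ha00]; exact hghalf x' hx'Z)
    (haDpos.trans_le (hamono 0 D (Nat.zero_le _))) (by
      refine le_trans (Real.rpow_le_rpow (by have := hμ.nonneg; simp only [ha]; linarith [this (Z ∩ Metric.closedBall x' (ℓ / 2 - (0 : ℕ) * δ))]) ?_ (by linarith)) haD.le
      linarith)
  refine ⟨x', hx'Z, ℓ / 2 - i * δ, ?_, ?_, ?_, ?_⟩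
  · have : (0 : ℝ) ≤ i := Nat.cast_nonneg i
    nlinarith
  · have h1 : ℓ / 2 - i * δ - δ = ℓ / 2 - (i + 1 : ℕ) * δ := by push_cast; ring
    rw [h1]
    exact haDpos.trans_le (hamono (i + 1) D hiD)
  · have h1 : ℓ / 2 - i * δ - δ = ℓ / 2 - (i + 1 : ℕ) * δ := by push_cast; ring
    rw [h1]
    exact hi
  · intro y hy
    refine le_trans ?_ (haD.le.trans (hamono i D hiD.le))
    refine Real.rpow_le_rpow ?_ ?_ (by linarith)
    · have := hμ.nonneg (Z ∩ Metric.closedBall y (ℓ / 2)); linarith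
    · have := hle y hy
      simp only [hg] at this ⊢ hxg
      linarith

end Split

section Split2

variable {X : Type*} [MetricSpace X]

lemma small_rpow {K a : ℝ} (ha : 0 < a) : ∀ᶠ x in 𝓝[>] (0 : ℝ), K * x ^ a ≤ 1 := by
  have h1 : Tendsto (fun x : ℝ => K * x ^ a) (𝓝[>] 0) (𝓝 0) := by
    have : ContinuousAt (fun x : ℝ => K * x ^ a) 0 :=
      continuousAt_const.mul (Real.continuousAt_rpow_const 0 a (Or.inr ha.le))
    have h2 := this.tendsto
    simp only [Real.zero_rpow ha.ne', mul_zero] at h2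
    exact h2.mono_left nhdsWithin_le_nhds
  exact h1.eventually (eventually_le_nhds one_pos)

set_option maxHeartbeats 1000000 in
/-- the numerical facts -/
lemma numerics {k s κ β T C N0 Λ : ℝ} (hk : 0 < k) (hkκ : k < κ) (hκs : κ < s) (hβ : 0 < β)
    (hβs : κ - k < s * β) (hT : 2 ≤ T) (hTβ : 2 ≤ T * β) (hC : 1 ≤ C) (hN0 : 1 ≤ N0) (hΛ : 1 ≤ Λ) :
    ∀ᶠ ℓ in 𝓝[>] (0 : ℝ), 0 < ℓ ∧ ℓ ≤ 1 ∧ ∀ u m M : ℝ, 0 < u → u / C ≤ m →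
      ((ℓ ^ κ ≤ u ∧ M = ℓ ^ s) ∨ (u < ℓ ^ κ ∧ M = u ^ T)) →
      0 < M ∧ N0 * M ≤ m / 2 ∧ M ≤ 1 / 2 ∧ Λ * ℓ ^ k ≤ m / 4 * M ^ (-β) ∧ M ≤ (ℓ / 4) ^ κ := by
  have hκ : 0 < κ := hk.trans hkκ
  set K : ℝ := 2 * C * N0 + 2 + 4 * C * Λ + 4 ^ κ with hK
  have h4 : (0 : ℝ) < 4 ^ κ := by positivity
  have hCN : 0 < C * N0 := by positivity
  have hCΛ : 0 < C * Λ := by positivity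
  have hKpos : 0 < K := by rw [hK]; linarith
  filter_upwards [small_rpow (K := K) (sub_pos.2 hκs), small_rpow (K := K) hκ,
    small_rpow (K := K) (show 0 < k + s * β - κ by linarith), self_mem_nhdsWithin,
    nhdsWithin_le_nhds (eventually_le_nhds (show (0 : ℝ) < 1 by norm_num))] with ℓ h1 h2 h3 hℓ hℓ1
  have hℓ0 : (0 : ℝ) < ℓ := hℓ
  refine ⟨hℓ0, hℓ1, ?_⟩
  have hv0 : 0 < ℓ ^ κ := Real.rpow_pos_of_pos hℓ0 _
  have hv1 : ℓ ^ κ ≤ 1 := Real.rpow_le_one hℓ0.le hℓ1 hκ.le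
  have hlk1 : ℓ ^ k ≤ 1 := Real.rpow_le_one hℓ0.le hℓ1 hk.le
  have hdiv : (ℓ / 4) ^ κ = ℓ ^ κ / 4 ^ κ := Real.div_rpow hℓ0.le (by norm_num) _
  rintro u m M hu hm (⟨hα, rfl⟩ | ⟨hβc, rfl⟩)
  · have hM0 : 0 < ℓ ^ s := Real.rpow_pos_of_pos hℓ0 _
    have e : ℓ ^ s = ℓ ^ (s - κ) * ℓ ^ κ := by
      rw [← Real.rpow_add hℓ0]; congr 1; ring
    have hKM : K * ℓ ^ s ≤ ℓ ^ κ := by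
      rw [e]; nlinarith
    have hmC : u ≤ C * m := by
      rwa [div_le_iff₀' (by linarith)] at hm
    refine ⟨hM0, ?_, ?_, ?_, ?_⟩
    · have : 2 * C * N0 * ℓ ^ s ≤ K * ℓ ^ s := by
        gcongr; rw [hK]; linarith
      have h5 : C * (2 * (N0 * ℓ ^ s)) ≤ C * m := by linarith
      have := le_of_mul_le_mul_left h5 (by linarith)
      linarith
    · have : 2 * ℓ ^ s ≤ K * ℓ ^ s := by
        gcongr; rw [hK]; linarith
      linarith
    · have e2 : (ℓ ^ s) ^ (-β) * ℓ ^ (k + s * β - κ) = ℓ ^ k / ℓ ^ κ := by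
        rw [← Real.rpow_mul hℓ0.le, ← Real.rpow_add hℓ0, ← Real.rpow_sub hℓ0]; congr 1; ring
      have hp : 0 < (ℓ ^ s) ^ (-β) := Real.rpow_pos_of_pos hM0 _
      have h5 : 4 * C * Λ * ℓ ^ (k + s * β - κ) ≤ 1 := by
        refine le_trans ?_ h3
        gcongr; rw [hK]; linarith
      have h6 : 4 * C * Λ * (ℓ ^ k / ℓ ^ κ) ≤ (ℓ ^ s) ^ (-β) := by
        rw [← e2]; nlinarith
      have h7 : 4 * C * Λ * ℓ ^ k ≤ ℓ ^ κ * (ℓ ^ s) ^ (-β) := by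
        have := mul_le_mul_of_nonneg_left h6 hv0.le
        refine le_trans (le_of_eq ?_) this
        field_simp
      have h8 : ℓ ^ κ * (ℓ ^ s) ^ (-β) ≤ C * m * (ℓ ^ s) ^ (-β) := by
        gcongr; linarith
      have h9 : C * (Λ * ℓ ^ k) ≤ C * (m / 4 * (ℓ ^ s) ^ (-β)) := by linarith
      exact le_of_mul_le_mul_left h9 (by linarith)
    · rw [hdiv, le_div_iff₀ h4, mul_comm]
      refine le_trans ?_ hKM
      gcongr; rw [hK]; linarith
  · have hM0 : 0 < u ^ T := Real.rpow_pos_of_pos hu _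
    have hu1 : u ≤ 1 := hβc.le.trans hv1
    have hKu : K * u ≤ 1 := by nlinarith
    have huT : u ^ T ≤ u ^ 2 := by
      rw [← Real.rpow_two]
      exact Real.rpow_le_rpow_of_exponent_ge hu hu1 hT
    have hmC : u ≤ C * m := by
      rwa [div_le_iff₀' (by linarith)] at hm
    have hKM : K * u ^ T ≤ u := by nlinarith
    refine ⟨hM0, ?_, ?_, ?_, ?_⟩
    · have : 2 * C * N0 * u ^ T ≤ K * u ^ T := by
        gcongr; rw [hK]; linarith
      have h5 : C * (2 * (N0 * u ^ T)) ≤ C * m := by linarith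
      have := le_of_mul_le_mul_left h5 (by linarith)
      linarith
    · have : 2 * u ^ T ≤ K * u ^ T := by
        gcongr; rw [hK]; linarith
      linarith
    · have e2 : u ^ (-2 : ℝ) ≤ (u ^ T) ^ (-β) := by
        rw [← Real.rpow_mul hu.le]
        exact Real.rpow_le_rpow_of_exponent_ge hu hu1 (by linarith)
      have e3 : u ^ (-2 : ℝ) = (u ^ 2)⁻¹ := by
        rw [Real.rpow_neg hu.le, Real.rpow_two]
      have h5 : 4 * C * Λ * u ≤ 1 := by
        refine le_trans ?_ hKu
        gcongr; rw [hK]; linarith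
      have h6 : 4 * C * Λ ≤ u * u ^ (-2 : ℝ) := by
        rw [e3]
        have : u * (u ^ 2)⁻¹ = 1 / u := by field_simp
        rw [this, le_div_iff₀ hu]
        exact h5
      have h7 : u * u ^ (-2 : ℝ) ≤ C * m * (u ^ T) ^ (-β) := by
        have : 0 ≤ u ^ (-2 : ℝ) := by positivity
        gcongr
        linarith
      have h9 : C * Λ ≤ C * (m / 4 * (u ^ T) ^ (-β)) := by linarith
      have h10 := le_of_mul_le_mul_left h9 (by linarith)
      nlinarith
    · rw [hdiv, le_div_iff₀ h4, mul_comm]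
      have : 4 ^ κ * u ^ T ≤ K * u ^ T := by
        gcongr; rw [hK]; linarith
      linarith

/-- state of a piece -/
def St (μ : Set X → ℝ) (κ T : ℝ) (P : Set X) (ℓ : ℝ) : Prop :=
  0 < μ P ∧ (ℓ ^ κ ≤ μ P ∨ ∀ x ∈ P, μ (P ∩ Metric.closedBall x ℓ) ≤ μ P ^ T)

lemma step_one {s C : ℝ} {μ : Set X → ℝ} (hμ : Good s C μ) {T : ℝ} {ℓ : ℝ}
    {P : Set X} {M : ℝ} (hM : ∀ x ∈ P, μ (P ∩ Metric.closedBall x ℓ) ≤ M) (hM0 : 0 ≤ M) (N0 : ℕ)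
    (hN0 : N0 * M ≤ μ P / 2)
    (hcon : ∀ P' ⊆ P, μ P / 2 ≤ μ P' → ∃ x ∈ P', ∃ S ⊆ P' ∩ Metric.closedBall x (ℓ / 2), 0 < μ S ∧
      ∀ x' ∈ S, μ (S ∩ Metric.closedBall x' (ℓ / 8)) ≤ μ S ^ T) :
    ∃ (x : ℕ → X) (B : ℕ → Set X), ∀ i < N0, x i ∈ P ∧ B i ⊆ P ∩ Metric.closedBall (x i) (ℓ / 2) ∧
      0 < μ (B i) ∧ (∀ x' ∈ B i, μ (B i ∩ Metric.closedBall x' (ℓ / 8)) ≤ μ (B i) ^ T) ∧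
      ∀ j < i, ∀ b ∈ B i, ℓ < dist b (x j) := by
  have hne : Nonempty X := by
    obtain ⟨x, -⟩ := hcon P le_rfl (by linarith [hμ.nonneg P])
    exact ⟨x⟩
  suffices h : ∀ n ≤ N0, ∃ (x : ℕ → X) (B : ℕ → Set X), ∀ i < n, x i ∈ P ∧
      B i ⊆ P ∩ Metric.closedBall (x i) (ℓ / 2) ∧
      0 < μ (B i) ∧ (∀ x' ∈ B i, μ (B i ∩ Metric.closedBall x' (ℓ / 8)) ≤ μ (B i) ^ T) ∧
      ∀ j < i, ∀ b ∈ B i, ℓ < dist b (x j) from h N0 le_rfl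
  intro n
  induction n with
  | zero => intro _; exact ⟨fun _ => hne.some, fun _ => ∅, fun i hi => absurd hi (by omega)⟩
  | succ n ih =>
    intro hn
    obtain ⟨x, B, hxB⟩ := ih (by omega)
    have hrem : ∀ j ≤ n, μ P ≤ μ (P \ ⋃ i ∈ Finset.range j, Metric.closedBall (x i) ℓ) + j * M := by
      intro j
      induction j with
      | zero => intro _; simp
      | succ j ihj =>
        intro hj
        have h1 := ihj (by omega)
        have h2 : μ (P \ ⋃ i ∈ Finset.range j, Metric.closedBall (x i) ℓ) ≤
            μ (P \ ⋃ i ∈ Finset.range (j + 1), Metric.closedBall (x i) ℓ) +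
            μ (P ∩ Metric.closedBall (x j) ℓ) := by
          refine (hμ.mono _ _ ?_).trans (hμ.union _ _)
          rintro y ⟨hyP, hy⟩
          by_cases hyj : y ∈ Metric.closedBall (x j) ℓ
          · exact Or.inr ⟨hyP, hyj⟩
          · left
            refine ⟨hyP, fun h => ?_⟩
            simp only [mem_iUnion, Finset.mem_range, exists_prop] at h hy
            obtain ⟨i, hi, hyi⟩ := h
            rcases Nat.lt_succ_iff_lt_or_eq.1 hi with h | rfl
            · exact hy ⟨i, h, hyi⟩
            · exact hyj hyi
        have h3 := hM (x j) (hxB j (by omega)).1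
        push_cast
        linarith
    have hrn := hrem n le_rfl
    have hnM : n * M ≤ N0 * M := by
      gcongr; omega
    obtain ⟨x', hx', S, hS, hS0, hSs⟩ := hcon _ (sdiff_subset (s := P) (t := ⋃ i ∈ Finset.range n, Metric.closedBall (x i) ℓ)) (by linarith)
    refine ⟨fun i => if i < n then x i else x', fun i => if i < n then B i else S, fun i hi => ?_⟩
    rcases Nat.lt_succ_iff_lt_or_eq.1 hi with h | rfl
    · simp only [h, if_true]
      obtain ⟨h1, h2, h3, h4, h5⟩ := hxB i h
      refine ⟨h1, h2, h3, h4, fun j hj b hb => ?_⟩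
      rw [if_pos (by omega)]
      exact h5 j hj b hb
    · simp only [lt_irrefl, if_false]
      refine ⟨hx'.1, hS.trans (inter_subset_inter_left _ sdiff_subset), hS0, hSs, fun j hj b hb => ?_⟩
      rw [if_pos hj]
      have := (hS hb).1.2
      simp only [mem_iUnion, Finset.mem_range, exists_prop, not_exists, not_and] at this
      have := this j hj
      rw [Metric.mem_closedBall, not_le] at this
      exact this

theorem split [TopologicalSpace.SeparableSpace X] {s C : ℝ} {μ : Set X → ℝ} (hμ : Good s C μ)
    (hC : 1 ≤ C) {k : ℕ} (hk : 0 < k) (hks : (k : ℝ) < s) :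
    ∃ κ > 0, ∃ T : ℝ, ∃ c > 0, ∃ n0 : ℕ, ∀ n ≥ n0, ∀ P P' : Set X, St μ κ T P ((1 / 2) ^ n) →
      P' ⊆ P → μ P / C ≤ μ P' → ∃ (N : ℕ) (Q : ℕ → Set X) (lev : ℕ → ℕ),
        (∀ i < N, Q i ⊆ P' ∧ (∀ x ∈ Q i, ∀ y ∈ Q i, dist x y ≤ (1 / 2) ^ n) ∧
          St μ κ T (Q i) ((1 / 2) ^ lev i) ∧ n < lev i) ∧
        (∀ i < N, ∀ j < i, ∀ x ∈ Q i, ∀ y ∈ Q j, c * (1 / 2) ^ n ≤ dist x y) ∧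
        ((1 / 2 : ℝ) ^ n) ^ k ≤ ∑ i ∈ Finset.range N, ((1 / 2 : ℝ) ^ lev i) ^ k := by
  have hk' : (0 : ℝ) < k := by exact_mod_cast hk
  set κ : ℝ := (k + s) / 2 with hκdef
  have hkκ : (k : ℝ) < κ := by rw [hκdef]; linarith
  have hκs : κ < s := by rw [hκdef]; linarith
  have hκ : 0 < κ := hk'.trans hkκ
  have hs : 0 < s := hκ.trans hκs
  obtain ⟨β, hβ1, hβ2⟩ := exists_between (show (κ - k) / s < (κ - k) / κ from
    div_lt_div_of_pos_left (by linarith) hκ hκs)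
  have hβ0 : 0 < β := lt_trans (div_pos (by linarith) hs) hβ1
  have hβs : κ - k < s * β := by rwa [div_lt_iff₀' hs] at hβ1
  set θ : ℝ := k / κ with hθ
  have hθ0 : 0 < θ := div_pos hk' hκ
  have hβθ : β < 1 - θ := by
    refine hβ2.trans_eq ?_
    rw [hθ]; field_simp
  set θ' : ℝ := θ / (1 - β) with hθ'
  have h1β : 0 < 1 - β := by linarith
  have hθ'0 : 0 < θ' := div_pos hθ0 h1β
  have hθ'1 : θ' < 1 := by rw [hθ', div_lt_one h1β]; linarith
  set T : ℝ := max 2 (2 / β) with hTdef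
  have hT : 2 ≤ T := le_max_left _ _
  have hTβ : 2 ≤ T * β := by
    have : 2 / β ≤ T := le_max_right _ _
    rwa [div_le_iff₀ hβ0] at this
  obtain ⟨D, hD⟩ := pow_unbounded_of_one_lt (2 * T) (show 1 < 1 / θ' by rw [lt_div_iff₀ hθ'0]; linarith)
  have hD0 : D ≠ 0 := by
    rintro rfl
    simp at hD; linarith
  have hDpos : (0 : ℝ) < D := by positivity
  set Nn : ℕ := (2 ^ k) ^ 3 with hNn
  have hnum := numerics (k := (k : ℝ)) (N0 := (Nn : ℝ)) (Λ := (2 : ℝ) ^ k) hk' hkκ hκs hβ0 hβs hT hTβ hC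
    (by exact_mod_cast Nat.one_le_two_pow.trans (Nat.le_self_pow (by norm_num) _)) (one_le_pow₀ (by norm_num))
  have htend : Tendsto (fun n : ℕ => (1 / 2 : ℝ) ^ n) atTop (𝓝[>] 0) :=
    tendsto_pow_atTop_nhdsWithin_zero_of_lt_one (by norm_num) (by norm_num)
  obtain ⟨n0, hn0⟩ := eventually_atTop.1 (htend.eventually hnum)
  refine ⟨κ, hκ, T, min (1 / 2) (3 / (8 * D)), lt_min (by norm_num) (by positivity), n0, ?_⟩
  intro n hn P P' hSt hP'P hm
  obtain ⟨hℓ0, hℓ1, hfacts⟩ := hn0 n hn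
  set ℓ : ℝ := (1 / 2) ^ n with hℓ
  obtain ⟨hu, hor⟩ := hSt
  obtain ⟨M, hMor, hMP⟩ : ∃ M, ((ℓ ^ κ ≤ μ P ∧ M = ℓ ^ s) ∨ (μ P < ℓ ^ κ ∧ M = μ P ^ T)) ∧
      ∀ x ∈ P', μ (P' ∩ Metric.closedBall x ℓ) ≤ M := by
    by_cases h : ℓ ^ κ ≤ μ P
    · exact ⟨_, Or.inl ⟨h, rfl⟩, fun x _ => hμ.ball _ x ℓ hℓ0 hℓ1 inter_subset_right⟩
    · refine ⟨_, Or.inr ⟨not_le.1 h, rfl⟩, fun x hx => ?_⟩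
      exact (hμ.mono _ _ (inter_subset_inter_left _ hP'P)).trans ((hor.resolve_left h) x (hP'P hx))
  obtain ⟨hM0, hF1, hF2, hF3, hF4⟩ := hfacts (μ P) (μ P') M hu hm hMor
  have hmpos : 0 < μ P' := lt_of_lt_of_le (by positivity) hm
  have hcle1 : min (1 / 2 : ℝ) (3 / (8 * D)) * ℓ ≤ ℓ / 2 := by
    have : min (1 / 2 : ℝ) (3 / (8 * D)) * ℓ ≤ 1 / 2 * ℓ :=
      mul_le_mul_of_nonneg_right (min_le_left _ _) hℓ0.le
    linarith
  have hcle2 : min (1 / 2 : ℝ) (3 / (8 * D)) * ℓ ≤ 3 * ℓ / (8 * D) := by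
    have : min (1 / 2 : ℝ) (3 / (8 * D)) * ℓ ≤ 3 / (8 * D) * ℓ :=
      mul_le_mul_of_nonneg_right (min_le_right _ _) hℓ0.le
    refine this.trans_eq ?_
    ring
  by_cases hcase : ∀ P'' ⊆ P', μ P' / 2 ≤ μ P'' → ∃ x ∈ P'', ∃ S ⊆ P'' ∩ Metric.closedBall x (ℓ / 2), 0 < μ S ∧
      ∀ x' ∈ S, μ (S ∩ Metric.closedBall x' (ℓ / 8)) ≤ μ S ^ T
  · obtain ⟨x, B, hxB⟩ := step_one hμ hMP hM0.le Nn hF1 hcase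
    refine ⟨Nn, B, fun _ => n + 3, ?_, ?_, ?_⟩
    · intro i hi
      obtain ⟨h1, h2, h3, h4, h5⟩ := hxB i hi
      refine ⟨h2.trans inter_subset_left, ?_, ⟨h3, Or.inr ?_⟩, Nat.lt_add_of_pos_right (by norm_num)⟩
      · intro y hy z hz
        have hy' := (h2 hy).2
        have hz' := (h2 hz).2
        rw [Metric.mem_closedBall] at hy' hz'
        have := dist_triangle_right y z (x i)
        linarith
      · have : (1 / 2 : ℝ) ^ (n + 3) = ℓ / 8 := by rw [pow_add, ← hℓ]; ring
        rw [this]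
        exact h4
    · intro i hi j hj y hy z hz
      obtain ⟨h1, h2, h3, h4, h5⟩ := hxB i hi
      have hy' := h5 j hj y hy
      have hz' := ((hxB j (hj.trans hi)).2.1 hz).2
      rw [Metric.mem_closedBall] at hz'
      have := dist_triangle y z (x j)
      linarith
    · rw [Finset.sum_const, Finset.card_range, nsmul_eq_mul, hNn, pow_add, mul_pow, ← hℓ]
      have : (((2 ^ k) ^ 3 : ℕ) : ℝ) * (ℓ ^ k * ((1 / 2) ^ 3) ^ k) = ℓ ^ k := by
        push_cast
        have e : ((2 : ℝ) ^ k) ^ 3 = (2 ^ 3) ^ k := by rw [← pow_mul, ← pow_mul, mul_comm]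
        rw [e, mul_left_comm, ← mul_pow]
        norm_num
      rw [this]
  · push Not at hcase
    obtain ⟨P'', hP'', hmP'', hns⟩ := hcase
    have hpick : ∀ Z : Set X, Z ⊆ P'' → 0 < μ Z → ∃ x ∈ Z, ∃ ρ : ℝ, ρ ≤ ℓ / 2 ∧
        0 < μ (Z ∩ Metric.closedBall x (ρ - 3 * ℓ / (8 * D))) ∧
        μ (Z ∩ Metric.closedBall x ρ) ≤ μ (Z ∩ Metric.closedBall x (ρ - 3 * ℓ / (8 * D))) ^ θ' ∧
        ∀ y ∈ Z, (μ (Z ∩ Metric.closedBall y (ℓ / 2)) / 2) ^ T ≤ μ (Z ∩ Metric.closedBall x ρ) := by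
      intro Z hZ hZ0
      refine pick hμ hT hθ'0 hD.le hℓ0 hZ0 ?_ ?_
      · intro x hx
        exact ((hμ.mono _ _ (inter_subset_inter_left _ (hZ.trans hP''))).trans (hMP x (hP'' (hZ hx)))).trans hF2
      · intro x hx S hS hS0
        exact hns x (hZ hx) S (hS.trans (inter_subset_inter_left _ hZ)) hS0
    have hP''0 : 0 < μ P'' := by linarith
    obtain ⟨xx, hxx⟩ : ∃ xx : X, True := by
      obtain ⟨x, -⟩ := hpick P'' le_rfl hP''0
      exact ⟨x, trivial⟩
    haveI : Nonempty X := ⟨xx⟩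
    choose! x hxZ ρ hρ1 hρ2 hρ3 hρ4 using hpick
    obtain ⟨N, Z, hZP, hZs, hZpos, hsum⟩ := exhaust hμ hP''0 (half_pos hℓ0) (by linarith : 0 < T)
      (fun Z => Z ∩ Metric.closedBall (x Z) (ρ Z)) (fun Z hZ hZ0 => hρ4 Z hZ hZ0)
    have hanti : Antitone Z := antitone_nat_of_succ_le fun i => by rw [hZs]; exact sdiff_subset
    set δ := 3 * ℓ / (8 * D) with hδ
    have hδ0 : 0 < δ := by positivity
    set Q : ℕ → Set X := fun i => Z i ∩ Metric.closedBall (x (Z i)) (ρ (Z i) - δ) with hQ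
    have hQpos : ∀ i < N, 0 < μ (Q i) := fun i hi => hρ2 _ (hZP i) (hZpos i hi)
    have hQM : ∀ i < N, μ (Z i ∩ Metric.closedBall (x (Z i)) (ρ (Z i))) ≤ M := by
      intro i hi
      have hh := hρ1 _ (hZP i) (hZpos i hi)
      refine (hμ.mono _ _ (inter_subset_inter ((hZP i).trans hP'') (Metric.closedBall_subset_closedBall (by linarith)))).trans
        (hMP (x (Z i)) (hP'' (hZP i (hxZ _ (hZP i) (hZpos i hi)))))
    have hQQ : ∀ i, μ (Q i) ≤ μ (Z i ∩ Metric.closedBall (x (Z i)) (ρ (Z i))) := fun i =>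
      hμ.mono _ _ (inter_subset_inter_right _ (Metric.closedBall_subset_closedBall (by linarith)))
    have hlev : ∀ i, ∃ l : ℕ, i < N → (1 / 2 : ℝ) ^ l ≤ μ (Q i) ^ (1 / κ) ∧
        μ (Q i) ^ (1 / κ) ≤ 2 * (1 / 2 : ℝ) ^ l ∧ n < l := by
      intro i
      by_cases hi : i < N
      · have h1 : μ (Q i) ≤ (ℓ / 4) ^ κ := ((hQQ i).trans (hQM i hi)).trans hF4
        have h2 : μ (Q i) ^ (1 / κ) ≤ ℓ / 4 := by
          have := Real.rpow_le_rpow (hμ.nonneg _) h1 (show 0 ≤ 1 / κ by positivity)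
          rwa [← Real.rpow_mul (by positivity), mul_one_div_cancel hκ.ne', Real.rpow_one] at this
        have h3 : 0 < μ (Q i) ^ (1 / κ) := Real.rpow_pos_of_pos (hQpos i hi) _
        obtain ⟨l, hl1, hl2⟩ := exists_nat_pow_near_of_lt_one h3 (h2.trans (by linarith)) (y := (1 / 2 : ℝ)) (by norm_num) (by norm_num)
        refine ⟨l + 1, fun _ => ⟨hl1.le, ?_, ?_⟩⟩
        · rw [pow_succ]; linarith
        · by_contra! hc
          have : (1 / 2 : ℝ) ^ n ≤ (1 / 2) ^ (l + 1) := pow_le_pow_of_le_one (by norm_num) (by norm_num) hc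
          rw [← hℓ] at this
          linarith
      · exact ⟨0, fun h => absurd h hi⟩
    choose lev hlev using hlev
    refine ⟨N, Q, lev, ?_, ?_, ?_⟩
    · intro i hi
      obtain ⟨h1, h2, h3⟩ := hlev i hi
      refine ⟨inter_subset_left.trans ((hZP i).trans hP''), ?_, ⟨hQpos i hi, Or.inl ?_⟩, h3⟩
      · intro y hy z hz
        have hy' := hy.2
        have hz' := hz.2
        rw [Metric.mem_closedBall] at hy' hz'
        have := dist_triangle_right y z (x (Z i))
        have := hρ1 _ (hZP i) (hZpos i hi)
        linarith
      · have := Real.rpow_le_rpow (by positivity) h1 hκ.le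
        rwa [← Real.rpow_mul (hμ.nonneg _), one_div_mul_cancel hκ.ne', Real.rpow_one] at this
    · intro i hi j hj y hy z hz
      have hy' : y ∈ Z (j + 1) := hanti hj hy.1
      rw [hZs] at hy'
      have hyn : ρ (Z j) < dist y (x (Z j)) := by
        by_contra! hc
        exact hy'.2 ⟨hy'.1, hc⟩
      have hz' := hz.2
      rw [Metric.mem_closedBall] at hz'
      have := dist_triangle y z (x (Z j))
      linarith
    · have hΛ : (0 : ℝ) < 2 ^ k := by positivity
      have hterm : ∀ i ∈ Finset.range N, μ (Z i ∩ Metric.closedBall (x (Z i)) (ρ (Z i))) * M ^ (-β) ≤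
          2 ^ k * ((1 / 2 : ℝ) ^ lev i) ^ k := by
        intro i hi
        have hi := Finset.mem_range.1 hi
        obtain ⟨h1, h2, h3⟩ := hlev i hi
        set a := μ (Z i ∩ Metric.closedBall (x (Z i)) (ρ (Z i))) with ha
        have ha0 : 0 < a := (hQpos i hi).trans_le (hQQ i)
        have haQ : a ≤ μ (Q i) ^ θ' := hρ3 _ (hZP i) (hZpos i hi)
        calc a * M ^ (-β) ≤ a * a ^ (-β) := by
              refine mul_le_mul_of_nonneg_left ?_ ha0.le
              exact Real.rpow_le_rpow_of_nonpos ha0 (hQM i hi) (by linarith)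
          _ = a ^ (1 - β) := by
              rw [sub_eq_add_neg, Real.rpow_add ha0, Real.rpow_one]
          _ ≤ (μ (Q i) ^ θ') ^ (1 - β) := Real.rpow_le_rpow ha0.le haQ h1β.le
          _ = (μ (Q i) ^ (1 / κ)) ^ (k : ℝ) := by
              rw [← Real.rpow_mul (hμ.nonneg _), ← Real.rpow_mul (hμ.nonneg _)]
              congr 1
              rw [hθ', hθ]; field_simp
          _ ≤ (2 * (1 / 2 : ℝ) ^ lev i) ^ (k : ℝ) :=
              Real.rpow_le_rpow (Real.rpow_nonneg (hμ.nonneg _) _) h2 hk'.le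
          _ = _ := by rw [Real.rpow_natCast, mul_pow]
      have h5 := Finset.sum_le_sum hterm
      rw [← Finset.sum_mul, ← Finset.mul_sum] at h5
      have h6 : μ P' / 4 * M ^ (-β) ≤ (∑ i ∈ Finset.range N, μ (Z i ∩ Metric.closedBall (x (Z i)) (ρ (Z i)))) * M ^ (-β) := by
        refine mul_le_mul_of_nonneg_right ?_ (Real.rpow_nonneg hM0.le _)
        linarith
      rw [Real.rpow_natCast] at hF3
      exact le_of_mul_le_mul_left ((hF3.trans h6).trans h5) hΛ

end Split2

section Kraft

lemma exact_extract (b m : ℕ) (hb : 1 ≤ b) (F : Finset ℕ) (e : ℕ → ℕ) (he : ∀ i ∈ F, e i ≤ m)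
    (h : b ^ m ≤ ∑ i ∈ F, b ^ e i) : ∃ G ⊆ F, ∑ i ∈ G, b ^ e i = b ^ m := by
  classical
  obtain ⟨G, hG, hmin⟩ := Finset.exists_min_image (F.powerset.filter fun G => b ^ m ≤ ∑ i ∈ G, b ^ e i)
    (fun G => G.card) ⟨F, by simp [h]⟩
  simp only [Finset.mem_filter, Finset.mem_powerset] at hG hmin
  refine ⟨G, hG.1, ?_⟩
  have hGne : G.Nonempty := by
    rw [Finset.nonempty_iff_ne_empty]
    rintro rfl
    have := hG.2
    have h2 : 0 < b ^ m := by positivity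
    simp at this
    omega
  obtain ⟨i, hiG, hi⟩ := Finset.exists_min_image G e hGne
  have hsum := Finset.add_sum_erase G (fun i => b ^ e i) hiG
  have hlt : ∑ l ∈ G.erase i, b ^ e l < b ^ m := by
    by_contra! hc
    have := hmin (G.erase i) ⟨(Finset.erase_subset _ _).trans hG.1, hc⟩
    have h2 := Finset.card_erase_lt_of_mem hiG
    omega
  have hd1 : b ^ e i ∣ ∑ l ∈ G, b ^ e l := Finset.dvd_sum fun l hl => pow_dvd_pow b (hi l hl)
  have hd2 : b ^ e i ∣ b ^ m := pow_dvd_pow b (he i (hG.1 hiG))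
  have hd3 := Nat.dvd_sub hd1 hd2
  by_contra hne
  have := Nat.le_of_dvd (by omega) hd3
  omega

lemma partition_extract {ι : Type*} [DecidableEq ι] (b m : ℕ) (hb : 1 ≤ b) (e : ℕ → ℕ) (J : Finset ι) :
    ∀ F : Finset ℕ, (∀ i ∈ F, e i ≤ m) → J.card * b ^ m ≤ ∑ i ∈ F, b ^ e i →
    ∃ G : ι → Finset ℕ, (∀ l, G l ⊆ F) ∧ (∀ l ∈ J, b ^ m ≤ ∑ i ∈ G l, b ^ e i) ∧
      ∀ l ∈ J, ∀ l' ∈ J, l ≠ l' → Disjoint (G l) (G l') := by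
  induction J using Finset.induction_on with
  | empty => intro F _ _; exact ⟨fun _ => ∅, by simp, by simp, by simp⟩
  | insert l0 J hl0 ih =>
    intro F he h
    rw [Finset.card_insert_of_notMem hl0, add_mul, one_mul] at h
    obtain ⟨G0, hG0, hG0s⟩ := exact_extract b m hb F e he (le_trans (Nat.le_add_left _ _) h)
    have hs := Finset.sum_sdiff (f := fun i => b ^ e i) hG0
    obtain ⟨G, hG1, hG2, hG3⟩ := ih (F \ G0) (fun i hi => he i (Finset.sdiff_subset hi)) (by omega)
    have hdis : ∀ l, Disjoint G0 (G l) := fun l =>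
      Finset.disjoint_of_subset_right (hG1 l) Finset.disjoint_sdiff
    have hne : ∀ l ∈ J, l ≠ l0 := fun l hl h => hl0 (h ▸ hl)
    refine ⟨fun l => if l = l0 then G0 else G l, ?_, ?_, ?_⟩
    · intro l
      by_cases hl : l = l0
      · simp [hl, hG0]
      · simp only [hl, if_false]; exact (hG1 l).trans Finset.sdiff_subset
    · intro l hl
      rcases Finset.mem_insert.1 hl with rfl | hl
      · simp [hG0s]
      · simp only [hne l hl, if_false]; exact hG2 l hl
    · intro l hl l' hl' hll
      rcases Finset.mem_insert.1 hl with h1 | h1 <;> rcases Finset.mem_insert.1 hl' with h2 | h2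
      · exact absurd (h1.trans h2.symm) hll
      · simp only [h1, if_true, hne l' h2, if_false]; exact hdis l'
      · simp only [h2, if_true, hne l h1, if_false]; exact (hdis l).symm
      · simp only [hne l' h2, hne l h1, if_false]; exact hG3 l h1 l' h2 hll

lemma kraft_nat {ι : Type*} [Fintype ι] [Nonempty ι] (m : ℕ) : ∀ (F : Finset ℕ) (d : ℕ → ℕ),
    (∀ i ∈ F, d i ≤ m) → Fintype.card ι ^ m ≤ ∑ i ∈ F, Fintype.card ι ^ (m - d i) →
    ∃ dec : (ℕ → ι) → ℕ, (∀ a, dec a ∈ F) ∧ ∀ a a', dec a = dec a' → ∀ j < d (dec a), a j = a' j := by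
  classical
  have hb : 1 ≤ Fintype.card ι := Fintype.card_pos
  induction m with
  | zero =>
    intro F d hd h
    have hF : F.Nonempty := by
      rw [Finset.nonempty_iff_ne_empty]; rintro rfl; simp at h
    obtain ⟨i, hi⟩ := hF
    refine ⟨fun _ => i, fun _ => hi, fun a a' _ j hj => ?_⟩
    have := hd i hi
    simp only at hj
    omega
  | succ m ih =>
    intro F d hd h
    by_cases h0 : ∃ i ∈ F, d i = 0
    · obtain ⟨i, hi, hi0⟩ := h0
      refine ⟨fun _ => i, fun _ => hi, fun a a' _ j hj => ?_⟩
      simp only at hj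
      omega
    · push Not at h0
      obtain ⟨G, hG1, hG2, hG3⟩ := partition_extract (ι := ι) (Fintype.card ι) m hb (fun i => m - (d i - 1)) Finset.univ F
        (fun i _ => Nat.sub_le _ _) (by
          rw [Finset.card_univ, ← pow_succ']
          refine h.trans (le_of_eq (Finset.sum_congr rfl fun i hi => ?_))
          have := h0 i hi
          congr 1; omega)
      choose dec hdec1 hdec2 using fun l : ι => ih (G l) (fun i => d i - 1) (fun i hi => by
        have := hd i (hG1 l hi); omega) (hG2 l (Finset.mem_univ _))
      refine ⟨fun a => dec (a 0) (fun n => a (n + 1)), fun a => hG1 _ (hdec1 _ _), fun a a' haa j hj => ?_⟩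
      simp only at haa hj
      have e0 : a 0 = a' 0 := by
        by_contra hne
        exact Finset.disjoint_left.1 (hG3 _ (Finset.mem_univ _) _ (Finset.mem_univ _) hne)
          (hdec1 (a 0) (fun n => a (n + 1))) (haa ▸ hdec1 (a' 0) (fun n => a' (n + 1)))
      rcases j with _ | j
      · exact e0
      · rw [← e0] at haa
        exact hdec2 (a 0) _ _ haa j (by omega)

lemma kraft {ι : Type*} [Fintype ι] [Nonempty ι] {k : ℕ} (hcard : Fintype.card ι = 2 ^ k) (n N : ℕ)
    (lev : ℕ → ℕ) (hlev : ∀ i < N, n < lev i)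
    (h : ((1 / 2 : ℝ) ^ n) ^ k ≤ ∑ i ∈ Finset.range N, ((1 / 2 : ℝ) ^ lev i) ^ k) :
    ∃ dec : (ℕ → ι) → ℕ, (∀ a, dec a < N) ∧
      ∀ a a', dec a = dec a' → ∀ j < lev (dec a) - n, a j = a' j := by
  set m := (Finset.range N).sup fun i => lev i - n with hm
  have hdm : ∀ i ∈ Finset.range N, lev i - n ≤ m := fun i hi => Finset.le_sup (f := fun i => lev i - n) hi
  obtain ⟨dec, h1, h2⟩ := kraft_nat (ι := ι) m (Finset.range N) (fun i => lev i - n) hdm (by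
    rw [hcard]
    have hpos : (0 : ℝ) < ((1 / 2 : ℝ) ^ n) ^ k := by positivity
    have e : ∑ i ∈ Finset.range N, ((1 / 2 : ℝ) ^ lev i) ^ k * ((2 : ℝ) ^ k) ^ m =
        ((1 / 2 : ℝ) ^ n) ^ k * ∑ i ∈ Finset.range N, ((2 : ℝ) ^ k) ^ (m - (lev i - n)) := by
      rw [Finset.mul_sum]
      refine Finset.sum_congr rfl fun i hi => ?_
      have h3 := hdm i hi
      have h4 := hlev i (Finset.mem_range.1 hi)
      obtain ⟨r, hr⟩ := Nat.exists_eq_add_of_le h3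
      obtain ⟨d, hd⟩ := Nat.exists_eq_add_of_lt h4
      have e1 : lev i - n = d + 1 := by omega
      rw [e1] at hr ⊢
      rw [hr, hd, Nat.add_sub_cancel_left, pow_add ((2 : ℝ) ^ k), add_assoc, pow_add (1 / 2 : ℝ), mul_pow,
        pow_right_comm (2 : ℝ) k (d + 1)]
      have : (((1 : ℝ) / 2) ^ (d + 1)) ^ k * ((2 : ℝ) ^ (d + 1)) ^ k = 1 := by
        rw [← mul_pow, ← mul_pow]; norm_num
      linear_combination (((1 : ℝ) / 2) ^ n) ^ k * ((2 : ℝ) ^ k) ^ r * this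
    have h3 := mul_le_mul_of_nonneg_right h (show (0 : ℝ) ≤ ((2 : ℝ) ^ k) ^ m by positivity)
    rw [Finset.sum_mul, e] at h3
    have h4 := le_of_mul_le_mul_left h3 hpos
    exact_mod_cast h4)
  exact ⟨dec, fun a => Finset.mem_range.1 (h1 a), h2⟩

end Kraft

section Tree

/-- nodes of the tree. -/
structure Piece (X : Type*) where
  S : Set X
  n : ℕ
  j : ℕ
  ms : ℕ → ℕ

variable {X : Type*} [MetricSpace X]

/-- cylinder of bounded sequences. -/
def Cyl (j : ℕ) (ms : ℕ → ℕ) : Set (ℕ → ℕ) := {y | ∀ i < j, y i ≤ ms i}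

/-- valid pieces. -/
def Valid (μ : Set X → ℝ) (κ T : ℝ) (n0 : ℕ) (φ : (ℕ → ℕ) → X) (p : Piece X) : Prop :=
  St μ κ T p.S ((1 / 2) ^ p.n) ∧ n0 ≤ p.n ∧ p.S ⊆ φ '' Cyl p.j p.ms

/-- relation between a piece and its children. -/
structure Child (p q : Piece X) : Prop where
  sub : q.S ⊆ p.S
  diam : ∀ x ∈ q.S, ∀ y ∈ q.S, dist x y ≤ (1 / 2) ^ p.n
  lt : p.n < q.n
  j : q.j = p.j + 1
  ms : ∀ i < p.j, q.ms i = p.ms i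

theorem child [TopologicalSpace.SeparableSpace X] {s C : ℝ} {μ : Set X → ℝ} (hμ : Good s C μ) (hC : 1 ≤ C) {k : ℕ}
    (hk : 0 < k) (hks : (k : ℝ) < s) (φ : (ℕ → ℕ) → X) {ι : Type*} [Fintype ι] [Nonempty ι]
    (hcard : Fintype.card ι = 2 ^ k) :
    ∃ κ > 0, ∃ T : ℝ, ∃ c > 0, ∃ n0 : ℕ, ∀ p : Piece X, Valid μ κ T n0 φ p →
      ∃ dec : (ℕ → ι) → Piece X, (∀ a, Valid μ κ T n0 φ (dec a) ∧ Child p (dec a)) ∧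
        ∀ a a', (dec a = dec a' ∧ ∀ i < (dec a).n - p.n, a i = a' i) ∨
          ∀ x ∈ (dec a).S, ∀ y ∈ (dec a').S, c * (1 / 2) ^ p.n ≤ dist x y := by
  obtain ⟨κ, hκ, T, c, hc, n0, H⟩ := split hμ hC hk hks
  refine ⟨κ, hκ, T, c, hc, n0, ?_⟩
  rintro p ⟨hSt, hn, hcyl⟩
  let P : ℕ → Set X := fun N => p.S ∩ φ '' {y | y ∈ Cyl p.j p.ms ∧ y p.j ≤ N}
  have hPm : Monotone P := by
    intro a b hab
    refine inter_subset_inter_right _ (image_mono ?_)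
    rintro y ⟨h1, h2⟩
    exact ⟨h1, h2.trans hab⟩
  have hPU : ⋃ i, P i = p.S := by
    apply subset_antisymm
    · exact iUnion_subset fun i => inter_subset_left
    · intro x hx
      obtain ⟨y, hy, rfl⟩ := hcyl hx
      exact mem_iUnion.2 ⟨y p.j, hx, y, ⟨hy, le_rfl⟩, rfl⟩
  obtain ⟨M, hM⟩ := hμ.incr P hPm (by rw [hPU]; exact hSt.1)
  rw [hPU] at hM
  obtain ⟨N, Q, lev, hQ1, hQ2, hQ3⟩ := H p.n hn p.S (P M) hSt inter_subset_left hM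
  obtain ⟨dec, hd1, hd2⟩ := kraft (ι := ι) hcard p.n N lev (fun i hi => (hQ1 i hi).2.2.2) hQ3
  refine ⟨fun a => ⟨Q (dec a), lev (dec a), p.j + 1, Function.update p.ms p.j M⟩, fun a => ?_, fun a a' => ?_⟩
  · obtain ⟨h1, h2, h3, h4⟩ := hQ1 _ (hd1 a)
    refine ⟨⟨h3, hn.trans h4.le, ?_⟩, ?_, h2, h4, rfl, ?_⟩
    · refine h1.trans (inter_subset_right.trans (image_mono ?_))
      rintro y ⟨hy1, hy2⟩ i hi
      rcases Nat.lt_succ_iff_lt_or_eq.1 hi with h | h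
      · simp only [Function.update_of_ne h.ne]; exact hy1 i h
      · subst h; simpa using hy2
    · exact h1.trans inter_subset_left
    · intro i hi
      simp only [Function.update_of_ne hi.ne]
  · by_cases h : dec a = dec a'
    · left
      exact ⟨by simp only [h], hd2 a a' h⟩
    · right
      intro x hx y hy
      rcases lt_or_gt_of_ne h with h | h
      · rw [dist_comm]; exact hQ2 _ (hd1 a') _ h _ hy _ hx
      · exact hQ2 _ (hd1 a) _ h _ hx _ hy

/-- tree step -/
def stepMap {ι : Type*} (dec : Piece X → (ℕ → ι) → Piece X) (z : Piece X × (ℕ → ι)) : Piece X × (ℕ → ι) :=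
  (dec z.1 z.2, fun i => z.2 (i + ((dec z.1 z.2).n - z.1.n)))

theorem limit_exists [CompleteSpace X] (φ : (ℕ → ℕ) → X) (hφ : Continuous φ) (p : ℕ → Piece X)
    (h0 : (p 0).j = 0) (hne : ∀ i, (p i).S.Nonempty) (hcyl : ∀ i, (p i).S ⊆ φ '' Cyl (p i).j (p i).ms)
    (hch : ∀ i, Child (p i) (p (i + 1))) : ∃ x ∈ range φ, ∀ i, x ∈ closure (p i).S := by
  have hj : ∀ i, (p i).j = i := by
    intro i; induction i with
    | zero => exact h0
    | succ i ih => rw [(hch i).j, ih]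
  have hn : ∀ i, i ≤ (p i).n := by
    intro i; induction i with
    | zero => simp
    | succ i ih => have := (hch i).lt; omega
  have hanti : Antitone fun i => (p i).S := antitone_nat_of_succ_le fun i => (hch i).sub
  have hms : ∀ l i, l + 1 ≤ i → (p i).ms l = (p (l + 1)).ms l := by
    intro l i hi
    induction i, hi using Nat.le_induction with
    | base => rfl
    | succ i hi ih => rw [(hch i).ms l (by rw [hj]; omega), ih]
  have : ∀ i, ∃ y ∈ Cyl (p i).j (p i).ms, φ y ∈ (p i).S := by
    intro i
    obtain ⟨x, hx⟩ := hne i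
    obtain ⟨y, hy, rfl⟩ := hcyl i hx
    exact ⟨y, hy, hx⟩
  choose y hy1 hy2 using this
  have hcau : CauchySeq fun i => φ (y (i + 1)) := by
    refine cauchySeq_of_le_tendsto_0 (fun i => (1 / 2 : ℝ) ^ i) ?_ (tendsto_pow_atTop_nhds_zero_of_lt_one (by norm_num) (by norm_num))
    intro a b N ha hb
    refine ((hch N).diam _ (hanti (show N + 1 ≤ a + 1 by omega) (hy2 _)) _ (hanti (show N + 1 ≤ b + 1 by omega) (hy2 _))).trans ?_
    exact pow_le_pow_of_le_one (by norm_num) (by norm_num) (hn N)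
  obtain ⟨x, hx⟩ := cauchySeq_tendsto_of_complete hcau
  refine ⟨x, ?_, fun i => ?_⟩
  · let B : ℕ → ℕ := fun l => max ((p (l + 1)).ms l) ((Finset.range (l + 1)).sup fun i => y i l)
    have hK : IsCompact (Set.pi univ fun l => Set.Iic (B l)) :=
      isCompact_univ_pi fun l => (Set.finite_Iic _).isCompact
    obtain ⟨w, -, g, hg, hw⟩ := hK.tendsto_subseq (x := fun i => y (i + 1)) (fun i => by
      intro l _
      by_cases h : l + 1 ≤ i + 1
      · have := hy1 (i + 1) l (by rw [hj]; omega)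
        rw [hms l (i + 1) h] at this
        exact this.trans (le_max_left _ _)
      · exact (Finset.le_sup (f := fun i => y i l) (Finset.mem_range.2 (by omega))).trans (le_max_right _ _))
    have h1 := (hφ.tendsto w).comp hw
    have h2 := hx.comp hg.tendsto_atTop
    exact ⟨w, tendsto_nhds_unique h1 h2⟩
  · refine mem_closure_of_tendsto hx ?_
    filter_upwards [eventually_ge_atTop i] with l hl
    exact hanti (show i ≤ l + 1 by omega) (hy2 _)

lemma closure_sep {S S' : Set X} {r : ℝ} (h : ∀ x ∈ S, ∀ y ∈ S', r ≤ dist x y) :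
    ∀ x ∈ closure S, ∀ y ∈ closure S', r ≤ dist x y := by
  intro x hx y hy
  have hc : IsClosed {z : X × X | r ≤ dist z.1 z.2} := isClosed_le continuous_const (by fun_prop)
  have : closure (S ×ˢ S') ⊆ {z : X × X | r ≤ dist z.1 z.2} :=
    closure_minimal (fun z hz => h _ hz.1 _ hz.2) hc
  rw [closure_prod_eq] at this
  exact this (show (x, y) ∈ _ from ⟨hx, hy⟩)

theorem separation {ι : Type*} (V : Piece X → Prop) (dec : Piece X → (ℕ → ι) → Piece X) {c : ℝ} (hc : 0 < c)
    (h1 : ∀ p, V p → ∀ a, V (dec p a) ∧ Child p (dec p a))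
    (h2 : ∀ p, V p → ∀ a a', (dec p a = dec p a' ∧ ∀ i < (dec p a).n - p.n, a i = a' i) ∨
          ∀ x ∈ (dec p a).S, ∀ y ∈ (dec p a').S, c * (1 / 2) ^ p.n ≤ dist x y) (n : ℕ) :
    ∀ p, V p → ∀ a a' : ℕ → ι, (∀ i < n, a i = a' i) → a n ≠ a' n → ∀ x x' : X,
      (∀ i, x ∈ closure ((stepMap dec)^[i] (p, a)).1.S) → (∀ i, x' ∈ closure ((stepMap dec)^[i] (p, a')).1.S) →
      c * (1 / 2) ^ (p.n + n) ≤ dist x x' := by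
  induction n using Nat.strong_induction_on with
  | _ n ih =>
    intro p hp a a' haa hne x x' hx hx'
    rcases h2 p hp a a' with ⟨he, hag⟩ | hs
    · set D := (dec p a).n - p.n with hD
      obtain ⟨hV, hch⟩ := h1 p hp a
      have hlt := hch.lt
      have hDn : D ≤ n := by
        by_contra! h
        exact hne (hag n h)
      have := ih (n - D) (by omega) (dec p a) hV (fun i => a (i + D)) (fun i => a' (i + D))
        (fun i hi => haa _ (by omega)) (by simpa [Nat.sub_add_cancel hDn] using hne) x x'
        (fun i => by have := hx (i + 1); rwa [Function.iterate_succ_apply] at this)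
        (fun i => by
          have := hx' (i + 1)
          rw [Function.iterate_succ_apply] at this
          simpa only [stepMap, ← he] using this)
      have e : (dec p a).n + (n - D) = p.n + n := by omega
      rwa [e] at this
    · have := closure_sep hs x (by simpa [stepMap] using hx 1) x' (by simpa [stepMap] using hx' 1)
      refine le_trans ?_ this
      exact mul_le_mul_of_nonneg_left (pow_le_pow_of_le_one (by norm_num) (by norm_num) (by omega)) hc.le

end Tree

section Final

variable {X : Type*} [MetricSpace X]

theorem lipschitz_of_code {k : ℕ} (A : Set X) (x : (ℕ → Fin k → Fin 2) → X) (hxA : ∀ a, x a ∈ A) {c : ℝ}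
    (hc : 0 < c)
    (hsep : ∀ a a' n, (∀ i < n, a i = a' i) → a n ≠ a' n → c * (1 / 2) ^ n ≤ dist (x a) (x a')) :
    ∃ f : X → EuclideanSpace ℝ (Fin k), (∃ L : ℝ≥0, LipschitzWith L f) ∧
      f '' A = {x : EuclideanSpace ℝ (Fin k) | ∀ i, x i ∈ Set.Icc (0 : ℝ) 1} := by
  classical
  have key : ∀ a a' : ℕ → Fin k → Fin 2, a ≠ a' → ∃ n, (∀ i < n, a i = a' i) ∧ a n ≠ a' n := by
    intro a a' h
    obtain h := Function.ne_iff.1 h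
    exact ⟨Nat.find h, fun i hi => not_not.1 (Nat.find_min h hi), Nat.find_spec h⟩
  have hinj : Function.Injective x := by
    intro a a' h
    by_contra hne
    obtain ⟨n, h1, h2⟩ := key a a' hne
    have := hsep a a' n h1 h2
    rw [h, dist_self] at this
    have : 0 < c * (1 / 2) ^ n := by positivity
    linarith
  let z : (ℕ → Fin k → Fin 2) → Fin k → ℝ := fun a i => Real.ofDigits fun m => a m i
  let K : ℝ≥0 := ⟨c⁻¹, by positivity⟩
  have hz : ∀ a a' i, |z a i - z a' i| ≤ K * dist (x a) (x a') := by
    intro a a' i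
    by_cases h : a = a'
    · subst h; simp
    · obtain ⟨n, h1, h2⟩ := key a a' h
      have h3 := hsep a a' n h1 h2
      have h4 : |z a i - z a' i| ≤ (((2 : ℕ) : ℝ) ^ n)⁻¹ :=
        Real.abs_ofDigits_sub_ofDigits_le fun m hm => by rw [h1 m hm]
      refine h4.trans ?_
      change _ ≤ c⁻¹ * _
      rw [le_inv_mul_iff₀ hc]
      simpa using h3
  have hext : ∀ i, ∃ h : X → ℝ, LipschitzWith K h ∧ ∀ a, h (x a) = z a i := by
    intro i
    have hl : LipschitzOnWith K (fun y => z (Function.invFun x y) i) (range x) := by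
      refine LipschitzOnWith.of_dist_le_mul ?_
      rintro _ ⟨a, rfl⟩ _ ⟨a', rfl⟩
      simp only [Function.leftInverse_invFun hinj _, Real.dist_eq]
      exact hz a a' i
    obtain ⟨h, h1, h2⟩ := hl.extend_real
    refine ⟨h, h1, fun a => ?_⟩
    rw [← h2 ⟨a, rfl⟩]
    simp only [Function.leftInverse_invFun hinj _]
  choose h hh1 hh2 using hext
  let g : X → Fin k → ℝ := fun y i => max 0 (min 1 (h i y))
  have hg : LipschitzWith K g := by
    refine LipschitzWith.of_dist_le_mul fun y y' => ?_
    refine (dist_pi_le_iff (by positivity)).2 fun i => ?_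
    exact (((hh1 i).const_min 1).const_max 0).dist_le_mul y y'
  have hgx : ∀ a, g (x a) = z a := by
    intro a
    funext i
    have h0 : 0 ≤ z a i := Real.ofDigits_nonneg _
    have h1 : z a i ≤ 1 := Real.ofDigits_le_one _
    simp only [g, hh2, min_eq_right h1, max_eq_right h0]
  refine ⟨fun y => WithLp.toLp 2 (g y), ⟨_, (PiLp.lipschitzWith_toLp 2 (fun _ : Fin k => ℝ)).comp hg⟩, ?_⟩
  apply subset_antisymm
  · rintro _ ⟨y, -, rfl⟩ i
    exact ⟨le_max_left _ _, max_le zero_le_one (min_le_left _ _)⟩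
  · intro v hv
    have : ∀ i, ∃ d : ℕ → Fin 2, Real.ofDigits d = v i := by
      intro i
      obtain ⟨d, -, hd⟩ := Real.ofDigits_SurjOn (b := 2) (by norm_num) (hv i)
      exact ⟨d, hd⟩
    choose d hd using this
    refine ⟨x fun m i => d i m, hxA _, ?_⟩
    ext i
    simp only [hgx]
    exact hd i

theorem main_aux [CompleteSpace X] [TopologicalSpace.SeparableSpace X]
    (A : Set X) (hA : MeasureTheory.AnalyticSet A) (k : ℕ) (hk : 0 < k) (hdim : (k : ℝ≥0∞) < dimH A) :
    ∃ f : X → EuclideanSpace ℝ (Fin k), (∃ L : ℝ≥0, LipschitzWith L f) ∧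
      f '' A = {x : EuclideanSpace ℝ (Fin k) | ∀ i, x i ∈ Set.Icc (0 : ℝ) 1} := by
  classical
  obtain ⟨s, hks, C, hC, μ, hμ, hA0⟩ := exists_good A k hdim
  rw [MeasureTheory.AnalyticSet] at hA
  rcases hA with rfl | ⟨φ, hφ, hφA⟩
  · rw [hμ.empty] at hA0; exact absurd hA0 (lt_irrefl _)
  obtain ⟨κ, hκ, T, c, hc, n0, H⟩ := child hμ hC hk hks φ (ι := Fin k → Fin 2) (by simp)
  have hex : ∃ n ≥ n0, ((1 / 2 : ℝ) ^ n) ^ κ ≤ μ A := by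
    have h1 : Tendsto (fun n : ℕ => ((1 / 2 : ℝ) ^ n)) atTop (𝓝 0) :=
      tendsto_pow_atTop_nhds_zero_of_lt_one (by norm_num) (by norm_num)
    have h2 := h1.rpow_const (p := κ) (Or.inr hκ.le)
    rw [Real.zero_rpow hκ.ne'] at h2
    obtain ⟨n, h3, h4⟩ := ((eventually_ge_atTop n0).and (h2.eventually_le_const hA0)).exists
    exact ⟨n, h3, h4⟩
  obtain ⟨n1, hn1, hn1A⟩ := hex
  let p0 : Piece X := ⟨A, n1, 0, fun _ => 0⟩
  have hp0 : Valid μ κ T n0 φ p0 := by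
    refine ⟨⟨hA0, Or.inl hn1A⟩, hn1, ?_⟩
    change A ⊆ _
    rw [← hφA]
    rintro _ ⟨y, rfl⟩
    exact ⟨y, fun i hi => absurd hi (Nat.not_lt_zero _), rfl⟩
  have : Nonempty (Piece X) := ⟨p0⟩
  choose! dec hd1 hd2 using H
  have hV : ∀ i a, Valid μ κ T n0 φ ((stepMap dec)^[i] (p0, a)).1 := by
    intro i a
    induction i with
    | zero => exact hp0
    | succ i ih => rw [Function.iterate_succ_apply']; exact (hd1 _ ih _).1
  have hlim : ∀ a : ℕ → Fin k → Fin 2, ∃ x ∈ range φ, ∀ i, x ∈ closure ((stepMap dec)^[i] (p0, a)).1.S := by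
    intro a
    refine limit_exists φ hφ (fun i => ((stepMap dec)^[i] (p0, a)).1) rfl (fun i => ?_) (fun i => (hV i a).2.2) (fun i => ?_)
    · have := (hV i a).1.1
      rw [nonempty_iff_ne_empty]
      intro h0
      simp only [h0, hμ.empty] at this
      exact lt_irrefl _ this
    · simp only [Function.iterate_succ_apply']; exact (hd1 _ (hV i a) _).2
  choose x hx1 hx2 using hlim
  refine lipschitz_of_code A x (fun a => hφA ▸ hx1 a) (c := c * (1 / 2) ^ n1) (by positivity) ?_
  intro a a' n h1 h2
  have := separation (Valid μ κ T n0 φ) dec hc hd1 hd2 n p0 hp0 a a' h1 h2 (x a) (x a') (hx2 a) (hx2 a')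
  rwa [pow_add, ← mul_assoc] at this

end Final

end LipCube

/-- Let `A` be an analytic subset of a complete separable metric space `X` and
let `k` be a positive integer. If the Hausdorff dimension of `A` is strictly larger than `k`,
then there exists a Lipschitz map `f : X → ℝ^k` with `f '' A = [0,1]^k`. -/
theorem analytic_of_dimH_gt_mapsOnto_cube
    {X : Type*} [MetricSpace X] [CompleteSpace X] [TopologicalSpace.SeparableSpace X]
    (A : Set X) (hA : MeasureTheory.AnalyticSet A)
    (k : ℕ) (hk : 0 < k)
    (hdim : (k : ℝ≥0∞) < dimH A) :
    ∃ f : X → EuclideanSpace ℝ (Fin k),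
      (∃ L : ℝ≥0, LipschitzWith L f) ∧
      f '' A = {x : EuclideanSpace ℝ (Fin k) | ∀ i, x i ∈ Set.Icc (0 : ℝ) 1} :=
  LipCube.main_aux A hA k hk hdim
end

section
/- If (X,d) is a nonempty compact monotone metric space with positive s-dimensional Hausdorff measure H^s(X) > 0 for some real s > 0, then there exists an s-Hölder function g : X → ℝ whose image g(X) is a non-degenerate closed interval. -/
open MeasureTheory
open scoped ENNReal NNReal

/-- If `(X,d)` is a nonempty compact monotone metric space with positive
`s`-dimensional Hausdorff measure `H^s(X) > 0` for some real `s > 0`, then there exists an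
`s`-Hölder function `g : X → ℝ` whose image `g(X)` is a non-degenerate closed interval.

Here `X` is monotone if there is a linear order `≤` on `X` and a constant `C` such that
`diam {x : a ≤ x ≤ b} ≤ C * d(a,b)` for all `a ≤ b` in `X`. -/
theorem monotone_space_exists_holder_onto_interval
    {X : Type*} [MetricSpace X] [CompactSpace X] [Nonempty X]
    [MeasurableSpace X] [BorelSpace X]
    (hmon : ∃ (r : LinearOrder X) (C : ℝ),
      ∀ a b : X, r.le a b → Metric.diam {x | r.le a x ∧ r.le x b} ≤ C * dist a b)
    (s : ℝ) (hs : 0 < s)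
    (hpos : 0 < μH[s] (Set.univ : Set X)) :
    ∃ (g : X → ℝ) (K : ℝ),
      (∀ x y : X, |g x - g y| ≤ K * dist x y ^ s) ∧
      ∃ a b : ℝ, a < b ∧ Set.range g = Set.Icc a b := by
  classical
  obtain ⟨r, C, hC⟩ := hmon
  letI := r
  have hC' : ∀ a b : X, a ≤ b → Metric.diam (Set.Icc a b) ≤ C * dist a b := hC
  have hbdd : ∀ A : Set X, Bornology.IsBounded A := fun A =>
    isCompact_univ.isBounded.subset (Set.subset_univ A)
  have key : ∀ a b x : X, a ≤ x → x ≤ b → dist a x ≤ C * dist a b ∧ dist b x ≤ C * dist a b := by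
    intro a b x h1 h2
    have h := hC' a b (h1.trans h2)
    exact ⟨(Metric.dist_le_diam_of_mem (hbdd (Set.Icc a b)) ⟨le_rfl, h1.trans h2⟩ ⟨h1, h2⟩).trans h,
      (Metric.dist_le_diam_of_mem (hbdd (Set.Icc a b)) ⟨h1.trans h2, le_rfl⟩ ⟨h1, h2⟩).trans h⟩
  -- order rays are closed in the metric topology
  haveI i1 : ClosedIicTopology X := ⟨fun a => by
    rw [← isSeqClosed_iff_isClosed]
    intro u x hu hx
    by_contra hlt
    have hlt : a < x := not_le.1 hlt
    have h1 : Filter.Tendsto (fun n => C * dist (u n) x) Filter.atTop (nhds (C * 0)) :=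
      (tendsto_iff_dist_tendsto_zero.1 hx).const_mul C
    have h2 : dist x a ≤ C * 0 :=
      ge_of_tendsto' h1 fun n => (key (u n) x a (hu n) hlt.le).2
    rw [mul_zero] at h2
    exact hlt.ne' (dist_le_zero.1 h2)⟩
  haveI i2 : ClosedIciTopology X := ⟨fun a => by
    rw [← isSeqClosed_iff_isClosed]
    intro u x hu hx
    by_contra hlt
    have hlt : x < a := not_le.1 hlt
    have h1 : Filter.Tendsto (fun n => C * dist (u n) x) Filter.atTop (nhds (C * 0)) :=
      (tendsto_iff_dist_tendsto_zero.1 hx).const_mul C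
    have h2 : dist x a ≤ C * 0 :=
      ge_of_tendsto' h1 fun n => by
        rw [dist_comm (u n)]
        exact (key x (u n) a hlt.le (hu n)).1
    rw [mul_zero] at h2
    exact hlt.ne (dist_le_zero.1 h2)⟩
  -- Hausdorff content
  let m : OuterMeasure X := OuterMeasure.ofFunction (fun A => Metric.ediam A ^ s)
    (by simp [hs])
  have hm : ∀ A, m A ≤ Metric.ediam A ^ s := fun A => OuterMeasure.ofFunction_le A
  have hfin : ∀ A, m A ≠ ⊤ := fun A => ne_top_of_le_ne_top
    (ENNReal.rpow_ne_top_of_nonneg hs.le (hbdd A).ediam_ne_top) (hm A)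
  have hsing : ∀ x : X, m {x} = 0 := fun x => by
    have := hm {x}
    simpa [hs] using this
  have hmpos : m Set.univ ≠ 0 := by
    intro h0
    refine hpos.ne' ?_
    rw [← nonpos_iff_eq_zero, Measure.hausdorffMeasure_apply]
    refine iSup₂_le fun ρ hρ => ?_
    refine ENNReal.le_of_forall_pos_le_add fun ε hε _ => ?_
    rw [zero_add]
    have hpos' : (0 : ℝ≥0∞) < min (ε : ℝ≥0∞) (ρ ^ s) :=
      lt_min (by exact_mod_cast hε) (by
        refine pos_iff_ne_zero.2 fun h => ?_
        rw [ENNReal.rpow_eq_zero_iff] at h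
        rcases h with h | h
        · exact hρ.ne' h.1
        · linarith [h.2])
    have h1 : m Set.univ < min (ε : ℝ≥0∞) (ρ ^ s) := by rw [h0]; exact hpos'
    rw [OuterMeasure.ofFunction_apply] at h1
    simp only [iInf_lt_iff] at h1
    obtain ⟨t, ht, hsum⟩ := h1
    refine (iInf_le _ t).trans ((iInf_le _ ht).trans ((iInf_le _ fun n => ?_).trans ?_))
    · have h2 : Metric.ediam (t n) ^ s ≤ ρ ^ s :=
        (ENNReal.le_tsum n).trans (hsum.le.trans (min_le_right _ _))
      exact (ENNReal.rpow_le_rpow_iff hs).1 h2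
    · refine le_trans (ENNReal.tsum_le_tsum fun n => ?_) (hsum.le.trans (min_le_left _ _))
      exact iSup_le fun _ => le_rfl
  let g : X → ℝ := fun x => (m (Set.Iic x)).toReal
  have gmono : Monotone g := fun x y h =>
    ENNReal.toReal_mono (hfin _) (m.mono (Set.Iic_subset_Iic.2 h))
  have gsub : ∀ (x y : X) (A : Set X), Set.Iic y ⊆ Set.Iic x ∪ A →
      g y ≤ g x + (m A).toReal := by
    intro x y A h
    rw [← ENNReal.toReal_add (hfin _) (hfin _)]
    exact ENNReal.toReal_mono (ENNReal.add_ne_top.2 ⟨hfin _, hfin _⟩)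
      ((m.mono h).trans (measure_union_le _ _))
  have hold1 : ∀ x y : X, x ≤ y → |g x - g y| ≤ (max C 0) ^ s * dist x y ^ s := by
    intro x y h
    have h1 := gsub x y (Set.Icc x y) (fun z hz => by
      rcases le_total z x with h | h
      · exact Or.inl h
      · exact Or.inr ⟨h, hz⟩)
    have h2 : (m (Set.Icc x y)).toReal ≤ Metric.diam (Set.Icc x y) ^ s := by
      have := ENNReal.toReal_mono
        (ENNReal.rpow_ne_top_of_nonneg hs.le (hbdd (Set.Icc x y)).ediam_ne_top) (hm (Set.Icc x y))
      rwa [← ENNReal.toReal_rpow] at this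
    have h3 : Metric.diam (Set.Icc x y) ^ s ≤ (max C 0 * dist x y) ^ s :=
      Real.rpow_le_rpow Metric.diam_nonneg ((hC' x y h).trans
        (mul_le_mul_of_nonneg_right (le_max_left _ _) dist_nonneg)) hs.le
    rw [Real.mul_rpow (le_max_right _ _) dist_nonneg] at h3
    rw [abs_sub_comm, abs_of_nonneg (sub_nonneg.2 (gmono h))]
    linarith
  have hold : ∀ x y : X, |g x - g y| ≤ (max C 0) ^ s * dist x y ^ s := by
    intro x y
    rcases le_total x y with h | h
    · exact hold1 x y h
    · rw [abs_sub_comm, dist_comm]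
      exact hold1 y x h
  have gcont : Continuous g := by
    rw [continuous_iff_continuousAt]
    intro x
    refine tendsto_iff_dist_tendsto_zero.2 ?_
    have hc : Continuous fun y : X => (max C 0) ^ s * dist y x ^ s :=
      continuous_const.mul ((continuous_id.dist continuous_const).rpow_const
        fun _ => Or.inr hs.le)
    have h0 := hc.tendsto x
    simp only [dist_self, Real.zero_rpow hs.ne', mul_zero] at h0
    exact squeeze_zero (fun _ => dist_nonneg) (fun y => hold y x) h0
  obtain ⟨x0, -, hx0⟩ := (isCompact_univ (X := X)).exists_isLeast Set.univ_nonempty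
  obtain ⟨x1, -, hx1⟩ := (isCompact_univ (X := X)).exists_isGreatest Set.univ_nonempty
  have g0 : g x0 = 0 := by
    have : Set.Iic x0 = {x0} := by
      ext z
      exact ⟨fun h => le_antisymm h (hx0 (Set.mem_univ z)), fun h => le_of_eq h⟩
    simp only [g, this, hsing, ENNReal.toReal_zero]
  have g1 : 0 < g x1 := by
    have : Set.Iic x1 = Set.univ := Set.eq_univ_of_forall fun z => hx1 (Set.mem_univ z)
    simp only [g, this]
    exact ENNReal.toReal_pos hmpos (hfin _)
  refine ⟨g, (max C 0) ^ s, hold, g x0, g x1, by rw [g0]; exact g1, ?_⟩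
  refine Set.Subset.antisymm ?_ ?_
  · rintro _ ⟨z, rfl⟩
    exact ⟨gmono (hx0 (Set.mem_univ z)), gmono (hx1 (Set.mem_univ z))⟩
  · rintro c ⟨hc0, hc1⟩
    obtain ⟨a, haA, ha⟩ := ((isClosed_Iic (a := c)).preimage gcont).isCompact.exists_isGreatest
      ⟨x0, hc0⟩
    obtain ⟨b, hbB, hb⟩ := ((isClosed_Ici (a := c)).preimage gcont).isCompact.exists_isLeast
      ⟨x1, hc1⟩
    have haA : g a ≤ c := haA
    have hbB : c ≤ g b := hbB
    refine ⟨a, le_antisymm haA ?_⟩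
    have h1 := gsub a b {b} (fun z hz => by
      rcases le_or_gt z a with h | h
      · exact Or.inl h
      · right
        have hzc : c ≤ g z := by
          by_contra hcon
          exact absurd (ha (show g z ≤ c from (not_le.1 hcon).le)) (not_le.2 h)
        exact le_antisymm hz (hb hzc))
    rw [hsing, ENNReal.toReal_zero, add_zero] at h1
    exact hbB.trans h1
end

section
/- Let X be a nonempty compact monotone metric space and let k be a positive integer. Then X can be mapped onto the k-dimensional cube [0,1]^k by a Lipschitz map if and only if X has positive k-dimensional Hausdorff measure H^k(X) > 0. -/
open MeasureTheory
open scoped ENNReal NNReal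

namespace PeanoAux

/-- One refinement step in coordinate `i` with ternary digit `r`. -/
def stepFn {k : ℕ} (i : Fin k) (r : ℕ) (x : Fin k → ℕ) : Fin k → ℕ :=
  Function.update x i (3 * x i + if Even ((∑ l, x l) + x i) then r else 2 - r)

/-- The discrete Peano path on `3 ^ s` points. -/
def path (k : ℕ) (hk : 0 < k) : ℕ → ℕ → Fin k → ℕ
  | 0, _ => 0
  | s + 1, n => stepFn ⟨s % k, Nat.mod_lt _ hk⟩ (n % 3) (path k hk s (n / 3))

/-- Adjacency of cells with orientation. -/
def AdjCell {k : ℕ} (x y : Fin k → ℕ) : Prop :=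
  ∃ l, (∀ j, j ≠ l → y j = x j) ∧
    ((Even ((∑ j, x j) + x l) ∧ y l = x l + 1) ∨ (¬ Even ((∑ j, x j) + x l) ∧ y l + 1 = x l))

lemma sum_of_agree {k : ℕ} (x y : Fin k → ℕ) (l : Fin k) (h : ∀ j, j ≠ l → y j = x j) :
    (∑ j, y j) + x l = (∑ j, x j) + y l := by
  have h1 := Finset.add_sum_erase Finset.univ x (Finset.mem_univ l)
  have h2 := Finset.add_sum_erase Finset.univ y (Finset.mem_univ l)
  have h3 : ∑ j ∈ Finset.univ.erase l, y j = ∑ j ∈ Finset.univ.erase l, x j :=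
    Finset.sum_congr rfl (fun j hj => h j (Finset.ne_of_mem_erase hj))
  omega

lemma adj_same {k : ℕ} (i : Fin k) (x : Fin k → ℕ) (r : ℕ) (hr : r < 2) :
    AdjCell (stepFn i r x) (stepFn i (r + 1) x) := by
  refine ⟨i, fun j hj => by simp [stepFn, hj], ?_⟩
  have h := sum_of_agree x (stepFn i r x) i (fun j hj => by simp [stepFn, hj])
  have e1 : stepFn i r x i = 3 * x i + if Even ((∑ l, x l) + x i) then r else 2 - r := by
    simp [stepFn]
  have e2 : stepFn i (r+1) x i = 3 * x i + if Even ((∑ l, x l) + x i) then r+1 else 2 - (r+1) := by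
    simp [stepFn]
  by_cases hE : Even ((∑ l, x l) + x i)
  · left
    rw [if_pos hE] at e1 e2
    rw [Nat.even_iff] at *
    omega
  · right
    rw [if_neg hE] at e1 e2
    rw [Nat.even_iff] at *
    omega

lemma adj_next {k : ℕ} (i : Fin k) (x y : Fin k → ℕ) (h : AdjCell x y) :
    AdjCell (stepFn i 2 x) (stepFn i 0 y) := by
  obtain ⟨l, hl, hc⟩ := h
  have hs := sum_of_agree x y l hl
  have hx := sum_of_agree x (stepFn i 2 x) i (fun j hj => by simp [stepFn, hj])
  have e1 : stepFn i 2 x i = 3 * x i + if Even ((∑ l, x l) + x i) then 2 else 0 := by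
    simp [stepFn]
  have e2 : stepFn i 0 y i = 3 * y i + if Even ((∑ l, y l) + y i) then 0 else 2 := by
    simp [stepFn]
  refine ⟨l, fun j hj => ?_, ?_⟩
  · by_cases hji : j = i
    · subst hji
      have := hl j hj
      rw [e1, e2]
      simp only [Nat.even_iff] at *
      split_ifs <;> omega
    · simp [stepFn, hji, hl j hj]
  · by_cases hli : l = i
    · subst hli
      simp only [Nat.even_iff] at *
      split_ifs at e1 e2 <;> omega
    · have a1 : stepFn i 2 x l = x l := by simp [stepFn, hli]
      have a2 : stepFn i 0 y l = y l := by simp [stepFn, hli]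
      rw [a1, a2]
      simp only [Nat.even_iff] at *
      split_ifs at e1 e2 <;> omega

lemma adj_path (k : ℕ) (hk : 0 < k) (s : ℕ) : ∀ n, n + 1 < 3 ^ s →
    AdjCell (path k hk s n) (path k hk s (n + 1)) := by
  induction s with
  | zero => intro n hn; simp at hn
  | succ s ih =>
    intro n hn
    simp only [path]
    rw [pow_succ] at hn
    by_cases h : n % 3 < 2
    · have h1 : (n + 1) / 3 = n / 3 := by omega
      have h2 : (n + 1) % 3 = n % 3 + 1 := by omega
      rw [h1, h2]
      exact adj_same _ _ _ h
    · have h1 : (n + 1) / 3 = n / 3 + 1 := by omega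
      have h2 : (n + 1) % 3 = 0 := by omega
      have h3 : n % 3 = 2 := by omega
      rw [h1, h2, h3]
      exact adj_next _ _ _ (ih _ (by omega))

lemma adj_le {k : ℕ} {x y : Fin k → ℕ} (h : AdjCell x y) (i : Fin k) :
    x i ≤ y i + 1 ∧ y i ≤ x i + 1 := by
  obtain ⟨l, hl, hc⟩ := h
  by_cases hi : i = l
  · subst hi; omega
  · have := hl i hi; omega

/-- number of refinements of coordinate `i` -/
def cnt (k : ℕ) (i j : ℕ) : ℕ := Nat.count (fun m => m % k = i) j

lemma cnt_mul (k : ℕ) (hk : 0 < k) (i : Fin k) (t : ℕ) : cnt k i (k * t) = t := by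
  have := Nat.count_modEq_card (k * t) hk i.1
  simp only [Nat.ModEq, Nat.mod_eq_of_lt i.2, Nat.mul_mod_right, Nat.mul_div_cancel_left _ hk] at this
  simpa [cnt] using this

lemma path_div (k : ℕ) (hk : 0 < k) (s0 : ℕ) (i : Fin k) (j : ℕ) : ∀ n,
    path k hk (k * s0 + j) n i / 3 ^ (cnt k i j) = path k hk (k * s0) (n / 3 ^ j) i := by
  induction j with
  | zero => intro n; simp [cnt]
  | succ j ih =>
    intro n
    have ih' := ih (n / 3)
    rw [Nat.div_div_eq_div_mul, ← pow_succ'] at ih'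
    rw [← ih', ← add_assoc, path]
    have hm : (k * s0 + j) % k = j % k := by simp
    by_cases hi : i.1 = j % k
    · have hi' : i = ⟨(k * s0 + j) % k, Nat.mod_lt _ hk⟩ := Fin.ext (by rw [hi, ← hm])
      rw [← hi']
      have : cnt k i (j+1) = cnt k i j + 1 := by simp [cnt, Nat.count_succ, hi]
      rw [this, pow_succ', ← Nat.div_div_eq_div_mul]
      congr 1
      simp only [stepFn, Function.update_self]
      split_ifs <;> omega
    · have hi' : i ≠ ⟨(k * s0 + j) % k, Nat.mod_lt _ hk⟩ := fun h => hi (by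
        have := congrArg Fin.val h; simpa [hm] using this)
      have : cnt k i (j+1) = cnt k i j := by
        simp only [cnt, Nat.count_succ]; rw [if_neg (fun h => hi h.symm)]; rfl
      rw [this, stepFn, Function.update_of_ne hi']

lemma path_surj (k : ℕ) (hk : 0 < k) (s : ℕ) : ∀ y : Fin k → ℕ, (∀ i, y i < 3 ^ cnt k i s) →
    ∃ n < 3 ^ s, path k hk s n = y := by
  induction s with
  | zero =>
    intro y hy
    refine ⟨0, by simp, ?_⟩
    funext i
    have := hy i
    simp [cnt] at this
    simp [path, this]
  | succ s ih =>
    intro y hy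
    set i : Fin k := ⟨s % k, Nat.mod_lt _ hk⟩ with hi
    obtain ⟨q, hq, hp⟩ := ih (Function.update y i (y i / 3)) (by
      intro j
      have hj := hy j
      by_cases h : j = i
      · subst h
        have : cnt k i (s+1) = cnt k i s + 1 := by simp [cnt, Nat.count_succ, hi]
        rw [this, pow_succ] at hj
        simp only [Function.update_self]
        omega
      · have : cnt k j (s+1) = cnt k j s := by
          simp only [cnt, Nat.count_succ]
          rw [if_neg (fun h' => h (Fin.ext h'.symm))]; rfl
        rw [this] at hj
        simpa [h] using hj)
    set x := Function.update y i (y i / 3) with hx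
    have hxi : x i = y i / 3 := by simp [hx]
    obtain ⟨r, hr, hry⟩ : ∃ r < 3, (3 * x i + if Even ((∑ l, x l) + x i) then r else 2 - r) = y i := by
      by_cases hE : Even ((∑ l, x l) + x i)
      · exact ⟨y i % 3, by omega, by rw [if_pos hE]; omega⟩
      · exact ⟨2 - y i % 3, by omega, by rw [if_neg hE]; omega⟩
    refine ⟨3 * q + r, by rw [pow_succ]; omega, ?_⟩
    have h1 : (3 * q + r) / 3 = q := by omega
    have h2 : (3 * q + r) % 3 = r := by omega
    rw [path, h1, h2, hp, ← hi, stepFn, hry, hx]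
    simp

/-- Discrete Hölder bound. -/
lemma path_holder (k : ℕ) (hk : 0 < k) (s t : ℕ) (a b : ℕ) (ha : a < 3 ^ (k * (s + t)))
    (hb : b < 3 ^ (k * (s + t))) (hab : a ≤ b) (hba : b ≤ a + 3 ^ (k * t)) (i : Fin k) :
    path k hk (k * (s + t)) a i ≤ path k hk (k * (s + t)) b i + 2 * 3 ^ t ∧
    path k hk (k * (s + t)) b i ≤ path k hk (k * (s + t)) a i + 2 * 3 ^ t := by
  have hA := path_div k hk s i (k * t) a
  have hB := path_div k hk s i (k * t) b
  rw [cnt_mul k hk, ← mul_add] at hA hB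
  have hM : 0 < 3 ^ (k * t) := by positivity
  have hM' : 0 < 3 ^ t := by positivity
  have h1 : a / 3 ^ (k * t) ≤ b / 3 ^ (k * t) := Nat.div_le_div_right hab
  have h2 : b / 3 ^ (k * t) ≤ a / 3 ^ (k * t) + 1 := by
    calc _ ≤ (a + 3 ^ (k * t)) / 3 ^ (k * t) := Nat.div_le_div_right hba
      _ = _ := Nat.add_div_right _ hM
  have hbl : b / 3 ^ (k * t) < 3 ^ (k * s) := by
    apply Nat.div_lt_of_lt_mul
    rw [← pow_add, ← mul_add, add_comm t s]; exact hb
  have key : path k hk (k * s) (a / 3 ^ (k * t)) i ≤ path k hk (k * s) (b / 3 ^ (k * t)) i + 1 ∧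
      path k hk (k * s) (b / 3 ^ (k * t)) i ≤ path k hk (k * s) (a / 3 ^ (k * t)) i + 1 := by
    rcases Nat.eq_or_lt_of_le h1 with h | h
    · rw [h]; omega
    · have : b / 3 ^ (k * t) = a / 3 ^ (k * t) + 1 := by omega
      rw [this] at hbl ⊢
      exact adj_le (adj_path k hk _ _ hbl) i
  rw [← hA, ← hB] at key
  generalize path k hk (k * (s + t)) a i = u at *
  generalize path k hk (k * (s + t)) b i = v at *
  generalize 3 ^ t = m at *
  have e1 := Nat.div_add_mod u m
  have e2 := Nat.div_add_mod v m
  have e3 := Nat.mod_lt u hM'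
  have e4 := Nat.mod_lt v hM'
  have f1 := Nat.mul_le_mul_left m key.1
  have f2 := Nat.mul_le_mul_left m key.2
  rw [mul_add, mul_one] at f1 f2
  omega

lemma path_lt (k : ℕ) (hk : 0 < k) (t n : ℕ) (i : Fin k) : path k hk (k * t) n i < 3 ^ t := by
  have := path_div k hk 0 i (k * t) n
  rw [cnt_mul k hk, mul_zero, zero_add] at this
  simp only [path, Pi.zero_apply] at this
  have h3 : 0 < 3 ^ t := by positivity
  rcases (Nat.div_eq_zero_iff).1 this with h | h
  · omega
  · exact h

/-- level `T` approximation of the Peano curve -/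
noncomputable def approx (k : ℕ) (hk : 0 < k) (T : ℕ) (s : ℝ) : Fin k → ℝ := fun i =>
  (path k hk (k * T) (min ⌊s * 3 ^ (k * T)⌋₊ (3 ^ (k * T) - 1)) i : ℝ) / 3 ^ T

lemma approx_mem (k : ℕ) (hk : 0 < k) (T : ℕ) (s : ℝ) (i : Fin k) :
    approx k hk T s i ∈ Set.Icc (0 : ℝ) 1 := by
  refine ⟨by unfold approx; positivity, ?_⟩
  unfold approx
  rw [div_le_one (by positivity)]
  exact_mod_cast (path_lt k hk T _ i).le

lemma approx_holder (k : ℕ) (hk : 0 < k) (T u : ℕ) (hu : u ≤ T) (s s' : ℝ) (h0 : 0 ≤ s)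
    (h : |s - s'| ≤ (1 / 3 ^ u) ^ k) (h0' : 0 ≤ s') (i : Fin k) :
    |approx k hk T s i - approx k hk T s' i| ≤ 2 * (1 / 3 ^ u) := by
  wlog hle : s ≤ s' generalizing s s'
  · rw [abs_sub_comm]
    exact this s' s h0' (by rwa [abs_sub_comm]) h0 (le_of_not_ge hle)
  obtain ⟨t, rfl⟩ := Nat.exists_eq_add_of_le hu
  have hN : 0 < 3 ^ (k * (u + t)) := by positivity
  have hle' : s * 3 ^ (k * (u + t)) ≤ s' * 3 ^ (k * (u + t)) := by gcongr
  have e : s' * 3 ^ (k * (u + t)) ≤ s * 3 ^ (k * (u + t)) + ((3 ^ (k * t) : ℕ) : ℝ) := by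
    have : s' ≤ s + (1 / 3 ^ u) ^ k := by rw [abs_le] at h; linarith
    calc s' * 3 ^ (k * (u + t)) ≤ (s + (1 / 3 ^ u) ^ k) * 3 ^ (k * (u + t)) := by gcongr
      _ = _ := by
        rw [add_mul]; congr 1
        rw [mul_add, pow_add, div_pow, one_pow, ← pow_mul, mul_comm u k]
        push_cast
        field_simp
  have f1 := Nat.floor_le_floor hle'
  have f2 := Nat.floor_le_floor e
  rw [Nat.floor_add_natCast (by positivity)] at f2
  have key := path_holder k hk u t (min ⌊s * 3 ^ (k * (u + t))⌋₊ (3 ^ (k * (u + t)) - 1))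
    (min ⌊s' * 3 ^ (k * (u + t))⌋₊ (3 ^ (k * (u + t)) - 1)) (by omega) (by omega)
    (by omega) (by omega) i
  unfold approx
  rw [← sub_div, abs_div, abs_of_pos (by positivity : (0:ℝ) < 3 ^ (u + t)),
    div_le_iff₀ (by positivity)]
  have e2 : 2 * (1 / 3 ^ u) * (3:ℝ) ^ (u + t) = 2 * 3 ^ t := by
    rw [pow_add]; field_simp
  rw [e2, abs_le]
  have k1 : ((path k hk (k * (u + t)) (min ⌊s * 3 ^ (k * (u + t))⌋₊ (3 ^ (k * (u + t)) - 1)) i : ℕ) : ℝ)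
    ≤ _ := Nat.cast_le.2 key.1
  have k2 : ((path k hk (k * (u + t)) (min ⌊s' * 3 ^ (k * (u + t))⌋₊ (3 ^ (k * (u + t)) - 1)) i : ℕ) : ℝ)
    ≤ _ := Nat.cast_le.2 key.2
  push_cast at k1 k2
  constructor <;> linarith

lemma approx_dense (k : ℕ) (hk : 0 < k) (T : ℕ) (y : Fin k → ℝ) (hy : ∀ i, y i ∈ Set.Icc (0:ℝ) 1) :
    ∃ s ∈ Set.Icc (0:ℝ) 1, ∀ i, |approx k hk T s i - y i| ≤ 1 / 3 ^ T := by
  have hm : 0 < 3 ^ T := by positivity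
  obtain ⟨n, hn, hp⟩ := path_surj k hk (k * T) (fun i => min ⌊y i * 3 ^ T⌋₊ (3 ^ T - 1)) (by
    intro i; rw [cnt_mul k hk]; omega)
  have hN : (0:ℝ) < 3 ^ (k * T) := by positivity
  refine ⟨n / 3 ^ (k * T), ⟨by positivity, ?_⟩, fun i => ?_⟩
  · rw [div_le_one hN]; exact_mod_cast hn.le
  · have e1 : min ⌊(n : ℝ) / 3 ^ (k * T) * 3 ^ (k * T)⌋₊ (3 ^ (k * T) - 1) = n := by
      rw [div_mul_cancel₀ _ hN.ne', Nat.floor_natCast]; omega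
    unfold approx
    rw [e1, hp]
    have hm' : (0:ℝ) < 3 ^ T := by positivity
    have h1 : (y i) * 3 ^ T ≤ 3 ^ T := by nlinarith [(hy i).2]
    have h0 : 0 ≤ (y i) * 3 ^ T := mul_nonneg (hy i).1 hm'.le
    have e : ((min ⌊y i * 3 ^ T⌋₊ (3 ^ T - 1) : ℕ) : ℝ) / 3 ^ T - y i
        = (((min ⌊y i * 3 ^ T⌋₊ (3 ^ T - 1) : ℕ) : ℝ) - y i * 3 ^ T) / 3 ^ T := by
      field_simp
    rw [e, abs_div, abs_of_pos hm']
    gcongr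
    have a1 := Nat.floor_le h0
    have a2 := Nat.lt_floor_add_one (y i * 3 ^ T)
    rw [Nat.cast_min, Nat.cast_sub hm]
    push_cast
    rw [abs_le]
    constructor
    · rcases min_choice (⌊y i * 3 ^ T⌋₊ : ℝ) ((3:ℝ) ^ T - 1) with h | h <;> rw [h] <;> linarith
    · have := min_le_left (⌊y i * 3 ^ T⌋₊ : ℝ) ((3:ℝ) ^ T - 1)
      linarith

open Filter Topology in
/-- Existence of a `1/k`-Hölder space filling curve. -/
lemma exists_peano (k : ℕ) (hk : 0 < k) : ∃ γ : ℝ → Fin k → ℝ,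
    (∀ s i, γ s i ∈ Set.Icc (0:ℝ) 1) ∧
    (∀ u : ℕ, ∀ s s' : ℝ, 0 ≤ s → 0 ≤ s' → |s - s'| ≤ (1 / 3 ^ u) ^ k →
      ∀ i, |γ s i - γ s' i| ≤ 2 * (1 / 3 ^ u)) ∧
    (∀ y : Fin k → ℝ, (∀ i, y i ∈ Set.Icc (0:ℝ) 1) → ∃ s ∈ Set.Icc (0:ℝ) 1, γ s = y) := by
  set U : Ultrafilter ℕ := hyperfilter ℕ
  have hU : (U : Filter ℕ) ≤ atTop := by
    rw [← Nat.cofinite_eq_atTop]; exact hyperfilter_le_cofinite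
  have hlim : ∀ a : ℕ → ℝ, (∀ n, a n ∈ Set.Icc (0:ℝ) 1) →
      ∃ l ∈ Set.Icc (0:ℝ) 1, Tendsto a U (𝓝 l) := by
    intro a ha
    obtain ⟨l, hl, hle⟩ := isCompact_Icc.ultrafilter_le_nhds (U.map a)
      (tendsto_principal.2 (Eventually.of_forall ha) : map a U ≤ 𝓟 _)
    exact ⟨l, hl, hle⟩
  choose γ hγ hγl using fun (s : ℝ) (i : Fin k) =>
    hlim (fun T => approx k hk T s i) (fun T => approx_mem k hk T s i)
  refine ⟨γ, hγ, ?_, ?_⟩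
  · intro u s s' h0 h0' h i
    refine le_of_tendsto ((hγl s i).sub (hγl s' i)).abs ?_
    filter_upwards [hU (eventually_ge_atTop u)] with T hT
    exact approx_holder k hk T u hT s s' h0 h h0' i
  · intro y hy
    choose σ hσ hσa using fun T => approx_dense k hk T y hy
    obtain ⟨s, hs, hsl⟩ := hlim σ hσ
    refine ⟨s, hs, ?_⟩
    funext i
    have hz : Tendsto (fun T : ℕ => (1:ℝ) / 3 ^ T) atTop (𝓝 0) := by
      simpa using tendsto_pow_atTop_nhds_zero_of_lt_one (by norm_num : (0:ℝ) ≤ 1/3) (by norm_num)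
    have key : ∀ u : ℕ, |γ s i - y i| ≤ 2 * (1 / 3 ^ u) := by
      intro u
      have l1 : Tendsto (fun T => |approx k hk T s i - y i|) U (𝓝 |γ s i - y i|) :=
        ((hγl s i).sub tendsto_const_nhds).abs
      have l2 : Tendsto (fun T : ℕ => 2 * ((1:ℝ) / 3 ^ u) + 1 / 3 ^ T) U (𝓝 (2 * (1 / 3 ^ u) + 0)) :=
        tendsto_const_nhds.add (hz.mono_left hU)
      rw [add_zero] at l2
      refine le_of_tendsto_of_tendsto l1 l2 ?_
      have hd : ∀ᶠ T in U, |s - σ T| ≤ (1 / 3 ^ u) ^ k := by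
        have : Tendsto (fun T => |s - σ T|) U (𝓝 |s - s|) := (tendsto_const_nhds.sub hsl).abs
        rw [sub_self, abs_zero] at this
        exact (this.eventually_lt_const (by positivity)).mono fun _ h => h.le
      filter_upwards [hU (eventually_ge_atTop u), hd] with T hT hdT
      have := approx_holder k hk T u hT s (σ T) hs.1 hdT (hσ T).1 i
      calc _ ≤ |approx k hk T s i - approx k hk T (σ T) i| + |approx k hk T (σ T) i - y i| :=
            abs_sub_le _ _ _
        _ ≤ _ := add_le_add this (hσa T i)
    have h2 : Tendsto (fun u : ℕ => 2 * ((1:ℝ) / 3 ^ u)) atTop (𝓝 (2 * 0)) := hz.const_mul 2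
    rw [mul_zero] at h2
    have := ge_of_tendsto' h2 key
    have := abs_nonpos_iff.1 this
    linarith

end PeanoAux

namespace MonoAux

/-- The `k`-dimensional Hausdorff content. -/
noncomputable def content (X : Type*) [MetricSpace X] (k : ℕ) : OuterMeasure X :=
  OuterMeasure.boundedBy (fun s => Metric.ediam s ^ (k : ℝ))

lemma hausdorff_zero_of_content {X : Type*} [MetricSpace X] [MeasurableSpace X] [BorelSpace X]
    (k : ℕ) (hk : 0 < k) (h : content X k Set.univ = 0) : μH[(k : ℝ)] (Set.univ : Set X) = 0 := by
  have hk' : (0:ℝ) < k := by exact_mod_cast hk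
  rw [Measure.hausdorffMeasure_apply, ← nonpos_iff_eq_zero]
  refine iSup₂_le fun r hr => ?_
  refine le_of_forall_pos_le_add fun ε hε => ?_
  rw [zero_add]
  have hpos : 0 < min ε (r ^ (k:ℝ)) :=
    lt_min hε (ENNReal.rpow_pos_of_nonneg hr hk'.le)
  rw [← h, content, OuterMeasure.boundedBy_apply, iInf_lt_iff] at hpos
  obtain ⟨t, ht⟩ := hpos
  rw [iInf_lt_iff] at ht
  obtain ⟨hts, ht⟩ := ht
  refine iInf_le_of_le t (iInf_le_of_le hts (iInf_le_of_le (fun n => ?_) (ht.le.trans (min_le_left _ _))))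
  rcases (t n).eq_empty_or_nonempty with he | hne
  · simp [he]
  · have h1 := ENNReal.le_tsum (f := fun n => ⨆ _ : (t n).Nonempty, Metric.ediam (t n) ^ (k:ℝ)) n
    have h2 : Metric.ediam (t n) ^ (k:ℝ) ≤ r ^ (k:ℝ) := by
      refine le_trans ?_ (h1.trans (ht.le.trans (min_le_right _ _)))
      simp [hne]
    exact (ENNReal.rpow_le_rpow_iff hk').1 h2

section
variable {X : Type*} [MetricSpace X] [CompactSpace X] [LinearOrder X]

lemma content_le (k : ℕ) (s : Set X) :
    content X k s ≤ ENNReal.ofReal (Metric.diam s ^ k) := by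
  refine (OuterMeasure.boundedBy_le s).trans ?_
  have : Metric.ediam s = ENNReal.ofReal (Metric.diam s) := by
    rw [Metric.diam, ENNReal.ofReal_toReal]
    exact (Metric.isBounded_of_compactSpace).ediam_ne_top
  rw [ENNReal.rpow_natCast, this, ENNReal.ofReal_pow Metric.diam_nonneg]

lemma content_ne_top (k : ℕ) (s : Set X) : content X k s ≠ ∞ :=
  ne_top_of_le_ne_top ENNReal.ofReal_ne_top (content_le k s)

/-- distribution function of the content -/
noncomputable def gfun (k : ℕ) (x : X) : ℝ := (content X k (Set.Iic x)).toReal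

lemma gfun_nonneg (k : ℕ) (x : X) : 0 ≤ gfun k x := ENNReal.toReal_nonneg

lemma gfun_mono (k : ℕ) {x y : X} (h : x ≤ y) : gfun k x ≤ gfun k y :=
  ENNReal.toReal_mono (content_ne_top k _) (measure_mono (Set.Iic_subset_Iic.2 h))

lemma gfun_le (k : ℕ) {x y : X} (s : Set X) (h : Set.Iic y ⊆ Set.Iic x ∪ s) :
    gfun k y ≤ gfun k x + Metric.diam s ^ k := by
  have h1 : content X k (Set.Iic y) ≤ content X k (Set.Iic x) + ENNReal.ofReal (Metric.diam s ^ k) :=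
    (measure_mono h).trans ((measure_union_le _ _).trans (add_le_add le_rfl (content_le k s)))
  have h2 := ENNReal.toReal_mono (by simp [content_ne_top]) h1
  rw [ENNReal.toReal_add (content_ne_top k _) ENNReal.ofReal_ne_top,
    ENNReal.toReal_ofReal (pow_nonneg Metric.diam_nonneg _)] at h2
  exact h2

lemma gfun_holder (k : ℕ) (C : ℝ)
    (hC : ∀ a b : X, a ≤ b → Metric.diam {x | a ≤ x ∧ x ≤ b} ≤ C * dist a b) (x y : X) :
    |gfun k x - gfun k y| ≤ (C * dist x y) ^ k := by
  wlog h : x ≤ y generalizing x y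
  · rw [abs_sub_comm, dist_comm]; exact this y x (le_of_not_ge h)
  have h1 := gfun_mono k h
  have h2 := gfun_le k (x := x) (y := y) {z | x ≤ z ∧ z ≤ y} (by
    intro z hz
    rcases le_total z x with h' | h'
    · exact Or.inl h'
    · exact Or.inr ⟨h', hz⟩)
  have h3 := pow_le_pow_left₀ Metric.diam_nonneg (hC x y h) k
  rw [abs_le]; constructor
  · linarith
  · linarith [pow_nonneg (Metric.diam_nonneg.trans (hC x y h)) k]

lemma between (C : ℝ)
    (hC : ∀ a b : X, a ≤ b → Metric.diam {x | a ≤ x ∧ x ≤ b} ≤ C * dist a b)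
    {a b c : X} (h1 : a ≤ b) (h2 : b ≤ c) :
    dist a b ≤ C * dist a c ∧ dist b c ≤ C * dist a c := by
  have hb : Bornology.IsBounded {x | a ≤ x ∧ x ≤ c} := Metric.isBounded_of_compactSpace
  exact ⟨(Metric.dist_le_diam_of_mem hb ⟨le_rfl, h1.trans h2⟩ ⟨h1, h2⟩).trans (hC a c (h1.trans h2)),
   (Metric.dist_le_diam_of_mem hb ⟨h1, h2⟩ ⟨h1.trans h2, le_rfl⟩).trans (hC a c (h1.trans h2))⟩

open Filter Topology in
lemma closedIic (C : ℝ)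
    (hC : ∀ a b : X, a ≤ b → Metric.diam {x | a ≤ x ∧ x ≤ b} ≤ C * dist a b) :
    ClosedIicTopology X := by
  refine ⟨fun b => ?_⟩
  refine IsSeqClosed.isClosed fun u x hu hx => ?_
  by_contra hlt
  have hlt' : b < x := not_le.1 hlt
  have h1 : ∀ n, dist b x ≤ C * dist (u n) x := fun n => (between C hC (hu n) hlt'.le).2
  have h2 : Tendsto (fun n => C * dist (u n) x) atTop (𝓝 (C * 0)) :=
    (tendsto_iff_dist_tendsto_zero.1 hx).const_mul C
  rw [mul_zero] at h2
  exact hlt'.ne (dist_le_zero.1 (ge_of_tendsto' h2 h1))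

open Filter Topology in
lemma closedIci (C : ℝ)
    (hC : ∀ a b : X, a ≤ b → Metric.diam {x | a ≤ x ∧ x ≤ b} ≤ C * dist a b) :
    ClosedIciTopology X := by
  refine ⟨fun b => ?_⟩
  refine IsSeqClosed.isClosed fun u x hu hx => ?_
  by_contra hlt
  have hlt' : x < b := not_le.1 hlt
  have h1 : ∀ n, dist x b ≤ C * dist x (u n) := fun n => (between C hC hlt'.le (hu n)).1
  have h2 : Tendsto (fun n => C * dist x (u n)) atTop (𝓝 (C * 0)) := by
    simp_rw [dist_comm x]
    exact (tendsto_iff_dist_tendsto_zero.1 hx).const_mul C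
  rw [mul_zero] at h2
  exact hlt'.ne (dist_le_zero.1 (ge_of_tendsto' h2 h1))

open Filter Topology in
lemma gfun_continuous (k : ℕ) (hk : 0 < k) (C : ℝ)
    (hC : ∀ a b : X, a ≤ b → Metric.diam {x | a ≤ x ∧ x ≤ b} ≤ C * dist a b) :
    Continuous (gfun k : X → ℝ) := by
  rw [continuous_iff_continuousAt]
  intro x
  rw [ContinuousAt, tendsto_iff_dist_tendsto_zero]
  have hlim : Tendsto (fun y => (C * dist y x) ^ k) (𝓝 x) (𝓝 0) := by
    have : Continuous fun y => (C * dist y x) ^ k := by fun_prop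
    simpa [hk.ne'] using this.tendsto x
  exact squeeze_zero (fun _ => dist_nonneg) (fun y => gfun_holder k C hC y x) hlim

lemma gfun_surj [Nonempty X] (k : ℕ) (hk : 0 < k) (C : ℝ)
    (hC : ∀ a b : X, a ≤ b → Metric.diam {x | a ≤ x ∧ x ≤ b} ≤ C * dist a b) :
    (∀ x : X, gfun k x ≤ (content X k Set.univ).toReal) ∧
    ∀ t : ℝ, 0 ≤ t → t ≤ (content X k Set.univ).toReal → ∃ x : X, gfun k x = t := by
  refine ⟨fun x => ENNReal.toReal_mono (content_ne_top k _) (measure_mono (Set.subset_univ _)), ?_⟩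
  intro t h0 ht
  haveI := closedIic C hC
  haveI := closedIci C hC
  have hg := gfun_continuous k hk C hC
  obtain ⟨m, -, hm⟩ := (isCompact_univ (X := X)).exists_isLeast Set.univ_nonempty
  obtain ⟨M, -, hM⟩ := (isCompact_univ (X := X)).exists_isGreatest Set.univ_nonempty
  have hgm : gfun k m = 0 := by
    have : Set.Iic m = {m} := by
      ext z; exact ⟨fun h => le_antisymm h (hm (Set.mem_univ z)), fun h => le_of_eq h⟩
    have h1 : content X k (Set.Iic m) = 0 := by
      rw [this, ← nonpos_iff_eq_zero]
      refine (content_le k _).trans ?_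
      simp [hk.ne']
    simp [gfun, h1]
  have hgM : gfun k M = (content X k Set.univ).toReal := by
    have : Set.Iic M = Set.univ := by
      ext z; exact ⟨fun _ => trivial, fun _ => hM (Set.mem_univ z)⟩
    rw [gfun, this]
  obtain ⟨a, ha, ha'⟩ := (isClosed_le hg continuous_const).isCompact.exists_isGreatest
    (s := {x : X | gfun k x ≤ t}) ⟨m, by simpa [hgm] using h0⟩
  obtain ⟨b, hb, hb'⟩ := (isClosed_le continuous_const hg).isCompact.exists_isLeast
    (s := {x : X | t ≤ gfun k x}) ⟨M, by simpa [hgM] using ht⟩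
  have h1 := gfun_le k (x := a) (y := b) {b} (by
    intro z hz
    by_cases hzb : z = b
    · exact Or.inr hzb
    · left
      refine ha' ?_
      by_contra hcon
      have hzt : t ≤ gfun k z := le_of_lt (not_le.1 hcon)
      exact hzb (le_antisymm hz (hb' hzt)))
  simp only [Metric.diam_singleton, zero_pow hk.ne', add_zero] at h1
  exact ⟨a, le_antisymm ha (le_trans hb h1)⟩

end

lemma exists_map {X : Type*} [MetricSpace X] [CompactSpace X] [Nonempty X]
    [MeasurableSpace X] [BorelSpace X] [LinearOrder X] (C : ℝ)
    (hC : ∀ a b : X, a ≤ b → Metric.diam {x | a ≤ x ∧ x ≤ b} ≤ C * dist a b)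
    (k : ℕ) (hk : 0 < k) (hpos : 0 < μH[(k : ℝ)] (Set.univ : Set X)) :
    ∃ f : X → EuclideanSpace ℝ (Fin k),
        (∃ L : ℝ≥0, LipschitzWith L f) ∧
        Set.range f = {x : EuclideanSpace ℝ (Fin k) | ∀ i, x i ∈ Set.Icc (0 : ℝ) 1} := by
  obtain ⟨γ, hγ1, hγ2, hγ3⟩ := PeanoAux.exists_peano k hk
  obtain ⟨hle, hsurj⟩ := gfun_surj k hk C hC
  set G := (content X k Set.univ).toReal with hG
  have hGpos : 0 < G := by
    refine ENNReal.toReal_pos (fun h => hpos.ne' (hausdorff_zero_of_content k hk h))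
      (content_ne_top k _)
  set h : X → ℝ := fun x => gfun k x / G with hh
  have hh0 : ∀ x, 0 ≤ h x := fun x => div_nonneg (gfun_nonneg k x) hGpos.le
  obtain ⟨v, hv⟩ : ∃ v : ℕ, max 1 G⁻¹ * max C 1 < 3 ^ v := pow_unbounded_of_one_lt _ (by norm_num)
  have hhold : ∀ x y, |h x - h y| ≤ (3 ^ v * dist x y) ^ k := by
    intro x y
    have e : |h x - h y| = G⁻¹ * |gfun k x - gfun k y| := by
      rw [hh, ← sub_div, abs_div, abs_of_pos hGpos, div_eq_inv_mul]
    have a1 : (1:ℝ) ≤ max 1 G⁻¹ := le_max_left _ _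
    have a2 : G⁻¹ ≤ (max 1 G⁻¹) ^ k := (le_max_right _ _).trans (le_self_pow₀ a1 hk.ne')
    have a3 : |gfun k x - gfun k y| ≤ (max C 1 * dist x y) ^ k := by
      refine (gfun_holder k (max C 1) (fun a b hab => (hC a b hab).trans ?_) x y)
      gcongr; exact le_max_left _ _
    have a0 : 0 ≤ max C 1 := zero_le_one.trans (le_max_right _ _)
    rw [e]
    calc G⁻¹ * |gfun k x - gfun k y| ≤ (max 1 G⁻¹) ^ k * (max C 1 * dist x y) ^ k := by gcongr
      _ = (max 1 G⁻¹ * max C 1 * dist x y) ^ k := by rw [← mul_pow, mul_assoc]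
      _ ≤ _ := by gcongr
  have hlip : ∀ x y i, |γ (h x) i - γ (h y) i| ≤ (6 * 3 ^ v) * dist x y := by
    intro x y i
    rcases eq_or_ne x y with rfl | hxy
    · simp
    have hd : 0 < dist x y := dist_pos.2 hxy
    have hp : 0 < 3 ^ v * dist x y := by positivity
    rcases le_total (3 ^ v * dist x y) 1 with h1 | h1
    · obtain ⟨u, hu1, hu2⟩ := exists_nat_pow_near_of_lt_one hp h1 (by norm_num : (0:ℝ) < 1/3)
        (by norm_num)
      have e : ((1:ℝ)/3) ^ u = 1 / 3 ^ u := by rw [div_pow, one_pow]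
      rw [pow_succ] at hu1
      rw [e] at hu1 hu2
      have := hγ2 u (h x) (h y) (hh0 x) (hh0 y)
        ((hhold x y).trans (pow_le_pow_left₀ hp.le hu2 k)) i
      linarith
    · have b1 := hγ1 (h x) i
      have b2 := hγ1 (h y) i
      rw [abs_le]
      constructor <;> nlinarith [b1.1, b1.2, b2.1, b2.2]
  have hL : LipschitzWith (6 * 3 ^ v) (fun x => γ (h x)) := by
    refine LipschitzWith.of_dist_le_mul fun x y => ?_
    rw [dist_pi_le_iff (by positivity)]
    intro i
    rw [Real.dist_eq]
    simpa using hlip x y i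
  refine ⟨fun x => WithLp.toLp 2 (γ (h x)), ⟨_, (PiLp.lipschitzWith_toLp 2 _).comp hL⟩, ?_⟩
  ext y
  constructor
  · rintro ⟨x, rfl⟩ i
    exact hγ1 (h x) i
  · intro hy
    obtain ⟨s, hs, hsy⟩ := hγ3 (fun i => y i) hy
    obtain ⟨x, hx⟩ := hsurj (s * G) (mul_nonneg hs.1 hGpos.le) (by nlinarith [hs.2])
    refine ⟨x, ?_⟩
    have : h x = s := by simp only [hh, hx]; field_simp
    simp only [this, hsy]

lemma pos_of_map {X : Type*} [MetricSpace X] [MeasurableSpace X] [BorelSpace X] (k : ℕ)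
    (f : X → EuclideanSpace ℝ (Fin k)) (L : ℝ≥0) (hf : LipschitzWith L f)
    (hr : Set.range f = {x : EuclideanSpace ℝ (Fin k) | ∀ i, x i ∈ Set.Icc (0 : ℝ) 1}) :
    0 < μH[(k : ℝ)] (Set.univ : Set X) := by
  rw [pos_iff_ne_zero]
  intro h0
  have hF := (PiLp.lipschitzWith_ofLp 2 (fun _ : Fin k => ℝ)).comp hf
  have h1 := hF.hausdorffMeasure_image_le (d := k) (Nat.cast_nonneg k) Set.univ
  rw [h0, mul_zero, Set.image_univ, Set.range_comp, hr] at h1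
  have e : Set.image WithLp.ofLp {x : EuclideanSpace ℝ (Fin k) | ∀ i, x i ∈ Set.Icc (0 : ℝ) 1}
      = Set.Icc (0 : Fin k → ℝ) 1 := by
    ext y
    constructor
    · rintro ⟨x, hx, rfl⟩
      exact ⟨fun i => (hx i).1, fun i => (hx i).2⟩
    · intro hy
      exact ⟨WithLp.toLp 2 y, fun i => ⟨hy.1 i, hy.2 i⟩, rfl⟩
  have h2 : (μH[(k : ℝ)] : Measure (Fin k → ℝ)) = volume := by
    have := hausdorffMeasure_pi_real (ι := Fin k)
    rwa [Fintype.card_fin] at this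
  rw [e, h2, Real.volume_Icc_pi] at h1
  simp at h1

end MonoAux

/-- Let `X` be a nonempty compact monotone metric space and let `k` be a
positive integer. Then `X` can be mapped onto the `k`-dimensional cube `[0,1]^k` by a Lipschitz
map if and only if `X` has positive `k`-dimensional Hausdorff measure.

Here `X` is monotone if there is a linear order `≤` on `X` and a constant `C` such that
`diam {x : a ≤ x ≤ b} ≤ C * d(a,b)` for all `a ≤ b` in `X`. -/
theorem monotone_space_mapsOnto_cube_iff_hausdorffMeasure_pos
    {X : Type*} [MetricSpace X] [CompactSpace X] [Nonempty X]
    [MeasurableSpace X] [BorelSpace X]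
    (hmon : ∃ (r : LinearOrder X) (C : ℝ),
      ∀ a b : X, r.le a b → Metric.diam {x | r.le a x ∧ r.le x b} ≤ C * dist a b)
    (k : ℕ) (hk : 0 < k) :
    (∃ f : X → EuclideanSpace ℝ (Fin k),
        (∃ L : ℝ≥0, LipschitzWith L f) ∧
        Set.range f = {x : EuclideanSpace ℝ (Fin k) | ∀ i, x i ∈ Set.Icc (0 : ℝ) 1}) ↔
      0 < μH[(k : ℝ)] (Set.univ : Set X) := by

  constructor
  · rintro ⟨f, ⟨L, hf⟩, hr⟩
    exact MonoAux.pos_of_map k f L hf hr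
  · intro hpos
    obtain ⟨r, C, hC⟩ := hmon
    letI := r
    exact MonoAux.exists_map C hC k hk hpos
end

section
/- Every compact ultrametric space (X,d) is 1-monotone: there exists a linear order ≤ on X such that for all a,b ∈ X with a ≤ b, the diameter of the closed order interval {x : a ≤ x ≤ b} is at most d(a,b). -/
/-- Compare `a` and `b` by comparing the open balls of radius `dist a b` around them
in a fixed well-ordering of all subsets. -/
def ballLT {X : Type*} [MetricSpace X] (a b : X) : Prop :=
  WellOrderingRel (Metric.ball a (dist a b)) (Metric.ball b (dist a b))

theorem ball_eq_of_dist_lt {X : Type*} [MetricSpace X] [IsUltrametricDist X] {a b : X} {r : ℝ}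
    (h : dist a b < r) : Metric.ball a r = Metric.ball b r :=
  (IsUltrametricDist.ball_eq_of_mem (x := b) (y := a) h).symm

theorem ballLT_trans {X : Type*} [MetricSpace X] [IsUltrametricDist X] {a b c : X}
    (h1 : ballLT a b) (h2 : ballLT b c) : ballLT a c ∧ dist a b ≤ dist a c := by
  unfold ballLT at *
  have t1 := dist_triangle_max a b c
  have t2 := dist_triangle_max b a c
  have t3 := dist_triangle_max a c b
  rw [dist_comm b a] at t2
  rw [dist_comm c b] at t3
  rcases lt_trichotomy (dist a b) (dist b c) with h | h | h
  · have e : dist a c = dist b c := by grind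
    rw [e, ball_eq_of_dist_lt h]
    exact ⟨h2, h.le⟩
  · rw [← h] at h2
    have h3 := _root_.trans h1 h2
    rcases lt_or_ge (dist a c) (dist a b) with h' | h'
    · rw [ball_eq_of_dist_lt h'] at h3
      exact absurd h3 (irrefl _)
    · have e : dist a c = dist a b := by grind
      rw [e]
      exact ⟨h3, le_rfl⟩
  · have e : dist a c = dist a b := by grind
    rw [e, ← ball_eq_of_dist_lt h]
    exact ⟨h1, le_rfl⟩

theorem ballLT_sto {X : Type*} [MetricSpace X] [IsUltrametricDist X] :
    IsStrictTotalOrder X ballLT where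
  irrefl a h := irrefl (r := WellOrderingRel) (Metric.ball a (dist a a)) h
  trans _ _ _ h1 h2 := (ballLT_trans h1 h2).1
  trichotomous a b h1 h2 := by
    unfold ballLT at h1 h2
    rw [dist_comm b a] at h2
    by_contra hne
    have e : Metric.ball a (dist a b) = Metric.ball b (dist a b) :=
      Std.Trichotomous.trichotomous (r := WellOrderingRel) _ _ h1 h2
    have hm : a ∈ Metric.ball a (dist a b) := Metric.mem_ball_self (dist_pos.2 hne)
    rw [e, Metric.mem_ball] at hm
    exact lt_irrefl _ hm

/-- Every compact ultrametric space `(X,d)` is `1`-monotone: there exists a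
linear order `≤` on `X` such that for all `a,b ∈ X` with `a ≤ b`, the diameter of the closed
order interval `{x : a ≤ x ≤ b}` is at most `d(a,b)`. -/
theorem compact_ultrametric_one_monotone
    {X : Type*} [MetricSpace X] [CompactSpace X] [IsUltrametricDist X] :
    ∃ r : LinearOrder X,
      ∀ a b : X, r.le a b → Metric.diam {x | r.le a x ∧ r.le x b} ≤ dist a b := by
  classical
  have := ballLT_sto (X := X)
  refine ⟨linearOrderOfSTO ballLT, fun a b _ => ?_⟩
  have key : ∀ x : X, (a = x ∨ ballLT a x) → (x = b ∨ ballLT x b) → dist a x ≤ dist a b := by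
    rintro x (rfl | h1) (rfl | h2)
    · exact le_rfl
    · simp
    · exact le_rfl
    · exact (ballLT_trans h1 h2).2
  refine Metric.diam_le_of_forall_dist_le dist_nonneg ?_
  rintro x ⟨hx1, hx2⟩ y ⟨hy1, hy2⟩
  refine (dist_triangle_max x a y).trans (max_le ?_ (key y hy1 hy2))
  rw [dist_comm]
  exact key x hx1 hx2
end
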